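/- Let n ≥ 2 and d ≥ 3. The maximum real Waring rank of a real homogeneous form of degree d in n variables satisfies r_max(n,d) ≤ 2·⌈(1/n)·C(n+d−1, n−1)⌉, except in the cases (n,d) = (3,4), (4,4), (5,4), (5,3), where respectively r_max(3,4) ≤ 11, r_max(4,4) ≤ 19, r_max(5,4) ≤ 29, and r_max(5,3) ≤ 15. The same upper bounds hold for the complex Waring rank of complex forms. -/

import Mathlib

/-!
Write `N = C(n+d-1, n-1)` for the dimension of the space of forms of degree `d` in `n` variables.

**From double points to Waring rank.** Suppose that the forms of degree `d` singular at some points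
`p₁, …, p_k` make up a space of dimension `m ≤ 1`; let `q` be a point at which this form does not
vanish if `m = 1`. Consider the map
`(l, l', c) ↦ ∑ᵢ lᵢ^d - ∑ᵢ l'ᵢ^d + ∑ⱼ cⱼ qⱼ^d` from `k + k` linear forms and `m` scalars to forms. At
`l = l' = p`, `c = 0` its value is `0`, and its derivative is onto, because a functional vanishing on
the image of the derivative is, by duality of forms and powers, a form singular at the `pᵢ` and
vanishing at the `qⱼ` (`powerMap_surjective`). By the inverse function theorem the image contains a
neighbourhood of `0`, and scaling shows that every form is a combination of `2k + m` powers
(`waringRank_le_of_AH`). The same argument works over `ℝ` and `ℂ`.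

**The Alexander–Hirschowitz theorem.** It remains to see that `k = ⌈N/n⌉` suitable points leave no
singular form, and that in the four exceptional cases `5, 9, 14, 7` points leave a space of dimension
at most one, which gives `11, 19, 29, 15`. The first is a part of the Alexander–Hirschowitz theorem,
proved here over every field of characteristic zero: `k` suitable double points impose `min(N, nk)`
conditions, except for `(n, d, k) = (3,4,5), (4,4,9), (5,4,14), (5,3,7)` (`expected_all`). The proof is
an induction on the degree and on the number of variables.

* In degree at least four, the differential Horace method (`horace`) specialises `u` points to a
  hyperplane and lets `ε` points tend to it. The statement for degree `d` in `n + 1` variables then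
  follows from the one for degree `d` in `n` variables with `u` points, the one for degree `d - 1` in
  `n + 1` variables with `w + ε` points and the vanishing of the forms of degree `d - 2` singular at
  `w` points, where `u + ε + w = k`. A suitable choice of `u, ε, w` is provided by `step_numbers`, and
  `expected_generic` is the resulting induction step.
* For cubics the last system consists of linear forms and this fails. Instead, the points are
  specialised to coordinate subspaces of codimension three (`Good.block`), in the manner of Brambilla
  and Ottaviani: the statement for `V + 3` variables is reduced to the one for `V` variables and to
  cubics vanishing on one such subspace (`OneBlock`), these to cubics vanishing on two such subspaces
  (`TwoBlocks`), and these to a single system in nine variables (`base_C`).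
* The initial cases are linear systems with integral coefficients. They are settled by Gaussian
  elimination modulo `101`, carried out on explicit points (`certify`, `dimLE_of_certify`).

General points are handled without the Zariski topology. The property that a system has dimension at
most `m` is stable under passing to all but finitely many points of any line of the parameter space
(`LineOpen`), so over an infinite field finitely many such properties, each satisfied by some choice
of points, can be satisfied simultaneously.
-/

open MvPolynomial

/-- The Waring rank of a (homogeneous degree-`d`) polynomial `f` in `n` variables:
the least `r` such that `f` is a linear combination of `r` d-th powers of linear forms
(`⊤` if no such expression exists). -/
noncomputable def waringRank (F : Type*) [CommSemiring F] {n : ℕ} (d : ℕ)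
    (f : MvPolynomial (Fin n) F) : ℕ∞ :=
  sInf {r : ℕ∞ | ∃ s : ℕ, r = s ∧ ∃ (c : Fin s → F) (l : Fin s → Fin n → F),
    f = ∑ i, C (c i) * (∑ j, C (l i j) * X j) ^ d}

/-- The upper bound for the maximum Waring rank of degree-`d` forms in `n` variables:
twice the generic rank `⌈C(n+d-1, n-1)/n⌉`, adjusted in the exceptional cases of the
Alexander–Hirschowitz theorem. -/
def waringBound (n d : ℕ) : ℕ :=
  if (n, d) = (3, 4) then 11
  else if (n, d) = (4, 4) then 19
  else if (n, d) = (5, 4) then 29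
  else if (n, d) = (5, 3) then 15
  else 2 * ((Nat.choose (n + d - 1) (n - 1) + n - 1) / n)

set_option linter.unusedSectionVars false
set_option linter.unusedSimpArgs false

/-! ### Dimension bounds for linear systems and their semicontinuity -/

section LinearSystems
variable {K : Type} [Field K] {M : Type*} [AddCommGroup M] [Module K M]

/-- `D` has dimension at most `m`, in the form used below: `m` linear functionals on the ambient
space cut `D` down to zero. -/
def DimLE (D : Submodule K M) (m : ℕ) : Prop :=
  ∃ μ : Fin m → M →ₗ[K] K, ∀ g ∈ D, (∀ i, μ i g = 0) → g = 0

theorem DimLE.of_fintype {D : Submodule K M} {ι : Type} [Fintype ι] (μ : ι → M →ₗ[K] K)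
    (h : ∀ g ∈ D, (∀ i, μ i g = 0) → g = 0) : DimLE D (Fintype.card ι) :=
  ⟨fun i => μ ((Fintype.equivFin ι).symm i), fun g hg hi =>
    h g hg fun i => by simpa using hi (Fintype.equivFin ι i)⟩

theorem DimLE.mono {D D' : Submodule K M} {m m' : ℕ} (h : DimLE D m) (hD : D' ≤ D)
    (hm : m ≤ m') : DimLE D' m' := by
  obtain ⟨μ, hμ⟩ := h
  refine ⟨fun i => if hi : i.1 < m then μ ⟨i.1, hi⟩ else 0, fun g hg hi => hμ g (hD hg) ?_⟩
  intro i
  have := hi ⟨i.1, by omega⟩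
  simpa using this

theorem DimLE.zero_iff {D : Submodule K M} : DimLE D 0 ↔ D = ⊥ := by
  constructor
  · rintro ⟨μ, hμ⟩
    exact (Submodule.eq_bot_iff _).2 fun g hg => hμ g hg fun i => i.elim0
  · rintro rfl
    exact ⟨fun i => i.elim0, fun g hg _ => by simpa using hg⟩

theorem DimLE.comap {M' : Type*} [AddCommGroup M'] [Module K M'] {D : Submodule K M}
    {D' : Submodule K M'} {m : ℕ} (h : DimLE D' m) (f : M →ₗ[K] M')
    (hf : ∀ g ∈ D, f g ∈ D') (hi : ∀ g ∈ D, f g = 0 → g = 0) : DimLE D m := by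
  obtain ⟨μ, hμ⟩ := h
  exact ⟨fun i => (μ i).comp f, fun g hg h0 => hi g hg (hμ _ (hf g hg) h0)⟩

/-- The dimension of `D` is at most that of its image under `f` plus that of its intersection with the
kernel. -/
theorem DimLE.add {M' : Type*} [AddCommGroup M'] [Module K M'] {D : Submodule K M}
    {D₁ : Submodule K M'} {a b : ℕ} (f : M →ₗ[K] M')
    (hf : ∀ g ∈ D, f g ∈ D₁) (h1 : DimLE D₁ a) (h2 : DimLE (D ⊓ LinearMap.ker f) b) :
    DimLE D (a + b) := by
  obtain ⟨μ, hμ⟩ := h1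
  obtain ⟨ν, hν⟩ := h2
  have := DimLE.of_fintype (D := D) (ι := Fin a ⊕ Fin b)
    (Sum.elim (fun i => (μ i).comp f) ν) (fun g hg h0 => by
      refine hν g ⟨hg, ?_⟩ (fun i => h0 (Sum.inr i))
      exact hμ _ (hf g hg) fun i => h0 (Sum.inl i))
  simpa using this

/-- Dropping conditions raises the dimension by at most their number. -/
theorem DimLE.cond {D : Submodule K M} {m : ℕ} {ι : Type} [Fintype ι] (ν : ι → M →ₗ[K] K)
    {D' : Submodule K M} (hD : ∀ g ∈ D, (∀ i, ν i g = 0) → g ∈ D')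
    (h : DimLE D' m) : DimLE D (m + Fintype.card ι) := by
  obtain ⟨μ, hμ⟩ := h
  have := DimLE.of_fintype (D := D) (ι := Fin m ⊕ ι) (Sum.elim μ ν)
    (fun g hg h0 => hμ g (hD g hg fun i => h0 (Sum.inr i)) fun i => h0 (Sum.inl i))
  simpa using this

theorem dimLE_iff {D : Submodule K M} {m : ℕ} :
    DimLE D m ↔ Module.Finite K D ∧ Module.finrank K D ≤ m := by
  constructor
  · rintro ⟨μ, hμ⟩
    have hinj : Function.Injective ((LinearMap.pi μ).comp D.subtype) := by
      rw [← LinearMap.ker_eq_bot, LinearMap.ker_eq_bot']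
      intro g hg
      have := hμ g.1 g.2 fun i => congrFun hg i
      exact Subtype.ext this
    have := Module.Finite.of_injective _ hinj
    exact ⟨this, by simpa using LinearMap.finrank_le_finrank_of_injective hinj⟩
  · rintro ⟨_, h⟩
    refine DimLE.mono ?_ le_rfl h
    let b := Module.finBasis K D
    choose ν hν using fun i => LinearMap.exists_extend (b.coord i)
    refine ⟨ν, fun g hg h0 => ?_⟩
    have : (⟨g, hg⟩ : D) = 0 := by
      refine b.ext_elem fun i => ?_
      have h1 := h0 i
      have h2 := LinearMap.congr_fun (hν i) ⟨g, hg⟩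
      simp only [LinearMap.comp_apply, Submodule.subtype_apply] at h2
      rw [h2] at h1
      simpa using h1
    exact congrArg Subtype.val this

theorem DimLE.finite {D : Submodule K M} {m : ℕ} (h : DimLE D m) : Module.Finite K D :=
  (dimLE_iff.1 h).1

theorem DimLE.pred {D D' : Submodule K M} {m : ℕ} (h : DimLE D m) (hlt : D' < D) :
    DimLE D' (m - 1) := by
  obtain ⟨h1, h2⟩ := dimLE_iff.1 h
  have h3 := Submodule.finrank_lt_finrank_of_lt hlt
  exact dimLE_iff.2 ⟨Submodule.finiteDimensional_of_le hlt.le, by omega⟩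

/-- Imposing `u` general conditions chosen from a family `ev` drops the dimension by `u`, as long as
it stays above that of the part of `D` contained in `N`, outside of which the family separates
from zero. -/
theorem DimLE.cut {D N : Submodule K M} {P : Type*} (ev : P → M →ₗ[K] K)
    (hev : ∀ g ∈ D, g ∉ N → ∃ x, ev x g ≠ 0) (x₀ : P) {m m2 : ℕ} (h2 : DimLE (D ⊓ N) m2) (u : ℕ)
    (h : DimLE D m) :
    ∃ s : Fin u → P, DimLE (D ⊓ ⨅ j, LinearMap.ker (ev (s j))) (max (m - u) m2) := by
  induction u generalizing D m with
  | zero => exact ⟨fun _ => x₀, h.mono inf_le_left (by simp)⟩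
  | succ u ih =>
    by_cases hD : D ≤ N
    · exact ⟨fun _ => x₀, h2.mono (le_inf inf_le_left (inf_le_left.trans hD)) (le_max_right _ _)⟩
    obtain ⟨g, hg, hgN⟩ := Set.not_subset.1 hD
    obtain ⟨x, hx⟩ := hev g hg hgN
    have hlt : D ⊓ LinearMap.ker (ev x) < D :=
      lt_of_le_of_ne inf_le_left fun he => hx (by
        have : g ∈ D ⊓ LinearMap.ker (ev x) := by rw [he]; exact hg
        exact this.2)
    obtain ⟨s, hs⟩ := ih (D := D ⊓ LinearMap.ker (ev x)) (m := m - 1)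
      (fun g hg => hev g hg.1) (h2.mono (inf_le_inf_right _ inf_le_left) le_rfl)
      (h.pred hlt)
    refine ⟨Fin.cons x s, hs.mono ?_ (by omega)⟩
    rintro g ⟨hg1, hg2⟩
    replace hg2 := (Submodule.mem_iInf _).1 hg2
    refine ⟨⟨hg1, by simpa using hg2 0⟩, ?_⟩
    refine (Submodule.mem_iInf _).2 fun j => ?_
    simpa using hg2 j.succ

open Polynomial in
/-- Semicontinuity along a line: if a linear system with polynomial coefficients has only the
zero solution at `t = 0`, then the same holds for all but finitely many `t`. -/
theorem finite_bad {J : Type*} (W : Submodule K M) [Module.Finite K W]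
    (Φ : J → M →ₗ[K] K[X]) (h0 : ∀ g ∈ W, (∀ j, (Φ j g).eval 0 = 0) → g = 0) :
    {t : K | ¬ ∀ g ∈ W, (∀ j, (Φ j g).eval t = 0) → g = 0}.Finite := by
  classical
  let b := Module.finBasis K W
  set n := Module.finrank K W
  -- the coefficient vectors of the conditions at `0` span the dual space
  let v : J → (Fin n → K) := fun j i => (Φ j (b i)).eval 0
  have hspan : Submodule.span K (Set.range v) = ⊤ := by
    by_contra hne
    obtain ⟨f, hf, hfs⟩ := Submodule.exists_le_ker_of_lt_top _ (lt_top_iff_ne_top.2 hne)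
    apply hf
    set c : Fin n → K := fun i => f (Pi.single i 1) with hc
    have hfc : ∀ w, f w = ∑ i, w i * c i := by
      intro w
      rw [LinearMap.pi_apply_eq_sum_univ f w]
      simp [hc, smul_eq_mul]
      refine Finset.sum_congr rfl fun i _ => ?_
      congr 2
      ext j
      simp [Pi.single_apply, eq_comm]
    have : ∑ i, c i • (b i : M) = 0 := by
      refine h0 _ (Submodule.sum_mem _ fun i _ => Submodule.smul_mem _ _ (b i).2) fun j => ?_
      have h1 : f (v j) = 0 := hfs (Submodule.subset_span ⟨j, rfl⟩)
      rw [hfc] at h1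
      rw [map_sum, Polynomial.eval_finsetSum]
      refine Eq.trans ?_ h1
      refine Finset.sum_congr rfl fun i _ => ?_
      simp [v, mul_comm]
    have h2 : ∑ i, c i • b i = 0 := by
      apply Subtype.ext; simpa using this
    have h3 := Fintype.linearIndependent_iff.1 b.linearIndependent c h2
    ext w
    simp [hc] at h3 ⊢
    exact h3 _
  obtain ⟨κ, a, ha, hspan', hli⟩ := exists_linearIndependent' K v
  let bas : Module.Basis κ K (Fin n → K) := Module.Basis.mk hli (by
    rw [hspan', hspan])
  let e : κ ≃ Fin n := bas.indexEquiv (Pi.basisFun K (Fin n))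
  let A : Matrix (Fin n) (Fin n) K[X] := Matrix.of fun k i => Φ (a (e.symm k)) (b i)
  have hdet : A.det.eval 0 ≠ 0 := by
    intro h
    have h1 : (A.map (Polynomial.evalRingHom 0)).det = 0 := by
      rw [← RingHom.mapMatrix_apply, ← RingHom.map_det]; exact h
    obtain ⟨w, hw, hw0⟩ := Matrix.exists_vecMul_eq_zero_iff.2 h1
    have h2 : LinearIndependent K fun k : Fin n => v (a (e.symm k)) :=
      hli.comp _ e.symm.injective
    apply hw
    ext k
    refine Fintype.linearIndependent_iff.1 h2 w ?_ k
    ext i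
    have := congrFun hw0 i
    simpa [Matrix.vecMul, dotProduct, A, v] using this
  refine (Polynomial.finite_setOfPred_isRoot (p := A.det) (by rintro h; simp [h] at hdet)).subset ?_
  intro t ht
  by_contra hdt
  apply ht
  intro g hg hgt
  have h1 : (A.map (Polynomial.evalRingHom t)).det ≠ 0 := by
    rw [← RingHom.mapMatrix_apply, ← RingHom.map_det]; exact hdt
  have h2 : (A.map (Polynomial.evalRingHom t)).mulVec (b.repr ⟨g, hg⟩) = 0 := by
    ext k
    have h3 := hgt (a (e.symm k))
    have h4 : g = ∑ i, b.repr ⟨g, hg⟩ i • (b i : M) := by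
      have := congrArg W.subtype (b.sum_repr ⟨g, hg⟩)
      rw [map_sum] at this
      exact this.symm
    rw [h4] at h3
    simp only [map_sum, map_smul, Polynomial.eval_finsetSum, Polynomial.eval_smul] at h3
    simp only [Matrix.mulVec, dotProduct, Pi.zero_apply]
    rw [← h3]
    refine Finset.sum_congr rfl fun i _ => ?_
    simp [A, mul_comm]
  have h3 := Matrix.eq_zero_of_mulVec_eq_zero h1 h2
  have h4 : (⟨g, hg⟩ : W) = 0 := by
    apply b.ext_elem
    intro i
    simpa using congrFun h3 i
  exact congrArg Subtype.val h4

open Polynomial in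
/-- First-order criterion: if no nonzero solution at `t = 0` extends to a first-order
solution `G₀ + t G₁`, then for some `t` the system has only the zero solution. -/
theorem exists_good_of_first_order [Infinite K] {J : Type*} (W : Submodule K M) [Module.Finite K W]
    (Φ : J → M →ₗ[K] K[X])
    (h0 : ∀ g ∈ W, (∀ j, (Φ j g).coeff 0 = 0) → ∀ g' ∈ W,
      (∀ j, (Φ j g').coeff 0 + (Φ j g).coeff 1 = 0) → g = 0) :
    ∃ t : K, ∀ g ∈ W, (∀ j, (Φ j g).eval t = 0) → g = 0 := by
  classical
  let N : Submodule K M := W ⊓ ⨅ j, LinearMap.ker ((Polynomial.lcoeff K 0).comp (Φ j))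
  have hN : ∀ g, g ∈ N ↔ g ∈ W ∧ ∀ j, (Φ j g).coeff 0 = 0 := by
    intro g; simp [N, Submodule.mem_inf, Submodule.mem_iInf]
  obtain ⟨C', hC'⟩ := Submodule.exists_isCompl (N.submoduleOf W)
  let C : Submodule K M := C'.map W.subtype
  have hCW : C ≤ W := by
    rintro _ ⟨x, _, rfl⟩; exact x.2
  have hNC : ∀ g ∈ N, g ∈ C → g = 0 := by
    rintro g hg ⟨x, hx, rfl⟩
    have : x ∈ N.submoduleOf W ⊓ C' := ⟨hg, hx⟩
    rw [hC'.inf_eq_bot] at this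
    simpa using this
  have hsum : ∀ g ∈ W, ∃ a ∈ N, ∃ c ∈ C, g = a + c := by
    intro g hg
    have : (⟨g, hg⟩ : W) ∈ N.submoduleOf W ⊔ C' := by rw [hC'.sup_eq_top]; trivial
    obtain ⟨a, ha, c, hc, hac⟩ := Submodule.mem_sup.1 this
    exact ⟨a, ha, c, ⟨c, hc, rfl⟩, by simpa using (congrArg Subtype.val hac).symm⟩
  let dX : K[X] →ₗ[K] K[X] :=
    { toFun := Polynomial.divX, map_add' := fun _ _ => Polynomial.divX_add
      map_smul' := fun c p => by ext; simp [Polynomial.coeff_divX] }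
  have hNW : N ≤ W := inf_le_left
  have : Module.Finite K N := Submodule.finiteDimensional_of_le hNW
  have : Module.Finite K C := Submodule.finiteDimensional_of_le hCW
  -- On `N` the conditions are divisible by `t`; dividing by `t` there gives a system on `N × C` whose
  -- value at `t = 0` is the system of first-order solutions.
  have key := finite_bad (K := K) (M := N × C) (⊤)
    (fun j => (dX.comp ((Φ j).comp N.subtype)).coprod ((Φ j).comp C.subtype)) (by
      rintro ⟨⟨a, ha⟩, ⟨c, hc⟩⟩ - h
      have h' : ∀ j, (Φ j c).coeff 0 + (Φ j a).coeff 1 = 0 := by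
        intro j
        have := h j
        simp only [LinearMap.coprod_apply, LinearMap.comp_apply, Submodule.subtype_apply] at this
        rw [← Polynomial.coeff_zero_eq_eval_zero] at this
        simp only [Polynomial.coeff_add] at this
        have h2 : (dX (Φ j a)).coeff 0 = (Φ j a).coeff 1 := by
          change (Polynomial.divX _).coeff 0 = _
          rw [Polynomial.coeff_divX]
        rw [h2] at this
        rw [add_comm]; exact this
      have ha0 : a = 0 := h0 a (hNW ha) ((hN a).1 ha).2 c (hCW hc) h'
      subst ha0
      have hc0 : c = 0 := hNC c ((hN c).2 ⟨hCW hc, fun j => by simpa using h' j⟩) hc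
      subst hc0
      rfl)
  obtain ⟨t, ht⟩ := ((key.union (Set.finite_singleton 0)).infinite_compl).nonempty
  simp only [Set.mem_compl_iff, Set.mem_union, Set.mem_ofPred_eq, not_or, not_not,
    Set.mem_singleton_iff] at ht
  obtain ⟨ht, ht0⟩ := ht
  refine ⟨t, fun g hg hgt => ?_⟩
  obtain ⟨a, ha, c, hc, rfl⟩ := hsum g hg
  have := ht (t • (⟨a, ha⟩ : N), ⟨c, hc⟩) trivial (fun j => by
    have h1 := hgt j
    simp only [LinearMap.coprod_apply, LinearMap.comp_apply, Submodule.subtype_apply, map_smul,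
      Polynomial.eval_add, Polynomial.eval_smul, map_add] at h1 ⊢
    rw [← h1]
    congr 1
    have h2 : (Φ j a).coeff 0 = 0 := ((hN a).1 ha).2 j
    change t • Polynomial.eval t (Polynomial.divX (Φ j a)) = _
    conv_rhs => rw [← Polynomial.divX_mul_X_add (Φ j a), h2]
    simp [mul_comm])
  simp only [Prod.mk_eq_zero, smul_eq_zero, ht0, false_or] at this
  have h1 : a = 0 := congrArg Subtype.val this.1
  have h2 : c = 0 := congrArg Subtype.val this.2
  simp [h1, h2]

end LinearSystems

/-! ### Properties stable along lines -/

section LineOpen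
variable {K : Type} [Field K] {V V' : Type*} [AddCommGroup V] [Module K V]
  [AddCommGroup V'] [Module K V']

/-- A property of points of a vector space is line-open if, once it holds at a point `x`, it holds
at all but finitely many points of every line through `x`. This replaces Zariski openness. -/
def LineOpen (K : Type) [Field K] {V : Type*} [AddCommGroup V] [Module K V] (P : V → Prop) : Prop :=
  ∀ x v, P x → {t : K | ¬ P (x + t • v)}.Finite

theorem LineOpen.and {P Q : V → Prop} (hP : LineOpen K P) (hQ : LineOpen K Q) :
    LineOpen K fun x => P x ∧ Q x := by
  intro x v h
  refine ((hP x v h.1).union (hQ x v h.2)).subset ?_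
  intro t ht
  simp only [Set.mem_ofPred_eq, not_and_or] at ht
  exact ht

theorem LineOpen.all {ι : Type*} [Finite ι] {P : ι → V → Prop} (hP : ∀ i, LineOpen K (P i)) :
    LineOpen K fun x => ∀ i, P i x := by
  intro x v h
  refine (Set.finite_iUnion fun i => hP i x v (h i)).subset ?_
  intro t ht
  simpa using ht

theorem LineOpen.comap {P : V → Prop} (hP : LineOpen K P) (f : V' →ᵃ[K] V) :
    LineOpen K fun x => P (f x) := by
  intro x v h
  refine (hP (f x) (f.linear v) h).subset ?_
  intro t ht
  have : f (x + t • v) = f x + t • f.linear v := by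
    rw [add_comm x, ← vadd_eq_add, f.map_vadd, vadd_eq_add, add_comm, map_smul]
  simpa [this] using ht

/-- Two line-open properties, each satisfied somewhere, are satisfied simultaneously: both persist at all
but finitely many points of the line joining the two witnesses. -/
theorem LineOpen.exists_and [Infinite K] {P Q : V → Prop} (hP : LineOpen K P) (hQ : LineOpen K Q)
    (h1 : ∃ x, P x) (h2 : ∃ x, Q x) : ∃ x, P x ∧ Q x := by
  obtain ⟨x, hx⟩ := h1
  obtain ⟨y, hy⟩ := h2
  have f1 := hP x (y - x) hx
  have f2 := (hQ y (x - y) hy).image (fun s => 1 - s)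
  obtain ⟨t, ht⟩ := (f1.union f2).infinite_compl.nonempty
  simp only [Set.mem_compl_iff, Set.mem_union, not_or, Set.mem_ofPred_eq, not_not, Set.mem_image,
    not_exists, not_and] at ht
  refine ⟨x + t • (y - x), ht.1, ?_⟩
  by_contra hq
  refine ht.2 (1 - t) ?_ (by ring)
  convert hq using 2
  module

end LineOpen

/-! ### Forms singular at given points -/

section Forms
variable {K : Type} [Field K] {σ : Type} [Fintype σ] [DecidableEq σ]

/-- Exponents of the degree-`d` monomials in the variables `S`. -/
def expo (S : Finset σ) (d : ℕ) : Set (σ →₀ ℕ) := {α | (∀ i, α i ≠ 0 → i ∈ S) ∧ α.degree = d}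

theorem expo_finite (S : Finset σ) (d : ℕ) : (expo S d).Finite :=
  (Finsupp.finite_of_degree_le d).subset fun _ h => h.2.le

theorem mem_rs {E : Set (σ →₀ ℕ)} {G : MvPolynomial σ K} :
    G ∈ restrictSupport K E ↔ ∀ α, coeff α G ≠ 0 → α ∈ E := by
  rw [mem_restrictSupport_iff]
  constructor
  · intro h α hα; exact h (by simpa using hα)
  · intro h α hα; exact h α (by simpa using hα)

theorem mem_rs_expo {S : Finset σ} {d : ℕ} {G : MvPolynomial σ K} :
    G ∈ restrictSupport K (expo S d) ↔ G.IsHomogeneous d ∧ G.vars ⊆ S := by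
  rw [mem_rs]
  constructor
  · intro h
    refine ⟨fun α hα => ?_, fun i hi => ?_⟩
    · rw [← (h α hα).2, Finsupp.degree_eq_weight_one]
      rfl
    · obtain ⟨α, hα, hi⟩ := (mem_vars_iff_mem_support i).1 hi
      exact (h α (by simpa using hα)).1 i (by simpa using hi)
  · rintro ⟨h1, h2⟩ α hα
    refine ⟨fun i hi => h2 ((mem_vars_iff_mem_support i).2 ⟨α, by simpa using hα, by simpa using hi⟩), ?_⟩
    have := h1 hα
    rw [← this, Finsupp.degree_eq_weight_one]
    rfl

theorem rs_finite {E : Set (σ →₀ ℕ)} (hE : E.Finite) :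
    Module.Finite K (restrictSupport K E) := by
  have := hE.to_subtype
  exact Module.Finite.of_basis (basisRestrictSupport K E)

/-- The functional `G ↦ (∂G/∂xᵢ)(p)`. -/
noncomputable def pe (p : σ → K) (i : σ) : MvPolynomial σ K →ₗ[K] K :=
  (aeval p : MvPolynomial σ K →ₐ[K] K).toLinearMap.comp (pderiv i).toLinearMap

theorem pe_apply (p : σ → K) (i : σ) (G : MvPolynomial σ K) : pe p i G = eval p (pderiv i G) := by
  simp [pe, aeval_eq_eval]

/-- The linear system of polynomials with exponents in `E` singular at all the points `p j`. -/
noncomputable def sing {ι : Type} (E : Set (σ →₀ ℕ)) (p : ι → σ → K) :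
    Submodule K (MvPolynomial σ K) :=
  restrictSupport K E ⊓ ⨅ ji : ι × σ, LinearMap.ker (pe (p ji.1) ji.2)

theorem mem_sing {ι : Type} {E : Set (σ →₀ ℕ)} {p : ι → σ → K} {G : MvPolynomial σ K} :
    G ∈ sing E p ↔ G ∈ restrictSupport K E ∧ ∀ j i, eval (p j) (pderiv i G) = 0 := by
  simp [sing, Submodule.mem_inf, Submodule.mem_iInf, pe_apply]

/-- Restriction of a polynomial to the line `x + t v`. -/
noncomputable def ln (x v : σ → K) : MvPolynomial σ K →ₐ[K] Polynomial K :=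
  aeval fun i => Polynomial.C (x i) + Polynomial.X * Polynomial.C (v i)

theorem eval_ln (x v : σ → K) (t : K) (G : MvPolynomial σ K) :
    (ln x v G).eval t = eval (x + t • v) G := by
  have : (Polynomial.aeval t).comp (ln x v) = aeval (x + t • v) := by
    ext i; simp [ln]; ring
  have := AlgHom.congr_fun this G
  simpa [aeval_eq_eval, Polynomial.coe_aeval_eq_eval] using this

theorem coeff_zero_ln (x v : σ → K) (G : MvPolynomial σ K) :
    (ln x v G).coeff 0 = eval x G := by
  rw [Polynomial.coeff_zero_eq_eval_zero, eval_ln]; simp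

theorem coeff_one_ln (x v : σ → K) (G : MvPolynomial σ K) :
    (ln x v G).coeff 1 = ∑ i, v i * eval x (pderiv i G) := by
  induction G using MvPolynomial.induction_on with
  | C a => simp [ln, Polynomial.coeff_C]
  | add p q hp hq => simp [hp, hq, mul_add, Finset.sum_add_distrib]
  | mul_X p j hp =>
    have h1 : (ln x v (X j)) = Polynomial.C (x j) + Polynomial.X * Polynomial.C (v j) := by simp [ln]
    rw [map_mul, h1, mul_add, Polynomial.coeff_add, Polynomial.coeff_mul_C, ← mul_assoc,
      Polynomial.coeff_mul_C, Polynomial.coeff_mul_X (n := 0), hp, coeff_zero_ln]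
    simp only [Derivation.leibniz, smul_eq_mul, map_add, map_mul, eval_X, pderiv_X,
      mul_add, Finset.sum_add_distrib]
    rw [add_comm]
    congr 1
    · rw [Finset.sum_eq_single j]
      · simp; ring
      · intro b _ hb; simp [Pi.single_apply, hb]
      · simp
    · rw [Finset.sum_mul]
      refine Finset.sum_congr rfl fun i _ => ?_
      ring

theorem coeff_one_ln_single (x : σ → K) (h : σ) (G : MvPolynomial σ K) :
    (ln x (Pi.single h 1) G).coeff 1 = eval x (pderiv h G) := by
  rw [coeff_one_ln, Finset.sum_eq_single h] <;> simp +contextual [Pi.single_apply]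

/-- Euler's relation at a point. -/
theorem euler {S : Finset σ} {d : ℕ} {G : MvPolynomial σ K} (hG : G ∈ restrictSupport K (expo S d))
    (x : σ → K) : ∑ i, x i * eval x (pderiv i G) = d * eval x G := by
  have := congrArg (eval x) ((mem_rs_expo.1 hG).1.sum_X_mul_pderiv)
  simpa using this

/-- By Euler's relation, a form of positive degree vanishes at its singular points. -/
theorem eval_eq_zero_of_sing [CharZero K] {S : Finset σ} {d : ℕ} {G : MvPolynomial σ K}
    (hG : G ∈ restrictSupport K (expo S d)) (hd : d ≠ 0) {x : σ → K}
    (h : ∀ i, eval x (pderiv i G) = 0) : eval x G = 0 := by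
  have := euler hG x
  simp only [h, mul_zero, Finset.sum_const_zero] at this
  have h2 : (d : K) ≠ 0 := by exact_mod_cast hd
  exact (mul_eq_zero.1 this.symm).resolve_left h2

theorem pderiv_mem {S : Finset σ} {d : ℕ} {G : MvPolynomial σ K}
    (hG : G ∈ restrictSupport K (expo S (d + 1))) (i : σ) :
    pderiv i G ∈ restrictSupport K (expo S d) := by
  rw [mem_rs] at hG ⊢
  intro α hα
  rw [coeff_pderiv] at hα
  obtain ⟨h1, h2⟩ := hG _ (left_ne_zero_of_mul hα)
  refine ⟨fun k hk => h1 k ?_, ?_⟩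
  · simp only [Finsupp.add_apply, ne_eq]; omega
  · simp at h2; exact h2

theorem pderiv_eq_zero_of_notMem {S : Finset σ} {d : ℕ} {G : MvPolynomial σ K}
    (hG : G ∈ restrictSupport K (expo S d)) {i : σ} (hi : i ∉ S) : pderiv i G = 0 :=
  pderiv_eq_zero_of_notMem_vars fun h => hi ((mem_rs_expo.1 hG).2 h)

theorem eval_congr {S : Finset σ} {d : ℕ} {G : MvPolynomial σ K}
    (hG : G ∈ restrictSupport K (expo S d)) {x y : σ → K} (h : ∀ i ∈ S, x i = y i) :
    eval x G = eval y G :=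
  eval₂Hom_congr' rfl (fun i hi _ => h i ((mem_rs_expo.1 hG).2 hi)) rfl

/-- Restriction to the coordinate subspace where the variables in `Z` vanish. -/
noncomputable def res (Z : Finset σ) : MvPolynomial σ K →ₐ[K] MvPolynomial σ K :=
  aeval fun i => if i ∈ Z then 0 else X i

theorem coeff_res (Z : Finset σ) (G : MvPolynomial σ K) (α : σ →₀ ℕ) :
    coeff α (res Z G) = if ∀ i ∈ Z, α i = 0 then coeff α G else 0 := by
  have key : ∀ (β : σ →₀ ℕ) (c : K), res Z (monomial β c) =
      if ∀ i ∈ Z, β i = 0 then monomial β c else 0 := by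
    intro β c
    rw [res, aeval_monomial]
    split_ifs with h
    · rw [monomial_eq]
      congr 1
      refine Finset.prod_congr rfl fun i hi => ?_
      have : i ∉ Z := fun hz => by simp [h i hz] at hi
      simp [this]
    · push Not at h
      obtain ⟨i, hi, hi0⟩ := h
      rw [Finsupp.prod, Finset.prod_eq_zero (i := i) (by simpa using hi0), mul_zero]
      simp [hi, hi0]
  induction G using MvPolynomial.induction_on' with
  | monomial β c =>
    rw [key]
    by_cases h : β = α
    · subst h; split_ifs <;> simp
    · split_ifs <;> simp [coeff_monomial, h]
  | add p q hp hq =>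
    rw [map_add, coeff_add, hp, hq, coeff_add]
    split_ifs <;> simp

theorem pderiv_res {Z : Finset σ} {i : σ} (hi : i ∉ Z) (G : MvPolynomial σ K) :
    pderiv i (res Z G) = res Z (pderiv i G) := by
  ext α
  rw [coeff_pderiv, coeff_res, coeff_res, coeff_pderiv]
  have : (∀ k ∈ Z, (α + Finsupp.single i 1 : σ →₀ ℕ) k = 0) ↔ ∀ k ∈ Z, α k = 0 := by
    refine forall₂_congr fun k hk => ?_
    have : i ≠ k := by rintro rfl; exact hi hk
    simp [this]
  simp only [this]
  split_ifs <;> simp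

theorem pderiv_res_mem {Z : Finset σ} {i : σ} (hi : i ∈ Z) (G : MvPolynomial σ K) :
    pderiv i (res Z G) = 0 := by
  ext α
  rw [coeff_pderiv, coeff_res, if_neg, zero_mul, coeff_zero]
  push Not
  exact ⟨i, hi, by simp⟩

theorem eval_res (Z : Finset σ) {x : σ → K} (hx : ∀ i ∈ Z, x i = 0) (G : MvPolynomial σ K) :
    eval x (res Z G) = eval x G := by
  have : (aeval x : MvPolynomial σ K →ₐ[K] K).comp (res Z) = aeval x := by
    ext i
    by_cases h : i ∈ Z <;> simp [res, h, hx]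
  have := AlgHom.congr_fun this G
  simpa [aeval_eq_eval] using this

theorem res_mem_expo {S Z : Finset σ} {d : ℕ} {G : MvPolynomial σ K}
    (hG : G ∈ restrictSupport K (expo S d)) : res Z G ∈ restrictSupport K (expo (S \ Z) d) := by
  rw [mem_rs] at hG ⊢
  intro α hα
  rw [coeff_res] at hα
  split_ifs at hα with h
  · refine ⟨fun i hi => Finset.mem_sdiff.2 ⟨(hG α hα).1 i hi, fun hz => hi (h i hz)⟩, (hG α hα).2⟩
  · exact absurd rfl hα

/-- A form vanishing on the hyperplane `x_h = 0` is divisible by `x_h`. -/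
theorem eq_X_mul_of_res {S : Finset σ} {h : σ} {d : ℕ} {G : MvPolynomial σ K}
    (hG : G ∈ restrictSupport K (expo S (d + 1))) (h0 : res {h} G = 0) :
    ∃ G' ∈ restrictSupport K (expo S d), G = X h * G' := by
  have hdvd : (X h : MvPolynomial σ K) ∣ G := by
    rw [X_dvd_iff_modMonomial_eq_zero]
    ext α
    have h1 : coeff α (res {h} G) = 0 := by rw [h0]; simp
    rw [coeff_res] at h1
    simp only [Finset.mem_singleton, forall_eq] at h1
    rw [coeff_zero]
    by_cases hα : α h = 0
    · rw [if_pos hα] at h1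
      rw [coeff_modMonomial_of_not_le, h1]
      intro hle
      have := hle h
      simp at this
      omega
    · rw [coeff_modMonomial_of_le]
      intro k
      by_cases hk : h = k
      · subst hk; simp; omega
      · simp [hk]
  obtain ⟨G', rfl⟩ := hdvd
  refine ⟨G', ?_, rfl⟩
  rw [mem_rs] at hG ⊢
  intro α hα
  have h2 := hG (α + Finsupp.single h 1) (by rw [add_comm, coeff_X_mul]; exact hα)
  refine ⟨fun k hk => h2.1 k ?_, ?_⟩
  · simp only [Finsupp.add_apply, ne_eq]; omega
  · have := h2.2
    simp at this; exact this

/-- A family of functionals is polynomial along lines of the parameter space. -/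
def PolyAlong {V : Type*} [AddCommGroup V] [Module K V] {M : Type*} [AddCommGroup M] [Module K M]
    (ψ : V → M →ₗ[K] K) : Prop :=
  ∀ x v, ∃ Φ : M →ₗ[K] Polynomial K, ∀ t g, (Φ g).eval t = ψ (x + t • v) g

/-- Semicontinuity of the dimension of a linear system whose conditions depend polynomially on
parameters. -/
theorem LineOpen.dimLE {V : Type*} [AddCommGroup V] [Module K V] {M : Type*} [AddCommGroup M]
    [Module K M] {J : Type*} {ψ : J → V → M →ₗ[K] K} (hψ : ∀ j, PolyAlong (ψ j))
    (W : Submodule K M) [Module.Finite K W] (D : V → Submodule K M)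
    (hD : ∀ x g, g ∈ D x ↔ g ∈ W ∧ ∀ j, ψ j x g = 0) (m : ℕ) :
    LineOpen K fun x => DimLE (D x) m := by
  rintro x v ⟨μ, hμ⟩
  choose Φ hΦ using fun j => hψ j x v
  have := finite_bad W (J := J ⊕ Fin m)
    (Sum.elim Φ fun i => (Polynomial.monomial 0).comp (μ i)) (by
      intro g hg h
      refine hμ g ((hD x g).2 ⟨hg, fun j => ?_⟩) fun i => by simpa using h (Sum.inr i)
      have := h (Sum.inl j)
      simp only [Sum.elim_inl, hΦ] at this
      simpa using this)
  refine this.subset ?_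
  intro t ht ht'
  apply ht
  refine ⟨μ, fun g hg hi => ht' g ((hD _ g).1 hg).1 ?_⟩
  rintro (j | i)
  · simp only [Sum.elim_inl, hΦ]
    exact ((hD _ g).1 hg).2 j
  · simpa using hi i

theorem polyAlong_pe {V : Type*} [AddCommGroup V] [Module K V] (f : V →ₗ[K] (σ → K)) (i : σ) :
    PolyAlong fun x => pe (f x) i := by
  intro x v
  refine ⟨(ln (f x) (f v)).toLinearMap.comp (pderiv i).toLinearMap, fun t g => ?_⟩
  simp [eval_ln, pe_apply]

theorem polyAlong_eval {V : Type*} [AddCommGroup V] [Module K V] (f : V →ₗ[K] (σ → K)) :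
    PolyAlong fun x => (aeval (f x) : MvPolynomial σ K →ₐ[K] K).toLinearMap := by
  intro x v
  refine ⟨(ln (f x) (f v)).toLinearMap, fun t g => ?_⟩
  simp [eval_ln, aeval_eq_eval]

theorem polyAlong_const {V : Type*} [AddCommGroup V] [Module K V] {M : Type*} [AddCommGroup M]
    [Module K M] (μ : M →ₗ[K] K) : PolyAlong fun _ : V => μ :=
  fun _ _ => ⟨(Polynomial.monomial 0).comp μ, fun t g => by simp⟩

theorem lineOpen_sing {V : Type*} [AddCommGroup V] [Module K V] {ι : Type} {E : Set (σ →₀ ℕ)}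
    (hE : E.Finite) (f : ι → V →ₗ[K] (σ → K)) (m : ℕ) :
    LineOpen K fun x => DimLE (sing E fun j => f j x) m := by
  have := rs_finite (K := K) hE
  refine LineOpen.dimLE (J := ι × σ) (ψ := fun ji x => pe (f ji.1 x) ji.2)
    (fun ji => polyAlong_pe _ _) (restrictSupport K E) _ (fun x g => ?_) m
  rw [mem_sing]
  simp [pe_apply]

end Forms

/-! ### Line-open properties on products -/

section LineOpenProd
variable {K : Type} [Field K] {V V' : Type*} [AddCommGroup V] [Module K V]
  [AddCommGroup V'] [Module K V']

theorem LineOpen.compLinear {P : V → Prop} (hP : LineOpen K P) (f : V' →ₗ[K] V) :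
    LineOpen K fun x => P (f x) :=
  hP.comap f.toAffineMap

theorem LineOpen.right {P : V × V' → Prop} (hP : LineOpen K P) (x : V) :
    LineOpen K fun y => P (x, y) := by
  intro y v h
  refine (hP (x, y) (0, v) h).subset ?_
  intro t ht
  simpa using ht

end LineOpenProd

/-! ### Shears -/

section Shear
variable {K : Type} [Field K] {σ : Type} [Fintype σ] [DecidableEq σ]

/-- The substitution `x_h ↦ x_h + ∑_{k ∈ T} c_k x_k` on polynomials. -/
noncomputable def shear (h : σ) (T : Finset σ) (c : σ → K) :
    MvPolynomial σ K →ₐ[K] MvPolynomial σ K :=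
  aeval fun i => if i = h then X h + ∑ k ∈ T, C (c k) * X k else X i

/-- The linear map on points dual to `shear`. -/
def shearPt (h : σ) (T : Finset σ) (c : σ → K) (p : σ → K) : σ → K :=
  fun i => if i = h then p h + ∑ k ∈ T, c k * p k else p i

theorem ln_shear (h : σ) (T : Finset σ) (c x v : σ → K) (G : MvPolynomial σ K) :
    ln x v (shear h T c G) = ln (shearPt h T c x) (shearPt h T c v) G := by
  have : (ln x v).comp (shear h T c) = ln (shearPt h T c x) (shearPt h T c v) := by
    ext i : 1
    by_cases hi : i = h
    · subst hi
      simp only [shear, ln, shearPt, AlgHom.comp_apply, aeval_X, if_true, map_add, map_sum,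
        map_mul, algHom_C, Polynomial.algebraMap_eq, mul_add, Finset.mul_sum,
        Finset.sum_add_distrib]
      have : ∀ k, Polynomial.C (c k) * (Polynomial.X * Polynomial.C (v k)) =
        Polynomial.X * (Polynomial.C (c k) * Polynomial.C (v k)) := fun k => by ring
      simp only [this]
      ring
    · simp [shear, ln, shearPt, hi]
  exact AlgHom.congr_fun this G

theorem shear_mem {S : Finset σ} {h : σ} (hh : h ∈ S) {T : Finset σ} (hT : T ⊆ S) (c : σ → K)
    {d : ℕ} {G : MvPolynomial σ K} (hG : G ∈ restrictSupport K (expo S d)) :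
    shear h T c G ∈ restrictSupport K (expo S d) := by
  rw [mem_rs_expo] at hG ⊢
  have hlin : ∀ i, (if i = h then X h + ∑ k ∈ T, C (c k) * X k else X i :
      MvPolynomial σ K).IsHomogeneous 1 := by
    intro i
    split_ifs
    · refine (isHomogeneous_X _ _).add (IsHomogeneous.sum _ _ _ fun k _ => ?_)
      simpa using (isHomogeneous_C σ (c k)).mul (isHomogeneous_X K k)
    · exact isHomogeneous_X _ _
  refine ⟨?_, ?_⟩
  · have := hG.1.aeval _ hlin
    simpa [shear] using this
  · intro j hj
    have h1 : j ∈ (bind₁ (fun i => (if i = h then X h + ∑ k ∈ T, C (c k) * X k else X i :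
      MvPolynomial σ K)) G).vars := hj
    have h2 := vars_bind₁ _ _ h1
    rw [Finset.mem_biUnion] at h2
    obtain ⟨i, hi, hij⟩ := h2
    split_ifs at hij with hih
    · have h3 := vars_add_subset _ _ hij
      rw [Finset.mem_union] at h3
      rcases h3 with h3 | h3
      · rw [vars_X, Finset.mem_singleton] at h3; exact h3 ▸ hh
      · have h4 := vars_sum_subset _ _ h3
        rw [Finset.mem_biUnion] at h4
        obtain ⟨k, hk, hkj⟩ := h4
        have h5 := vars_mul _ _ hkj
        simp only [vars_C, vars_X, Finset.empty_union, Finset.mem_singleton] at h5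
        exact h5 ▸ hT hk
    · rw [vars_X, Finset.mem_singleton] at hij
      exact hij ▸ hG.2 hi

theorem shear_neg (h : σ) {T : Finset σ} (hT : h ∉ T) (c : σ → K) (G : MvPolynomial σ K) :
    shear h T (-c) (shear h T c G) = G := by
  have : (shear h T (-c)).comp (shear h T c) = AlgHom.id K _ := by
    ext i : 1
    by_cases hi : i = h
    · subst hi
      have : ∀ k ∈ T, shear i T (-c) (X k) = X k := by
        intro k hk
        have : k ≠ i := by rintro rfl; exact hT hk
        simp [shear, this]
      have h2 : shear i T c (X i) = X i + ∑ k ∈ T, C (c k) * X k := by simp [shear]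
      have h3 : shear i T (-c) (X i) = X i + ∑ k ∈ T, C ((-c) k) * X k := by simp [shear]
      rw [AlgHom.comp_apply, h2, map_add, map_sum, h3]
      simp only [map_mul, AlgHom.id_apply]
      rw [add_assoc, ← Finset.sum_add_distrib, Finset.sum_eq_zero, add_zero]
      intro k hk
      rw [this k hk, algHom_C]
      simp [algebraMap_eq]
    · simp [shear, hi]
  exact AlgHom.congr_fun this G

/-- The dimension of a system does not change under a shear of the variables and the points. -/
theorem DimLE.shear {ι : Type} {S : Finset σ} {h : σ} (hh : h ∈ S) {T : Finset σ} (hT : T ⊆ S)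
    (hhT : h ∉ T) (c : σ → K) {d m : ℕ} {p : ι → σ → K} (hp : DimLE (sing (expo S d) p) m) :
    DimLE (sing (expo S d) fun j => shearPt h T c (p j)) m := by
  refine hp.comap (_root_.shear h T c).toLinearMap (fun G hG => ?_) (fun G _ h0 => ?_)
  · rw [mem_sing] at hG ⊢
    refine ⟨shear_mem hh hT c hG.1, fun j i => ?_⟩
    have := coeff_one_ln_single (p j) i (_root_.shear h T c G)
    rw [ln_shear, coeff_one_ln] at this
    rw [AlgHom.toLinearMap_apply, ← this]
    exact Finset.sum_eq_zero fun k _ => by rw [hG.2 j k, mul_zero]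
  · rw [← shear_neg h hhT c G]
    rw [AlgHom.toLinearMap_apply] at h0
    rw [h0, map_zero]

end Shear

/-! ### Division by a variable and independent points -/

section Horace
variable {K : Type} [Field K] [CharZero K] {σ : Type} [Fintype σ] [DecidableEq σ]

theorem exists_eval_ne {G : MvPolynomial σ K} (hG : G ≠ 0) : ∃ x : σ → K, eval x G ≠ 0 := by
  by_contra hc
  push Not at hc
  exact hG (MvPolynomial.funext fun x => by simp [hc x])

/-- Dividing by `x_h` preserves being singular at points with nonzero `h`-coordinate. -/
theorem sing_of_X_mul {S : Finset σ} {h : σ} {d : ℕ} {G : MvPolynomial σ K}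
    (hG : G ∈ restrictSupport K (expo S d)) {r : σ → K} (hr : r h ≠ 0)
    (hs : ∀ i, eval r (pderiv i (X h * G)) = 0) (i : σ) : eval r (pderiv i G) = 0 := by
  have h1 : ∀ k, k ≠ h → eval r (pderiv k G) = 0 := by
    intro k hk
    have := hs k
    simp [Derivation.leibniz, pderiv_X, Pi.single_apply, hk.symm, hr] at this
    exact this
  have h2 : r h * eval r (pderiv h G) + eval r G = 0 := by
    have := hs h
    simpa [Derivation.leibniz, pderiv_X, Pi.single_apply] using this
  have h3 := euler hG r
  rw [Finset.sum_eq_single h (fun k _ hk => by rw [h1 k hk, mul_zero]) (by simp)] at h3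
  have h4 : ((d : K) + 1) * eval r G = 0 := by rw [add_mul, ← h3, one_mul]; exact h2
  have h5 : ((d : K) + 1) ≠ 0 := by exact_mod_cast Nat.succ_ne_zero d
  have h6 := (mul_eq_zero.1 h4).resolve_left h5
  by_cases hi : i = h
  · subst hi
    rw [h6, add_zero] at h2
    exact (mul_eq_zero.1 h2).resolve_left hr
  · exact h1 i hi

/-- The points `q j` have linearly independent projections to the coordinates in `T`. -/
def IndepOn {ε : ℕ} (T : Finset σ) (q : Fin ε → σ → K) : Prop :=
  ∀ a : Fin ε → K, (∀ i ∈ T, ∑ j, a j * q j i = 0) → a = 0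

theorem IndepOn.lineOpen {ε : ℕ} (T : Finset σ) :
    LineOpen K fun q : Fin ε → σ → K => IndepOn T q := by
  intro q v hq
  have key := finite_bad (K := K) (M := Fin ε → K) ⊤ (J := T)
    (fun i => ∑ j, (LinearMap.toSpanSingleton K (Polynomial K)
      (Polynomial.C (q j i) + Polynomial.X * Polynomial.C (v j i))).comp (LinearMap.proj j)) (by
        intro a _ ha
        refine hq a fun i hi => ?_
        have := ha ⟨i, hi⟩
        simpa [Polynomial.eval_finsetSum] using this)
  refine key.subset fun t ht ht' => ht fun a ha => ht' a trivial fun i => ?_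
  have := ha i.1 i.2
  rw [← this]
  simp only [LinearMap.sum_apply, LinearMap.comp_apply, LinearMap.proj_apply,
    LinearMap.toSpanSingleton_apply, Polynomial.eval_finsetSum]
  refine Finset.sum_congr rfl fun j _ => ?_
  simp; ring

theorem IndepOn.exists {ε : ℕ} {T : Finset σ} (hε : ε ≤ T.card) :
    ∃ q : Fin ε → σ → K, IndepOn T q := by
  have f : Fin ε ↪ T := (Fin.castLEEmb hε).trans T.equivFin.symm.toEmbedding
  refine ⟨fun j => Pi.single (f j).1 1, fun a ha => ?_⟩
  ext j
  have := ha (f j).1 (f j).2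
  rw [Finset.sum_eq_single j] at this
  · simpa using this
  · intro k _ hk
    have : (f j).1 ≠ (f k).1 := fun h => hk (f.injective (Subtype.ext h)).symm
    simp [this]
  · simp

/-- Independent points allow a linear form in the variables `T` with prescribed values at them. -/
theorem IndepOn.exists_coeff {ε : ℕ} {T : Finset σ} {q : Fin ε → σ → K} (hq : IndepOn T q)
    (y : Fin ε → K) : ∃ c : σ → K, ∀ j, y j = ∑ k ∈ T, c k * q j k := by
  classical
  let A : (σ → K) →ₗ[K] (Fin ε → K) :=
    LinearMap.pi fun j => ∑ k ∈ T, (q j k) • LinearMap.proj k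
  have hA : ∀ c j, A c j = ∑ k ∈ T, c k * q j k := by
    intro c j; simp [A, mul_comm]
  have htop : LinearMap.range A = ⊤ := by
    by_contra hne
    obtain ⟨f, hf, hfs⟩ := Submodule.exists_le_ker_of_lt_top _ (lt_top_iff_ne_top.2 hne)
    apply hf
    have h0 : (fun j => f (Pi.single j 1)) = 0 := by
      refine hq _ fun i hi => ?_
      have h1 : f (A (Pi.single i 1)) = 0 := hfs ⟨_, rfl⟩
      have h2 : A (Pi.single i 1) = ∑ j, q j i • Pi.single j (1 : K) := by
        ext j
        rw [hA]
        simp [Pi.single_apply, hi]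
      rw [h2, map_sum] at h1
      rw [← h1]
      refine Finset.sum_congr rfl fun j _ => ?_
      rw [map_smul, smul_eq_mul, mul_comm]
    ext j
    simpa using congrFun h0 j
  obtain ⟨c, hc⟩ := (LinearMap.range_eq_top.1 htop) y
  exact ⟨c, fun j => by rw [← hA, hc]⟩

end Horace

/-! ### The differential Horace method -/

section Horace
variable {K : Type} [Field K] [CharZero K] {σ : Type} [Fintype σ] [DecidableEq σ]

/-- Forms on `E` singular at the points `s` and vanishing at the points `q`. -/
noncomputable def singVan {ι κ : Type} (E : Set (σ →₀ ℕ)) (s : ι → σ → K) (q : κ → σ → K) :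
    Submodule K (MvPolynomial σ K) :=
  sing E s ⊓ ⨅ j, LinearMap.ker (aeval (q j) : MvPolynomial σ K →ₐ[K] K).toLinearMap

theorem mem_singVan {ι κ : Type} {E : Set (σ →₀ ℕ)} {s : ι → σ → K} {q : κ → σ → K}
    {G : MvPolynomial σ K} : G ∈ singVan E s q ↔ G ∈ sing E s ∧ ∀ j, eval (q j) G = 0 := by
  simp [singVan, Submodule.mem_inf, Submodule.mem_iInf, aeval_eq_eval]

theorem lineOpen_singVan {V : Type*} [AddCommGroup V] [Module K V] {ι κ : Type}
    {E : Set (σ →₀ ℕ)} (hE : E.Finite) (f : ι → V →ₗ[K] (σ → K)) (g : κ → V →ₗ[K] (σ → K))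
    (m : ℕ) :
    LineOpen K fun x => DimLE (singVan E (fun j => f j x) fun j => g j x) m := by
  have := rs_finite (K := K) hE
  refine LineOpen.dimLE (J := ι × σ ⊕ κ)
    (ψ := Sum.elim (fun ji x => pe (f ji.1 x) ji.2)
      (fun j x => (aeval (g j x) : MvPolynomial σ K →ₐ[K] K).toLinearMap))
    ?_ (restrictSupport K E) _ (fun x G => ?_) m
  · rintro (ji | j)
    · exact polyAlong_pe _ _
    · exact polyAlong_eval _
  · rw [mem_singVan, mem_sing]
    simp [pe_apply, and_assoc, aeval_eq_eval]

/-- Points in the position needed for the degeneration argument: `q` on the hyperplane `x_h = 0`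
and `r` off it. -/
theorem horace_position {S : Finset σ} {h : σ} (hh : h ∈ S) {d ε u w mT m1 m2 : ℕ}
    (hε : ε ≤ (S.erase h).card)
    (T : ∃ s : Fin u → σ → K, DimLE (sing (expo (S.erase h) (d + 2)) s) mT)
    (R1 : ∃ (q : Fin ε → σ → K) (r : Fin w → σ → K),
      DimLE (sing (expo S (d + 1)) (Sum.elim q r)) m1)
    (R2 : ∃ r : Fin w → σ → K, DimLE (sing (expo S d) r) m2) :
    ∃ (q : Fin ε → σ → K) (r : Fin w → σ → K) (s : Fin u → σ → K),
      (∀ j, q j h = 0) ∧ (∀ j, r j h ≠ 0) ∧ DimLE (sing (expo S (d + 1)) (Sum.elim q r)) m1 ∧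
      DimLE (sing (expo S d) r) m2 ∧
      DimLE (singVan (expo (S.erase h) (d + 2)) s q) (mT - ε) := by
  have hTG : ∃ (s : Fin u → σ → K) (q : Fin ε → σ → K),
      DimLE (singVan (expo (S.erase h) (d + 2)) s q) (mT - ε) := by
    obtain ⟨s, hs⟩ := T
    obtain ⟨q, hq⟩ := DimLE.cut (D := sing (expo (S.erase h) (d + 2)) s) (N := ⊥) (m2 := 0)
      (fun x : σ → K => (aeval x : MvPolynomial σ K →ₐ[K] K).toLinearMap)
      (fun G _ hG => by
        obtain ⟨x, hx⟩ := exists_eval_ne (K := K) (G := G) (by simpa using hG)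
        exact ⟨x, by simpa [aeval_eq_eval] using hx⟩) 0
      (DimLE.zero_iff.2 (by simp)) ε hs
    exact ⟨s, q, by simpa [singVan] using hq⟩
  let V := (Fin ε → σ → K) × (Fin w → σ → K) × (Fin u → σ → K)
  let Lq : Fin ε → V →ₗ[K] (σ → K) := fun j => (LinearMap.proj j).comp (LinearMap.fst _ _ _)
  let Lr : Fin w → V →ₗ[K] (σ → K) := fun j =>
    (LinearMap.proj j).comp ((LinearMap.fst _ _ _).comp (LinearMap.snd _ _ _))
  let Ls : Fin u → V →ₗ[K] (σ → K) := fun j =>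
    (LinearMap.proj j).comp ((LinearMap.snd _ _ _).comp (LinearMap.snd _ _ _))
  have o1 : LineOpen K fun x : V => DimLE (sing (expo S (d + 1)) (Sum.elim x.1 x.2.1)) m1 := by
    have := lineOpen_sing (K := K) (expo_finite S (d + 1)) (Sum.elim Lq Lr) m1
    convert this using 4 with x
    ext (j | j) <;> rfl
  have o2 : LineOpen K fun x : V => DimLE (sing (expo S d) x.2.1) m2 :=
    lineOpen_sing (K := K) (expo_finite S d) Lr m2
  have o3 : LineOpen K fun x : V => IndepOn (S.erase h) x.1 :=
    (IndepOn.lineOpen (K := K) (ε := ε) (S.erase h)).compLinear (V' := V)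
      (LinearMap.fst K (Fin ε → σ → K) ((Fin w → σ → K) × (Fin u → σ → K)))
  have o4 : LineOpen K fun x : V =>
      DimLE (singVan (expo (S.erase h) (d + 2)) x.2.2 x.1) (mT - ε) :=
    lineOpen_singVan (K := K) (expo_finite _ _) Ls Lq _
  obtain ⟨⟨q, r, s⟩, ⟨⟨h1, h2⟩, h3⟩, h4⟩ := ((o1.and o2).and o3).exists_and o4
    ((o1.and o2).exists_and o3
      (o1.exists_and o2 (by obtain ⟨q, r, h⟩ := R1; exact ⟨(q, r, 0), h⟩)
        (by obtain ⟨r, h⟩ := R2; exact ⟨(0, r, 0), h⟩))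
      (by obtain ⟨q, h⟩ := IndepOn.exists (K := K) hε; exact ⟨(q, 0, 0), h⟩))
    (by obtain ⟨s, q, h⟩ := hTG; exact ⟨(q, 0, s), h⟩)
  clear o3 o4
  dsimp only at h1 h2 h3 h4
  obtain ⟨c, hc⟩ := h3.exists_coeff fun j => - q j h
  -- The `h`-coordinate after the shear by `c` vanishes at the points `q`; the points `r` are perturbed
  -- such that it does not vanish at them.
  have o1' : LineOpen K fun r : Fin w → σ → K =>
      DimLE (sing (expo S (d + 1)) (Sum.elim q r)) m1 := by
    have := o1.right q
    exact (this.compLinear (LinearMap.inl K (Fin w → σ → K) (Fin u → σ → K)))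
  have o2' : LineOpen K fun r : Fin w → σ → K => DimLE (sing (expo S d) r) m2 :=
    lineOpen_sing (K := K) (expo_finite S d) (fun j => LinearMap.proj j) m2
  have o5 : LineOpen K fun r : Fin w → σ → K => ∀ j, shearPt h (S.erase h) c (r j) h ≠ 0 := by
    refine LineOpen.all fun j x v hx => ?_
    refine (Polynomial.finite_setOfPred_isRoot (p := Polynomial.C (shearPt h (S.erase h) c (x j) h) +
      Polynomial.X * Polynomial.C (shearPt h (S.erase h) c (v j) h)) ?_).subset ?_
    · intro h0
      have := congrArg (Polynomial.eval 0) h0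
      simp at this
      exact hx this
    · intro t ht
      simp only [Set.mem_ofPred_eq, not_not] at ht
      simp only [Set.mem_ofPred_eq, Polynomial.IsRoot.def]
      rw [← ht]
      simp only [Polynomial.eval_add, Polynomial.eval_C, Polynomial.eval_mul, Polynomial.eval_X]
      simp [shearPt, mul_add, Finset.sum_add_distrib, Finset.mul_sum]
      have : ∀ k, c k * (t * v j k) = t * (c k * v j k) := fun k => by ring
      simp only [this]
      ring
  obtain ⟨r, ⟨h1, h2⟩, h5⟩ := (o1'.and o2').exists_and o5 ⟨r, h1, h2⟩
    ⟨fun _ => Pi.single h 1, fun j => by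
      have : ∑ k ∈ S.erase h, c k * (Pi.single h 1 : σ → K) k = 0 :=
        Finset.sum_eq_zero fun k hk => by simp [Finset.ne_of_mem_erase hk]
      simp [shearPt, this]⟩
  refine ⟨fun j => shearPt h (S.erase h) c (q j), fun j => shearPt h (S.erase h) c (r j), s,
    fun j => ?_, h5, ?_, ?_, ?_⟩
  · simp only [shearPt, if_true, ← hc j]; ring
  · have := h1.shear hh (Finset.erase_subset h S) (Finset.notMem_erase h S) c
    convert this using 2
    ext (j | j) <;> rfl
  · exact h2.shear hh (Finset.erase_subset h S) (Finset.notMem_erase h S) c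
  · refine h4.mono (fun G hG => ?_) le_rfl
    rw [mem_singVan] at hG ⊢
    refine ⟨hG.1, fun j => ?_⟩
    rw [← hG.2 j]
    refine eval_congr (mem_sing.1 hG.1).1 fun i hi => ?_
    simp [shearPt, Finset.ne_of_mem_erase hi]

/-- The differential Horace method: `u` points are specialised to the hyperplane `x_h = 0`, and
`ε` further points tend to it. -/
theorem horace {S : Finset σ} {h : σ} (hh : h ∈ S) {d ε u w mT m1 m2 : ℕ}
    (hε : ε ≤ (S.erase h).card)
    (T : ∃ s : Fin u → σ → K, DimLE (sing (expo (S.erase h) (d + 2)) s) mT)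
    (R1 : ∃ (q : Fin ε → σ → K) (r : Fin w → σ → K),
      DimLE (sing (expo S (d + 1)) (Sum.elim q r)) m1)
    (R2 : ∃ r : Fin w → σ → K, DimLE (sing (expo S d) r) m2) :
    ∃ p : Fin u ⊕ Fin w ⊕ Fin ε → σ → K,
      DimLE (sing (expo S (d + 2)) p) ((mT - ε) + max (m1 + ε - u) m2) := by
  obtain ⟨q, r, s₀, hq, hr, hR1, hR2, hTG⟩ := horace_position hh hε T R1 R2
  -- `D` is the limit of the residual system: as a point tends to `q j`, the derivative in the direction
  -- of `x_h` is no longer controlled, but those along the hyperplane are.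
  obtain ⟨D, hD⟩ : ∃ D : Submodule K (MvPolynomial σ K), ∀ G, G ∈ D ↔
      (G ∈ restrictSupport K (expo S (d + 1)) ∧
      ∀ j i, eval (r j) (pderiv i G) = 0) ∧ ∀ j i, i ≠ h → eval (q j) (pderiv i G) = 0 := by
    refine ⟨sing (expo S (d + 1)) r ⊓
      ⨅ ji : Fin ε × {i // i ≠ h}, LinearMap.ker (pe (q ji.1) ji.2.1), fun G => ?_⟩
    simp [Submodule.mem_inf, Submodule.mem_iInf, mem_sing, pe_apply]
  have hDdim : DimLE D (m1 + ε) := by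
    have := DimLE.cond (D := D) (ι := Fin ε) (fun j => pe (q j) h) (fun G hG h0 => ?_) hR1
    · simpa using this
    · rw [hD] at hG
      rw [mem_sing]
      refine ⟨hG.1.1, ?_⟩
      rintro (j | j) i
      · by_cases hi : i = h
        · subst hi; simpa [pe_apply] using h0 j
        · exact hG.2 j i hi
      · exact hG.1.2 j i
  let mulX : MvPolynomial σ K →ₗ[K] MvPolynomial σ K := LinearMap.mulLeft K (X h)
  have hmulX : LinearMap.ker mulX = ⊥ := by
    rw [LinearMap.ker_eq_bot']
    intro G hG
    exact (mul_eq_zero.1 hG).resolve_left (X_ne_zero h)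
  obtain ⟨dv, hdv⟩ := LinearMap.exists_leftInverse_of_injective mulX hmulX
  have hdv' : ∀ G, dv (X h * G) = G := fun G => LinearMap.congr_fun hdv G
  let N : Submodule K (MvPolynomial σ K) := LinearMap.ker (res {h}).toLinearMap
  -- Forms in `D` vanishing on the hyperplane are `x_h` times forms of degree `d` singular at `r`.
  have hDN : DimLE (D ⊓ N) m2 := by
    refine hR2.comap dv (fun G hG => ?_) (fun G hG h0 => ?_)
    · obtain ⟨hG1, hG2⟩ := hG
      replace hG1 := (hD G).1 hG1
      obtain ⟨G', hG', rfl⟩ := eq_X_mul_of_res hG1.1.1 hG2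
      rw [hdv', mem_sing]
      exact ⟨hG', fun j i => sing_of_X_mul hG' (hr j) (hG1.1.2 j) i⟩
    · obtain ⟨hG1, hG2⟩ := hG
      replace hG1 := (hD G).1 hG1
      obtain ⟨G', hG', rfl⟩ := eq_X_mul_of_res hG1.1.1 hG2
      rw [hdv'] at h0
      rw [h0, mul_zero]
  -- projection of points to the hyperplane
  obtain ⟨pr, hprh, hpr⟩ : ∃ pr : (σ → K) →ₗ[K] (σ → K), (∀ x, pr x h = 0) ∧
      ∀ x i, i ≠ h → pr x i = x i :=
    ⟨LinearMap.pi fun i => if i = h then 0 else LinearMap.proj i, fun x => by simp,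
      fun x i hi => by simp [hi]⟩
  have hcut := DimLE.cut (D := D) (N := N)
    (fun x : σ → K => (aeval (pr x) : MvPolynomial σ K →ₐ[K] K).toLinearMap)
    (fun G _ hG => by
      obtain ⟨x, hx⟩ := exists_eval_ne (K := K) (G := res {h} G) hG
      refine ⟨x, ?_⟩
      intro h0
      apply hx
      have h1 : eval (pr x) (res {h} G) = 0 := by
        rw [eval_res _ (by simp [hprh])]
        simpa [aeval_eq_eval] using h0
      have h2 : (aeval x : MvPolynomial σ K →ₐ[K] K).comp (res {h}) =
          (aeval (pr x) : MvPolynomial σ K →ₐ[K] K).comp (res {h}) := by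
        ext i
        by_cases hi : i = h
        · simp [res, hi]
        · simp [res, hi, hpr x i hi]
      have h3 := AlgHom.congr_fun h2 G
      simp only [AlgHom.comp_apply, aeval_eq_eval] at h3
      exact h3.trans h1) 0 hDN u hDdim
  have hDfin : Module.Finite K D := hDdim.finite
  have oc : LineOpen K fun s : Fin u → σ → K => DimLE
      (D ⊓ ⨅ j, LinearMap.ker (aeval (pr (s j)) : MvPolynomial σ K →ₐ[K] K).toLinearMap)
      (max (m1 + ε - u) m2) := by
    refine LineOpen.dimLE (J := Fin u) (ψ := fun j (s : Fin u → σ → K) =>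
      (aeval (pr (s j)) : MvPolynomial σ K →ₐ[K] K).toLinearMap)
      (fun j => ?_) D _ (fun x G => ?_) _
    · intro x v
      refine ⟨(ln (pr (x j)) (pr (v j))).toLinearMap, fun t g => ?_⟩
      rw [AlgHom.toLinearMap_apply, AlgHom.toLinearMap_apply, eval_ln, aeval_eq_eval,
        Pi.add_apply, Pi.smul_apply, map_add, map_smul]
    simp [Submodule.mem_inf, Submodule.mem_iInf]
  have ot : LineOpen K fun s : Fin u → σ → K =>
      DimLE (singVan (expo (S.erase h) (d + 2)) s q) (mT - ε) := by
    have := lineOpen_singVan (K := K) (V := (Fin ε → σ → K) × (Fin u → σ → K))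
      (expo_finite (S.erase h) (d + 2))
      (fun j => (LinearMap.proj j).comp (LinearMap.snd _ _ _))
      (fun j => (LinearMap.proj j).comp (LinearMap.fst _ _ _)) (mT - ε)
    exact this.right q
  obtain ⟨s, ⟨ν, hν⟩, ⟨μ, hμ⟩⟩ := oc.exists_and ot hcut ⟨s₀, hTG⟩
  have hres : ∀ G ∈ restrictSupport K (expo S (d + 2)),
      (∀ j i, eval (pr (s j)) (pderiv i G) = 0) → (∀ j, eval (q j) G = 0) →
      (∀ l, μ l (res {h} G) = 0) → res {h} G = 0 := by
    intro G hG hs hqG hμG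
    have hmem : res {h} G ∈ restrictSupport K (expo (S.erase h) (d + 2)) := by
      rw [← Finset.sdiff_singleton_eq_erase]; exact res_mem_expo hG
    refine hμ _ ?_ hμG
    rw [mem_singVan, mem_sing]
    refine ⟨⟨hmem, fun j i => ?_⟩, fun j => ?_⟩
    · by_cases hi : i = h
      · rw [pderiv_res_mem (by simp [hi]), map_zero]
      · have h1 : pderiv i (res {h} G) ∈ restrictSupport K (expo (S.erase h) (d + 1)) :=
          pderiv_mem hmem i
        rw [eval_congr (y := pr (s j)) h1 fun k hk => (hpr _ _ (Finset.ne_of_mem_erase hk)).symm,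
          pderiv_res (by simpa using hi), eval_res _ (by simp [hprh]), hs j i]
    · rw [eval_res _ (by simp [hq]), hqG j]
  have hWfin := rs_finite (K := K) (expo_finite S (d + 2))
  -- The `ε` moving points are `q j + t e_h`. A first-order solution `G + t G1` of the conditions at
  -- `t = 0` is divisible by `x_h`, and the quotient of `G` lies in `D`.
  obtain ⟨t, ht⟩ := exists_good_of_first_order (restrictSupport K (expo S (d + 2)))
    (J := ((Fin u × σ) ⊕ (Fin w × σ)) ⊕ (Fin ε × σ) ⊕ (Fin (mT - ε) ⊕ Fin (max (m1 + ε - u) m2)))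
    (Sum.elim (Sum.elim (fun ji => (Polynomial.monomial 0).comp (pe (pr (s ji.1)) ji.2))
      (fun ji => (Polynomial.monomial 0).comp (pe (r ji.1) ji.2)))
      (Sum.elim (fun ji => (ln (q ji.1) (Pi.single h 1)).toLinearMap.comp
        (pderiv ji.2).toLinearMap)
        (Sum.elim (fun l => (Polynomial.monomial 0).comp ((μ l).comp (res {h}).toLinearMap))
          (fun l => (Polynomial.monomial 0).comp ((ν l).comp dv))))) (by
    intro G hG h0 G1 hG1 h1
    have a1 : ∀ j i, eval (pr (s j)) (pderiv i G) = 0 := fun j i => by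
      simpa [pe_apply] using h0 (Sum.inl (Sum.inl (j, i)))
    have a2 : ∀ j i, eval (r j) (pderiv i G) = 0 := fun j i => by
      simpa [pe_apply] using h0 (Sum.inl (Sum.inr (j, i)))
    have a3 : ∀ j i, eval (q j) (pderiv i G) = 0 := fun j i => by
      simpa [coeff_zero_ln] using h0 (Sum.inr (Sum.inl (j, i)))
    have a4 : ∀ l, μ l (res {h} G) = 0 := fun l => by
      simpa using h0 (Sum.inr (Sum.inr (Sum.inl l)))
    have a5 : ∀ l, ν l (dv G) = 0 := fun l => by
      simpa using h0 (Sum.inr (Sum.inr (Sum.inr l)))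
    have b1 : ∀ j i, eval (pr (s j)) (pderiv i G1) = 0 := fun j i => by
      simpa [pe_apply, Polynomial.coeff_monomial] using h1 (Sum.inl (Sum.inl (j, i)))
    have b3 : ∀ j i, eval (q j) (pderiv i G1) + eval (q j) (pderiv h (pderiv i G)) = 0 :=
      fun j i => by
        simpa [coeff_zero_ln, coeff_one_ln_single] using h1 (Sum.inr (Sum.inl (j, i)))
    have b4 : ∀ l, μ l (res {h} G1) = 0 := fun l => by
      simpa [Polynomial.coeff_monomial] using h1 (Sum.inr (Sum.inr (Sum.inl l)))
    have c0 : res {h} G = 0 := hres G hG a1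
      (fun j => eval_eq_zero_of_sing hG (by omega) (a3 j)) a4
    -- by Euler's relations for `G1` and for `∂G/∂x_h`
    have c1 : ∀ j, eval (q j) G1 = 0 := by
      intro j
      have e1 := euler hG1 (q j)
      have e2 := euler (pderiv_mem hG h) (q j)
      rw [a3 j h, mul_zero] at e2
      have e3 : ∑ i, q j i * eval (q j) (pderiv i G1) = 0 := by
        rw [← neg_eq_zero, ← e2, ← Finset.sum_neg_distrib]
        refine Finset.sum_congr rfl fun i _ => ?_
        have hcomm : pderiv i (pderiv h G) = pderiv h (pderiv i G) := by
          ext α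
          simp only [coeff_pderiv]
          by_cases hi : i = h
          · rw [hi]
          · have e4 : α + Finsupp.single i 1 + Finsupp.single h 1 =
              α + Finsupp.single h 1 + Finsupp.single i 1 := by abel
            have hi' : h ≠ i := Ne.symm hi
            rw [e4]
            simp [Finsupp.single_apply, hi, hi']
            ring
        rw [hcomm, eq_neg_of_add_eq_zero_left (b3 j i)]
        ring
      rw [e3] at e1
      refine (mul_eq_zero.1 e1.symm).resolve_left ?_
      exact_mod_cast Nat.succ_ne_zero (d + 1)
    have c2 : res {h} G1 = 0 := hres G1 hG1 b1 c1 b4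
    obtain ⟨G', hG', rfl⟩ := eq_X_mul_of_res hG c0
    obtain ⟨G1', hG1', rfl⟩ := eq_X_mul_of_res hG1 c2
    have hzero : G' = 0 := by
      refine hν G' ⟨(hD G').2 ⟨⟨hG', fun j i => sing_of_X_mul hG' (hr j) (a2 j) i⟩,
        fun j i hi => ?_⟩, ?_⟩ (fun l => by rw [← hdv' G']; exact a5 l)
      · have := b3 j i
        simpa [Derivation.leibniz, pderiv_X, Pi.single_apply, hi, hi.symm, hq j] using this
      · refine (Submodule.mem_iInf _).2 fun j => ?_
        have := a1 j h
        simpa [Derivation.leibniz, pderiv_X, Pi.single_apply, hprh, aeval_eq_eval] using this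
    rw [hzero, mul_zero])
  refine ⟨Sum.elim (fun j => pr (s j)) (Sum.elim r fun j => q j + t • Pi.single h 1), ?_⟩
  have := DimLE.of_fintype (D := sing (expo S (d + 2)) (Sum.elim (fun j => pr (s j))
      (Sum.elim r fun j => q j + t • Pi.single h 1)))
    (ι := Fin (mT - ε) ⊕ Fin (max (m1 + ε - u) m2))
    (Sum.elim (fun l => (μ l).comp (res {h}).toLinearMap) (fun l => (ν l).comp dv)) (by
      intro G hG h0
      rw [mem_sing] at hG
      refine ht G hG.1 ?_
      rintro ((⟨j, i⟩ | ⟨j, i⟩) | ⟨j, i⟩ | l | l)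
      · simpa [pe_apply] using hG.2 (Sum.inl j) i
      · simpa [pe_apply] using hG.2 (Sum.inr (Sum.inl j)) i
      · simpa [eval_ln] using hG.2 (Sum.inr (Sum.inr j)) i
      · simpa using h0 (Sum.inl l)
      · simpa using h0 (Sum.inr l))
  simpa using this

end Horace

/-! ### Points on coordinate subspaces -/

section Masks
variable {K : Type} [Field K] {σ : Type} [Fintype σ] [DecidableEq σ]

/-- Projection of a point to the coordinate subspace where the coordinates in `Z` vanish. -/
def mask (Z : Finset σ) : (σ → K) →ₗ[K] (σ → K) :=
  LinearMap.pi fun i => if i ∈ Z then 0 else LinearMap.proj i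

theorem mask_apply (Z : Finset σ) (x : σ → K) (i : σ) : mask Z x i = if i ∈ Z then 0 else x i := by
  simp only [mask, LinearMap.pi_apply]
  split_ifs <;> simp

theorem mask_mask (Z Z' : Finset σ) (x : σ → K) : mask Z (mask Z' x) = mask (Z' ∪ Z) x := by
  ext i
  simp only [mask_apply, Finset.mem_union]
  split_ifs <;> simp_all

theorem mask_empty (x : σ → K) : mask ∅ x = x := by ext i; simp [mask_apply]

theorem eval_res_mask (Z : Finset σ) (x : σ → K) (G : MvPolynomial σ K) :
    eval x (res Z G) = eval (mask Z x) G := by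
  have : (aeval x : MvPolynomial σ K →ₐ[K] K).comp (res Z) = aeval (mask Z x) := by
    ext i
    by_cases h : i ∈ Z <;> simp [res, h, mask_apply]
  have := AlgHom.congr_fun this G
  simpa [aeval_eq_eval] using this

variable (K) in
/-- For suitable points, the `j`-th lying on the coordinate subspace where the variables in `M j`
vanish, the system of polynomials with exponents in `E` singular at these points has dimension
at most `m`. -/
def Good {ι : Type} (E : Set (σ →₀ ℕ)) (M : ι → Finset σ) (m : ℕ) : Prop :=
  ∃ p : ι → σ → K, DimLE (sing E fun j => mask (M j) (p j)) m

theorem Good.mono {ι κ : Type} {E E' : Set (σ →₀ ℕ)} {M : ι → Finset σ} {M' : κ → Finset σ}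
    {m m' : ℕ} (h : Good K E M m) (hE : E' ⊆ E) (e : ι ↪ κ) (hM : ∀ j, M' (e j) ⊆ M j)
    (hm : m ≤ m') : Good K E' M' m' := by
  classical
  obtain ⟨p, hp⟩ := h
  refine ⟨Function.extend e (fun j => mask (M j) (p j)) 0, hp.mono (fun G hG => ?_) hm⟩
  rw [mem_sing] at hG ⊢
  refine ⟨restrictSupport_mono K hE hG.1, fun j i => ?_⟩
  have := hG.2 (e j) i
  rw [e.injective.extend_apply, mask_mask, Finset.union_eq_left.2 (hM j)] at this
  exact this

/-- Horace method for a coordinate subspace `{x_i = 0, i ∈ Z}`, with the points in general position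
subject to the constraints: the points with index in `ι₀` and `ι₁` lie on the subspace, those in
`ι₂` need not, and those in `ι₀` are not used in the residual system. -/
theorem Good.block [Infinite K] {ι₀ ι₁ ι₂ : Type} {E : Set (σ →₀ ℕ)} (hE : E.Finite) (Z : Finset σ)
    {M₀ : ι₀ → Finset σ} {M₁ : ι₁ → Finset σ} {M₂ : ι₂ → Finset σ} {a b : ℕ}
    (h1 : Good K {α ∈ E | ∀ i ∈ Z, α i = 0} (Sum.elim M₀ M₁) a)
    (h2 : Good K {α ∈ E | ∃ i ∈ Z, α i ≠ 0} (Sum.elim (fun j => M₁ j ∪ Z) M₂) b) :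
    Good K E (Sum.elim (fun j => M₀ j ∪ Z) (Sum.elim (fun j => M₁ j ∪ Z) M₂)) (a + b) := by
  let V := (ι₀ → σ → K) × (ι₁ → σ → K) × (ι₂ → σ → K)
  let L₀ : ι₀ → V →ₗ[K] (σ → K) := fun j => (LinearMap.proj j).comp (LinearMap.fst _ _ _)
  let L₁ : ι₁ → V →ₗ[K] (σ → K) := fun j =>
    (LinearMap.proj j).comp ((LinearMap.fst _ _ _).comp (LinearMap.snd _ _ _))
  let L₂ : ι₂ → V →ₗ[K] (σ → K) := fun j =>
    (LinearMap.proj j).comp ((LinearMap.snd _ _ _).comp (LinearMap.snd _ _ _))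
  have o1 := lineOpen_sing (K := K) (hE.subset (Set.sep_subset E fun α => ∀ i ∈ Z, α i = 0))
    (Sum.elim (fun j => (mask (M₀ j)).comp (L₀ j)) (fun j => (mask (M₁ j)).comp (L₁ j))) a
  have o2 := lineOpen_sing (K := K) (hE.subset (Set.sep_subset E fun α => ∃ i ∈ Z, α i ≠ 0))
    (Sum.elim (fun j => (mask (M₁ j ∪ Z)).comp (L₁ j)) (fun j => (mask (M₂ j)).comp (L₂ j))) b
  obtain ⟨x, hx1, hx2⟩ := o1.exists_and o2
    (by
      obtain ⟨p, hp⟩ := h1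
      refine ⟨(fun j => p (Sum.inl j), fun j => p (Sum.inr j), 0), ?_⟩
      convert hp using 2
      ext (j | j) <;> rfl)
    (by
      obtain ⟨p, hp⟩ := h2
      refine ⟨(0, fun j => p (Sum.inl j), fun j => p (Sum.inr j)), ?_⟩
      convert hp using 2
      ext (j | j) <;> rfl)
  refine ⟨Sum.elim x.1 (Sum.elim x.2.1 x.2.2), ?_⟩
  refine DimLE.add (res Z).toLinearMap (fun G hG => ?_) hx1 (hx2.mono ?_ le_rfl)
  · rw [mem_sing] at hG ⊢
    refine ⟨?_, ?_⟩
    · rw [mem_rs]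
      intro α hα
      rw [AlgHom.toLinearMap_apply, coeff_res] at hα
      split_ifs at hα with h
      · exact ⟨mem_rs.1 hG.1 α hα, h⟩
      · exact absurd rfl hα
    · intro j i
      rw [AlgHom.toLinearMap_apply]
      by_cases hi : i ∈ Z
      · rw [pderiv_res_mem hi, map_zero]
      rw [pderiv_res hi, eval_res_mask]
      rcases j with j | j
      · have := hG.2 (Sum.inl j) i
        change eval (mask (M₀ j ∪ Z) (x.1 j)) _ = 0 at this
        rw [← mask_mask] at this
        exact this
      · have := hG.2 (Sum.inr (Sum.inl j)) i
        change eval (mask (M₁ j ∪ Z) (x.2.1 j)) _ = 0 at this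
        rw [← mask_mask] at this
        exact this
  · rintro G ⟨hG, hG0⟩
    replace hG := mem_sing.1 hG
    rw [mem_sing]
    refine ⟨?_, ?_⟩
    · rw [mem_rs]
      intro α hα
      refine ⟨mem_rs.1 hG.1 α hα, ?_⟩
      by_contra hcon
      push Not at hcon
      have : coeff α (res Z G) = 0 := by
        have h0 : res Z G = 0 := hG0
        rw [h0, coeff_zero]
      rw [coeff_res, if_pos hcon] at this
      exact hα this
    · rintro (j | j) i
      · exact hG.2 (Sum.inr (Sum.inl j)) i
      · exact hG.2 (Sum.inr (Sum.inr j)) i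

variable (K) in
/-- `k` suitable double points leave a space of dimension at most `m` of degree-`d` forms in the
variables `S`. -/
def AH (S : Finset σ) (d k m : ℕ) : Prop := Good K (expo S d) (fun _ : Fin k => ∅) m

theorem AH.iff {S : Finset σ} {d k m : ℕ} :
    AH K S d k m ↔ ∃ p : Fin k → σ → K, DimLE (sing (expo S d) p) m := by
  simp [AH, Good, mask_empty]

theorem AH.of_fintype {ι : Type} [Fintype ι] {S : Finset σ} {d k m m' : ℕ} {p : ι → σ → K}
    (h : DimLE (sing (expo S d) p) m) (hk : Fintype.card ι ≤ k) (hm : m ≤ m') : AH K S d k m' := by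
  have : Good K (expo S d) (fun _ : ι => ∅) m := ⟨p, by simpa [mask_empty] using h⟩
  exact this.mono subset_rfl ((Fintype.equivFin ι).toEmbedding.trans (Fin.castLEEmb hk))
    (fun _ => subset_rfl) hm

theorem AH.mono {S : Finset σ} {d k k' m m' : ℕ} (h : AH K S d k m) (hk : k ≤ k') (hm : m ≤ m') :
    AH K S d k' m' :=
  Good.mono h subset_rfl (Fin.castLEEmb hk) (fun _ => subset_rfl) hm

/-- Dropping one point raises the dimension by at most the number of variables. -/
theorem AH.drop {S : Finset σ} {d k m : ℕ} (h : AH K S d (k + 1) m) : AH K S d k (m + S.card) := by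
  rw [AH.iff] at h ⊢
  obtain ⟨p, hp⟩ := h
  refine ⟨fun j => p j.castSucc, ?_⟩
  have := DimLE.cond (D := sing (expo S d) fun j : Fin k => p j.castSucc) (ι := S)
    (fun i => pe (p (Fin.last k)) i.1) (fun G hG h0 => ?_) hp
  · simpa using this
  · rw [mem_sing] at hG ⊢
    refine ⟨hG.1, fun j i => ?_⟩
    refine Fin.lastCases ?_ (fun j => hG.2 j i) j
    by_cases hi : i ∈ S
    · simpa [pe_apply] using h0 ⟨i, hi⟩
    · rw [pderiv_eq_zero_of_notMem hG.1 hi, map_zero]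

theorem AH.drops {S : Finset σ} {d k m : ℕ} (j : ℕ) (h : AH K S d (k + j) m) :
    AH K S d k (m + S.card * j) := by
  induction j generalizing m with
  | zero => simpa using h
  | succ j ih =>
    have := ih (m := m + S.card) (AH.drop h)
    exact this.mono le_rfl (by rw [Nat.mul_succ]; omega)

/-- The differential Horace method in terms of `AH`: `T` is the trace on the hyperplane, `R1` and `R2`
are the two residual systems. -/
theorem AH.horace [CharZero K] {S : Finset σ} {h : σ} (hh : h ∈ S) {d ε u w mT m1 m2 k m : ℕ}
    (hε : ε + 1 ≤ S.card) (T : AH K (S.erase h) (d + 2) u mT) (R1 : AH K S (d + 1) (w + ε) m1)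
    (R2 : AH K S d w m2) (hk : u + ε + w ≤ k) (hm1 : (mT - ε) + (m1 + ε - u) ≤ m)
    (hm2 : (mT - ε) + m2 ≤ m) : AH K S (d + 2) k m := by
  rw [AH.iff] at T R1 R2
  obtain ⟨p, hp⟩ := _root_.horace hh (ε := ε) (u := u) (w := w) (mT := mT) (m1 := m1) (m2 := m2)
    (by rw [Finset.card_erase_of_mem hh]; omega) T
    (by
      obtain ⟨p, hp⟩ := R1
      refine ⟨fun j => p (Fin.natAdd w j), fun j => p (Fin.castAdd ε j), hp.mono ?_ le_rfl⟩
      intro G hG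
      rw [mem_sing] at hG ⊢
      refine ⟨hG.1, fun j i => ?_⟩
      refine Fin.addCases (fun j => hG.2 (Sum.inr j) i) (fun j => hG.2 (Sum.inl j) i) j) R2
  exact AH.of_fintype hp (by simp; omega) (by omega)

end Masks

/-! ### Gaussian elimination modulo 101 -/

section Elimination

/-- Evaluates `x` before passing it on; equal to `k x`, see `force_eq`. -/
def force {α : Type} (x : ℕ) (k : ℕ → α) : α :=
  match x with
  | 0 => k 0
  | n + 1 => k (n + 1)

theorem force_eq {α : Type} (x : ℕ) (k : ℕ → α) : force x k = k x := by
  cases x <;> rfl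

/-- The base in which rows of residues modulo `101` are packed into one natural number. -/
def packBase : ℕ := 4294967296

/-- The row `l`, packed into the number with base-`packBase` digits `l`. -/
def packRow : List ℕ → ℕ
  | [] => 0
  | a :: l => a + packBase * packRow l

/-- Multiplies the first `n` digits of `r` by `s` and reduces them modulo `101`. -/
def reduceRow (s : ℕ) : ℕ → ℕ → ℕ
  | 0, _ => 0
  | n + 1, r => Nat.add (Nat.mod (Nat.mul (Nat.mod r packBase) s) 101)
      (Nat.mul packBase (reduceRow s n (Nat.div r packBase)))

/-- Adds the multiple of `P` to `r` that clears the digit with place value `q` modulo `101`, if that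
digit of `P` is `1`. -/
def clearDigit (q P r : ℕ) : ℕ :=
  Nat.add r (Nat.mul (Nat.sub 101 (Nat.mod (Nat.mod (Nat.div r q) packBase) 101)) P)

/-- Gaussian elimination modulo `101` on packed rows with `n` digits, without exchanging rows or
columns, starting from the most significant digit; `t` is the number of columns left and `q` the place
value of the next pivot. The result is `true` if all pivots are found. Natural number operations are
spelled out, inverses modulo `101` computed as 99th powers, and intermediate results forced, for the sake of evaluation by the kernel. -/
def solveRows (n : ℕ) : ℕ → List ℕ → ℕ → Bool
  | 0, _, _ => true
  | _ + 1, [], _ => false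
  | t + 1, r :: rs, q =>
    force r fun r =>
      force (Nat.mod (Nat.pow (Nat.mod (Nat.mod (Nat.div r q) packBase) 101) 99) 101) fun s =>
        force (reduceRow s n r) fun P =>
          Nat.beq (Nat.div P q) 1 &&
            force (Nat.div q packBase) (solveRows n t (rs.map (clearDigit q P)))

theorem digit_sum {B n : ℕ} (hB : 0 < B) {a : ℕ → ℕ} (ha : ∀ j, a j < B) {j : ℕ} (hj : j < n) :
    (∑ i ∈ Finset.range n, a i * B ^ i) / B ^ j % B = a j := by
  induction n generalizing a j with
  | zero => omega
  | succ n ih =>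
    have e : ∑ i ∈ Finset.range (n + 1), a i * B ^ i
        = a 0 + B * ∑ i ∈ Finset.range n, a (i + 1) * B ^ i := by
      rw [Finset.sum_range_succ', Finset.mul_sum, add_comm]
      simp only [pow_zero, mul_one]
      congr 1
      exact Finset.sum_congr rfl fun i _ => by ring
    rw [e]
    cases j with
    | zero => simp [Nat.mod_eq_of_lt (ha 0)]
    | succ j =>
      rw [pow_succ', ← Nat.div_div_eq_div_mul, Nat.add_mul_div_left _ _ hB,
        Nat.div_eq_of_lt (ha 0), zero_add]
      exact ih (a := fun i => a (i + 1)) (fun i => ha _) (by omega)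

/-- `r` packs, with digits at most `b`, a relation modulo `101` satisfied by `c`. -/
def RowRel (c : ℕ → ZMod 101) (n b r : ℕ) : Prop :=
  ∃ a : ℕ → ℕ, (∀ j, a j ≤ b) ∧ r = ∑ j ∈ Finset.range n, a j * packBase ^ j ∧
    ∑ j ∈ Finset.range n, (a j : ZMod 101) * c j = 0

theorem RowRel.add_mul {c : ℕ → ZMod 101} {n b b' r r' : ℕ} (f : ℕ) (hf : f ≤ 101)
    (h : RowRel c n b r) (h' : RowRel c n b' r') : RowRel c n (b + 101 * b') (r + f * r') := by
  obtain ⟨a, ha, hr, hs⟩ := h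
  obtain ⟨a', ha', hr', hs'⟩ := h'
  refine ⟨fun j => a j + f * a' j, fun j => Nat.add_le_add (ha j) (Nat.mul_le_mul hf (ha' j)),
    ?_, ?_⟩
  · rw [hr, hr', Finset.mul_sum, ← Finset.sum_add_distrib]
    exact Finset.sum_congr rfl fun j _ => by ring
  · have : ∑ j ∈ Finset.range n, ((a j + f * a' j : ℕ) : ZMod 101) * c j
        = ∑ j ∈ Finset.range n, (a j : ZMod 101) * c j
          + f * ∑ j ∈ Finset.range n, (a' j : ZMod 101) * c j := by
      rw [Finset.mul_sum, ← Finset.sum_add_distrib]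
      exact Finset.sum_congr rfl fun j _ => by push_cast; ring
    rw [this, hs, hs', mul_zero, add_zero]

theorem RowRel.clear {c : ℕ → ZMod 101} {n b r P : ℕ} (q : ℕ) (h : RowRel c n b r)
    (hP : RowRel c n 100 P) : RowRel c n (b + 10100) (clearDigit q P r) :=
  h.add_mul _ (Nat.sub_le _ _) hP

theorem reduceRow_succ (s n r : ℕ) : reduceRow s (n + 1) r =
    r % packBase * s % 101 + packBase * reduceRow s n (r / packBase) := rfl

theorem reduceRow_eq (s n r : ℕ) : reduceRow s n r =
    ∑ j ∈ Finset.range n, (r / packBase ^ j % packBase * s % 101) * packBase ^ j := by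
  induction n generalizing r with
  | zero => simp [reduceRow]
  | succ n ih =>
    rw [reduceRow_succ, ih, Finset.sum_range_succ', Finset.mul_sum, add_comm]
    simp only [pow_zero, mul_one, Nat.div_one]
    congr 1
    refine Finset.sum_congr rfl fun j _ => ?_
    rw [Nat.div_div_eq_div_mul, ← pow_succ']
    ring

theorem packBase_pos : 0 < packBase := by simp [packBase]

theorem RowRel.reduce {c : ℕ → ZMod 101} {n b r : ℕ} (s : ℕ) (h : RowRel c n b r)
    (hb : b < packBase) : RowRel c n 100 (reduceRow s n r) := by
  obtain ⟨a, ha, hr, hs⟩ := h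
  refine ⟨fun j => a j * s % 101, fun j => Nat.le_of_lt_succ (Nat.mod_lt _ (by norm_num)), ?_, ?_⟩
  · rw [reduceRow_eq]
    refine Finset.sum_congr rfl fun j hj => ?_
    rw [hr, digit_sum packBase_pos (fun j => (ha j).trans_lt hb) (Finset.mem_range.1 hj)]
  · have : ∑ j ∈ Finset.range n, ((a j * s % 101 : ℕ) : ZMod 101) * c j
        = s * ∑ j ∈ Finset.range n, (a j : ZMod 101) * c j := by
      rw [Finset.mul_sum]
      refine Finset.sum_congr rfl fun j _ => ?_
      rw [ZMod.natCast_mod]; push_cast; ring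
    rw [this, hs, mul_zero]

/-- If elimination succeeds, a vector satisfying all the relations `rows` vanishes in the columns
that have been eliminated. The digits of the rows grow by at most `100 * 101` per step, so by `hb` no
carries occur. -/
theorem solveRows_sound {c : ℕ → ZMod 101} {n : ℕ} (t : ℕ) (ht : t ≤ n) {b : ℕ}
    (hb : b + 10100 * t < packBase) (rows : List ℕ) (hr : ∀ r ∈ rows, RowRel c n b r)
    {q : ℕ} (hq : ∀ t', t = t' + 1 → q = packBase ^ t')
    (h : solveRows n t rows q = true) : ∀ j < t, c j = 0 := by
  induction t generalizing b rows q with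
  | zero => intro j hj; omega
  | succ t ih =>
    obtain rfl := hq t rfl
    cases rows with
    | nil => simp [solveRows] at h
    | cons r rs =>
      simp only [solveRows, force_eq, Bool.and_eq_true, Nat.beq_eq] at h
      obtain ⟨h1, h2⟩ := h
      have e := RowRel.reduce (Nat.mod (Nat.pow (Nat.mod (Nat.mod (Nat.div r (packBase ^ t))
        packBase) 101) 99) 101) (hr r (by simp)) (by omega)
      generalize reduceRow _ n r = P at h1 h2 e
      have hlow : ∀ j < t, c j = 0 := by
        refine ih (by omega) (b := b + 10100) (by omega) _ ?_ ?_ h2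
        · intro r' hr'
          obtain ⟨r₀, hr₀, rfl⟩ := List.mem_map.1 hr'
          exact (hr r₀ (by simp [hr₀])).clear _ e
        · rintro t' rfl
          exact Nat.div_eq_of_eq_mul_left packBase_pos (pow_succ _ _)
      obtain ⟨a, ha, hP, hs⟩ := e
      have h1 : P / packBase ^ t = 1 := h1
      have hdig : ∀ i < n, P / packBase ^ i % packBase = a i := fun i hi => by
        rw [hP, digit_sum packBase_pos (fun j => (ha j).trans_lt (by simp [packBase])) hi]
      rw [Finset.sum_eq_single t] at hs
      · rw [← hdig t (by omega), h1] at hs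
        intro j hj
        rcases (Nat.lt_succ_iff_lt_or_eq.1 hj) with hj | rfl
        · exact hlow j hj
        · simpa [packBase] using hs
      · intro i hi hit
        rw [Finset.mem_range] at hi
        rcases lt_or_gt_of_ne hit with hlt | hgt
        · rw [hlow i hlt, mul_zero]
        · have : a i = 0 := by
            obtain ⟨k, rfl⟩ : ∃ k, i = t + (k + 1) := ⟨i - t - 1, by omega⟩
            rw [← hdig _ hi, pow_add, ← Nat.div_div_eq_div_mul, h1, Nat.div_eq_of_lt, Nat.zero_mod]
            exact Nat.one_lt_pow (by omega) (by simp [packBase])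
          simp [this]
      · intro hj'; exact absurd (Finset.mem_range.2 (by omega)) hj'

theorem packRow_eq (l : List ℕ) :
    packRow l = ∑ j ∈ Finset.range l.length, l.getD j 0 * packBase ^ j := by
  induction l with
  | nil => simp [packRow]
  | cons a l ih =>
    rw [packRow, ih, List.length_cons, Finset.sum_range_succ', Finset.mul_sum, add_comm]
    simp only [pow_zero, mul_one, List.getD_cons_zero, List.getD_cons_succ]
    congr 1
    exact Finset.sum_congr rfl fun j _ => by ring

/-- If elimination modulo `101` succeeds on a square matrix of natural numbers, the matrix is
nonsingular over every field of characteristic zero. -/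
theorem injective_of_solveRows {K : Type} [Field K] [CharZero K] {n : ℕ}
    (hn : 100 + 10100 * n < packBase) (A : Fin n → Fin n → ℕ)
    (h : solveRows n n (List.ofFn fun k => packRow (List.ofFn fun j => A k j % 101))
      (packBase ^ (n - 1)) = true)
    (c : Fin n → K) (hc : ∀ k, ∑ j, (A k j : K) * c j = 0) : c = 0 := by
  have : Fact (Nat.Prime 101) := ⟨by norm_num⟩
  let M : Matrix (Fin n) (Fin n) ℤ := Matrix.of fun k j => (A k j : ℤ)
  have hdet : (M.map (Int.castRingHom (ZMod 101))).det ≠ 0 := by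
    intro h0
    obtain ⟨v, hv, hMv⟩ := Matrix.exists_mulVec_eq_zero_iff.2 h0
    apply hv
    have := solveRows_sound (c := fun j => if hj : j < n then v ⟨j, hj⟩ else 0) n le_rfl
      hn _ ?_ (by rintro t' rfl; rfl) h
    · ext j
      simpa using this j j.2
    · intro r hr
      rw [List.mem_ofFn] at hr
      obtain ⟨k, rfl⟩ := hr
      refine ⟨fun j => if hj : j < n then A k ⟨j, hj⟩ % 101 else 0, ?_, ?_, ?_⟩
      · intro j
        dsimp only
        split_ifs
        · exact Nat.le_of_lt_succ (Nat.mod_lt _ (by norm_num))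
        · simp
      · rw [packRow_eq, List.length_ofFn]
        refine Finset.sum_congr rfl fun j hj => ?_
        have hj := Finset.mem_range.1 hj
        simp [List.getD_eq_getElem?_getD, hj]
      · have := congrFun hMv k
        simp only [Matrix.mulVec, dotProduct, Matrix.map_apply, M, Matrix.of_apply,
          Pi.zero_apply] at this
        rw [← Fin.sum_univ_eq_sum_range
          (fun j => ((if hj : j < n then A k ⟨j, hj⟩ % 101 else 0 : ℕ) : ZMod 101) *
            if hj : j < n then v ⟨j, hj⟩ else 0)]
        rw [← this]
        refine Finset.sum_congr rfl fun j _ => ?_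
        simp
  have hdetK : (M.map (Int.castRingHom K)).det ≠ 0 := by
    rw [show (M.map (Int.castRingHom K)).det = ((M.det : ℤ) : K) from
      ((Int.castRingHom K).map_det M).symm]
    intro h0
    apply hdet
    rw [show (M.map (Int.castRingHom (ZMod 101))).det = ((M.det : ℤ) : ZMod 101) from
      ((Int.castRingHom (ZMod 101)).map_det M).symm]
    rw [Int.cast_eq_zero] at h0
    rw [h0, Int.cast_zero]
  by_contra hne
  refine hdetK (Matrix.exists_mulVec_eq_zero_iff.1 ⟨c, hne, ?_⟩)
  ext k
  simpa [Matrix.mulVec, dotProduct, M] using hc k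

end Elimination

/-! ### Certificates for linear systems of forms -/

section Certificates

/-- The value of the monomial with exponents `as` at the point `xs`. -/
def monVal : List ℕ → List ℕ → ℕ
  | x :: xs, a :: as => Nat.mul (Nat.pow x a) (monVal xs as)
  | _, _ => 1

/-- The value at the point `xs` of the derivative with respect to the `i`-th variable of the monomial
with exponents `as`. -/
def dmonVal : List ℕ → List ℕ → ℕ → ℕ
  | x :: xs, a :: as, 0 => Nat.mul (Nat.mul a (Nat.pow x (Nat.pred a))) (monVal xs as)
  | x :: xs, a :: as, i + 1 => Nat.mul (Nat.pow x a) (dmonVal xs as i)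
  | _, _, _ => 0

/-- The exponents of all monomials of degree `d` in `V` variables. -/
def allMons : ℕ → ℕ → List (List ℕ)
  | 0, 0 => [[]]
  | 0, _ + 1 => []
  | V + 1, d => (List.range (d + 1)).flatMap fun a => (allMons V (d - a)).map (a :: ·)

/-- The coefficient, at the monomial `l`, of the row indexed by `r = (j, i)`: the `i`-th derivative at
the `j`-th point if there is such a point, and the coefficient functional of the `i`-th entry of `dr`
otherwise. -/
def rowEntry (pts dr : List (List ℕ)) (r : ℕ × ℕ) (l : List ℕ) : ℕ :=
  match pts[r.1]? with
  | some x => dmonVal x l r.2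
  | none => if dr[r.2]? = some l then 1 else 0

/-- The computation certifying that degree-`d` polynomials in `V` variables whose monomials satisfy
`pred`, singular at `pts` and without the monomials `dr`, vanish. The list `rows` chooses as many
conditions as there are monomials, in an order for which elimination needs no exchanges. -/
def certify (V d : ℕ) (pred : List ℕ → Bool) (pts dr : List (List ℕ)) (rows : List (ℕ × ℕ)) : Bool :=
  let mons := (allMons V d).filter pred
  (rows.length == mons.length && decide (100 + 10100 * mons.length < packBase) &&
    pts.all fun x => x.length == V) &&
  solveRows mons.length
    mons.length
    (rows.map fun r => packRow (mons.map fun l => Nat.mod (rowEntry pts dr r l) 101))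
    (packBase ^ (mons.length - 1))

theorem monVal_cons (x a : ℕ) (xs as : List ℕ) :
    monVal (x :: xs) (a :: as) = x ^ a * monVal xs as := rfl

theorem dmonVal_zero (x a : ℕ) (xs as : List ℕ) :
    dmonVal (x :: xs) (a :: as) 0 = a * x ^ (a - 1) * monVal xs as := rfl

theorem dmonVal_succ (x a : ℕ) (xs as : List ℕ) (i : ℕ) :
    dmonVal (x :: xs) (a :: as) (i + 1) = x ^ a * dmonVal xs as i := rfl

theorem monVal_ofFn {V : ℕ} (x a : Fin V → ℕ) :
    monVal (List.ofFn x) (List.ofFn a) = ∏ j, x j ^ a j := by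
  induction V with
  | zero => simp [monVal]
  | succ V ih => rw [List.ofFn_succ, List.ofFn_succ, monVal_cons, ih, Fin.prod_univ_succ]

theorem dmonVal_ofFn {V : ℕ} (x a : Fin V → ℕ) (i : Fin V) :
    dmonVal (List.ofFn x) (List.ofFn a) i = a i * ∏ j, x j ^ (a j - if j = i then 1 else 0) := by
  induction V with
  | zero => exact i.elim0
  | succ V ih =>
    rw [List.ofFn_succ, List.ofFn_succ, Fin.prod_univ_succ]
    refine Fin.cases ?_ (fun i => ?_) i
    · simp [dmonVal_zero, monVal_ofFn, Fin.succ_ne_zero, mul_assoc]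
    · rw [Fin.val_succ, dmonVal_succ, ih]
      simp [(Fin.succ_ne_zero i).symm]
      ring

theorem dmonVal_of_le {x a : List ℕ} {i : ℕ} (h : a.length ≤ i) : dmonVal x a i = 0 := by
  induction a generalizing x i with
  | nil => cases x <;> simp [dmonVal]
  | cons b a ih =>
    cases x with
    | nil => simp [dmonVal]
    | cons y x =>
      simp only [List.length_cons] at h
      obtain ⟨i, rfl⟩ : ∃ i', i = i' + 1 := ⟨i - 1, by omega⟩
      rw [dmonVal_succ, ih (by omega), mul_zero]

theorem mem_allMons {V d : ℕ} {l : List ℕ} :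
    l ∈ allMons V d ↔ ∃ a : Fin V → ℕ, ∑ i, a i = d ∧ l = List.ofFn a := by
  induction V generalizing d l with
  | zero =>
    cases d with
    | zero => simp [allMons]
    | succ d => simp [allMons]
  | succ V ih =>
    rw [allMons, List.mem_flatMap]
    simp only [List.mem_map, List.mem_range, ih]
    constructor
    · rintro ⟨b, hb, _, ⟨a, ha, rfl⟩, rfl⟩
      refine ⟨Fin.cons b a, ?_, by simp [List.ofFn_succ]⟩
      rw [Fin.sum_univ_succ]
      simp [ha]; omega
    · rintro ⟨a, ha, rfl⟩
      rw [Fin.sum_univ_succ] at ha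
      exact ⟨a 0, by omega, _, ⟨fun i => a i.succ, by dsimp only; omega, rfl⟩, by rw [List.ofFn_succ]⟩

theorem nodup_allMons (V d : ℕ) : (allMons V d).Nodup := by
  induction V generalizing d with
  | zero => cases d <;> simp [allMons]
  | succ V ih =>
    rw [allMons, List.nodup_flatMap]
    refine ⟨fun a _ => (ih _).map (List.cons_injective), ?_⟩
    refine (List.nodup_range).imp ?_
    intro a b hab l hl hl'
    simp only [List.mem_map] at hl hl'
    obtain ⟨_, _, rfl⟩ := hl
    obtain ⟨_, _, h⟩ := hl'
    exact hab (List.cons_eq_cons.1 h).1.symm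

/-- The exponent vector with entries `l`. -/
noncomputable def listExp (V : ℕ) (l : List ℕ) : Fin V →₀ ℕ :=
  Finsupp.equivFunOnFinite.symm fun i => l.getD i 0

theorem listExp_ofFn {V : ℕ} (α : Fin V →₀ ℕ) : listExp V (List.ofFn α) = α := by
  ext i; simp [listExp]

theorem ofFn_listExp {V : ℕ} {l : List ℕ} (h : l.length = V) : List.ofFn (listExp V l) = l := by
  subst h
  apply List.ext_getElem <;> simp [listExp]

/-- A successful certificate bounds the dimension of the corresponding system by the number of
discarded monomials `dr`. -/
theorem dimLE_of_certify {K : Type} [Field K] [CharZero K] {V d : ℕ} {pred : List ℕ → Bool}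
    {pts dr : List (List ℕ)} {rows : List (ℕ × ℕ)} (h : certify V d pred pts dr rows = true)
    {E : Set (Fin V →₀ ℕ)} (hE : ∀ α ∈ E, α.degree = d ∧ pred (List.ofFn α) = true) :
    DimLE (sing E fun (j : Fin pts.length) (i : Fin V) => ((pts[j].getD i 0 : ℕ) : K)) dr.length := by
  classical
  simp only [certify, Bool.and_eq_true, beq_iff_eq, decide_eq_true_eq, List.all_eq_true] at h
  obtain ⟨⟨⟨hlen, hn⟩, hpts⟩, hsolve⟩ := h
  have hnd : ((allMons V d).filter pred).Nodup := (nodup_allMons V d).filter _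
  have hml : ∀ l ∈ (allMons V d).filter pred, l.length = V := by
    intro l hl
    obtain ⟨a, _, rfl⟩ := mem_allMons.1 (List.mem_filter.1 hl).1
    simp
  have hmem : ∀ α ∈ E, List.ofFn α ∈ (allMons V d).filter pred := by
    intro α hα
    refine List.mem_filter.2 ⟨mem_allMons.2 ⟨α, ?_, rfl⟩, (hE α hα).2⟩
    rw [← (hE α hα).1, Finsupp.degree_eq_sum]
  generalize (allMons V d).filter pred = mons at *
  have hml' : ∀ j : Fin mons.length, mons[j].length = V := fun j => hml _ (List.getElem_mem _)
  refine ⟨fun t => lcoeff K (listExp V dr[t]), fun G hG h0 => ?_⟩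
  rw [mem_sing] at hG
  have hGsum : G = ∑ j : Fin mons.length, monomial (listExp V mons[j]) (coeff (listExp V mons[j]) G) := by
    ext α
    rw [coeff_sum]
    simp only [coeff_monomial]
    by_cases hα : coeff α G = 0
    · rw [hα, Finset.sum_eq_zero]
      intro j _
      split_ifs with hj
      · rw [hj, hα]
      · rfl
    · obtain ⟨j, hj, hjα⟩ := List.getElem_of_mem (hmem α (mem_rs.1 hG.1 α hα))
      rw [Finset.sum_eq_single ⟨j, hj⟩]
      · simp [hjα, listExp_ofFn]
      · intro i _ hij
        rw [if_neg]
        intro hiα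
        apply hij
        have : mons[i] = mons[j] := by
          rw [hjα, ← hiα, ofFn_listExp (hml' _)]
        exact Fin.ext ((hnd.getElem_inj_iff).1 this)
      · intro h; exact absurd (Finset.mem_univ _) h
  have key := injective_of_solveRows (K := K) hn
    (fun k j => rowEntry pts dr (rows[k.1]'(by have := k.2; omega)) mons[j]) (by
      convert hsolve using 2
      apply List.ext_getElem
      · simp [hlen]
      · intro k h1 h2
        simp only [List.getElem_ofFn, List.getElem_map]
        congr 1
        apply List.ext_getElem
        · simp
        · intro i hi hi'
          simp only [List.getElem_ofFn, List.getElem_map]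
          rfl)
    (fun j => coeff (listExp V mons[j]) G) (by
      intro k
      generalize rows[k.1]'(by have := k.2; omega) = r
      unfold rowEntry
      split
      case h_1 x hx =>
        obtain ⟨hr1, rfl⟩ := List.getElem?_eq_some_iff.1 hx
        by_cases hr2 : r.2 < V
        · have := hG.2 ⟨r.1, hr1⟩ ⟨r.2, hr2⟩
          rw [hGsum, map_sum, map_sum] at this
          rw [← this]
          refine Finset.sum_congr rfl fun j _ => ?_
          rw [pderiv_monomial, eval_monomial, Finsupp.prod_fintype _ _ (by simp)]
          have e := dmonVal_ofFn (fun i : Fin V => pts[r.1].getD i 0) (listExp V mons[j]) ⟨r.2, hr2⟩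
          rw [ofFn_listExp (hml' _)] at e
          have e2 : (List.ofFn fun i : Fin V => pts[r.1].getD i 0) = pts[r.1] := by
            have := hpts pts[r.1] (List.getElem_mem _)
            apply List.ext_getElem <;> simp [this]
          rw [e2] at e
          simp only [e]
          push_cast
          simp only [Finsupp.coe_tsub, Pi.sub_apply, Finsupp.single_apply]
          rw [mul_comm, mul_assoc]
          congr 2
          refine Finset.prod_congr rfl fun i _ => ?_
          congr 2
          simp only [eq_comm]
        · apply Finset.sum_eq_zero
          intro j _
          rw [dmonVal_of_le (by rw [hml']; omega), Nat.cast_zero, zero_mul]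
      case h_2 hx =>
        apply Finset.sum_eq_zero
        intro j _
        split_ifs with hj
        · obtain ⟨ht, hj⟩ := List.getElem?_eq_some_iff.1 hj
          have := h0 ⟨r.2, ht⟩
          simp only [lcoeff_apply, Fin.getElem_fin] at this
          rw [← hj, this, mul_zero]
        · simp)
  rw [hGsum]
  refine Finset.sum_eq_zero fun j _ => ?_
  rw [congrFun key j, Pi.zero_apply, map_zero]

/-- Transport of a linear system along a relabelling of the variables. -/
theorem Good.transport {K : Type} [Field K] {σ : Type} [Fintype σ] [DecidableEq σ] {V : ℕ} {ι : Type}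
    (e : Fin V ↪ σ) {E : Set (Fin V →₀ ℕ)} {E' : Set (σ →₀ ℕ)} {M : ι → Finset σ} {m : ℕ}
    (p : ι → Fin V → K) (h : DimLE (sing E p) m)
    (hE : ∀ α' ∈ E', ∃ α ∈ E, α' = α.mapDomain e)
    (hM : ∀ j i, e i ∈ M j → p j i = 0) : Good K E' M m := by
  have hex : ∀ G ∈ restrictSupport K E', ∃ H : MvPolynomial (Fin V) K, rename e H = G := by
    intro G hG
    refine exists_rename_eq_of_vars_subset_range G e e.injective ?_
    intro s hs
    obtain ⟨α, hα, hsα⟩ := (mem_vars_iff_mem_support s).1 (Finset.mem_coe.1 hs)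
    obtain ⟨β, _, rfl⟩ := hE α (mem_rs.1 hG α (by simpa using hα))
    by_contra hs'
    rw [Finsupp.mem_support_iff] at hsα
    exact hsα (Finsupp.mapDomain_of_notMem_range _ _ hs')
  refine ⟨fun j => Function.extend e (p j) 0, DimLE.comap h
    (killCompl e.injective).toLinearMap (fun G hG => ?_) (fun G hG h0 => ?_)⟩
  · rw [mem_sing] at hG ⊢
    obtain ⟨H, rfl⟩ := hex G hG.1
    rw [AlgHom.toLinearMap_apply, killCompl_rename_app]
    refine ⟨mem_rs.2 fun α hα => ?_, fun j i => ?_⟩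
    · rw [← coeff_rename_mapDomain e e.injective] at hα
      obtain ⟨β, hβ, hab⟩ := hE _ (mem_rs.1 hG.1 _ hα)
      rw [Finsupp.mapDomain_injective e.injective hab]
      exact hβ
    · have := hG.2 j (e i)
      rw [pderiv_rename e.injective, eval_rename] at this
      convert this using 2
      congr 1
      ext s
      simp only [Function.comp_apply, mask_apply, e.injective.extend_apply]
      split_ifs with hs
      · exact hM j s hs
      · rfl
  · obtain ⟨H, rfl⟩ := hex G (mem_sing.1 hG).1
    rw [AlgHom.toLinearMap_apply, killCompl_rename_app] at h0
    rw [h0, map_zero]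

end Certificates

/-! ### Certificates for blocks of variables -/

section Blocks
variable {K : Type} [Field K] {σ : Type} [Fintype σ] [DecidableEq σ]

/-- An enumeration of three disjoint blocks of variables. -/
theorem exists_block_enum {X Y W : Finset σ} (hXY : Disjoint X Y) (hXW : Disjoint X W)
    (hYW : Disjoint Y W) {a b c V : ℕ} (ha : X.card = a) (hb : Y.card = b) (hc : W.card = c)
    (hV : a + b + c = V) :
    ∃ e : Fin V ↪ σ, (∀ i, e i ∈ X ↔ i.1 < a) ∧ (∀ i, e i ∈ Y ↔ a ≤ i.1 ∧ i.1 < a + b) ∧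
      (∀ i, e i ∈ W ↔ a + b ≤ i.1) ∧ ∀ s ∈ X ∪ (Y ∪ W), ∃ i, e i = s := by
  subst hV
  have eX := Finset.equivFinOfCardEq ha
  have eY := Finset.equivFinOfCardEq hb
  have eW := Finset.equivFinOfCardEq hc
  let f : Fin (a + b + c) → σ := Fin.addCases (Fin.addCases (fun i => (eX.symm i).1)
    (fun i => (eY.symm i).1)) (fun i => (eW.symm i).1)
  have fX : ∀ i, f (Fin.castAdd c (Fin.castAdd b i)) = (eX.symm i).1 := fun i => by simp [f]
  have fY : ∀ i, f (Fin.castAdd c (Fin.natAdd a i)) = (eY.symm i).1 := fun i => by simp [f]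
  have fW : ∀ i, f (Fin.natAdd (a + b) i) = (eW.symm i).1 := fun i => by simp [f]
  have nXY : ∀ s, s ∈ X → s ∉ Y := fun s h h' => Finset.disjoint_left.1 hXY h h'
  have nXW : ∀ s, s ∈ X → s ∉ W := fun s h h' => Finset.disjoint_left.1 hXW h h'
  have nYW : ∀ s, s ∈ Y → s ∉ W := fun s h h' => Finset.disjoint_left.1 hYW h h'
  have mX : ∀ i, f (Fin.castAdd c (Fin.castAdd b i)) ∈ X := fun i => by
    rw [fX]; exact (eX.symm i).2
  have mY : ∀ i, f (Fin.castAdd c (Fin.natAdd a i)) ∈ Y := fun i => by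
    rw [fY]; exact (eY.symm i).2
  have mW : ∀ i, f (Fin.natAdd (a + b) i) ∈ W := fun i => by
    rw [fW]; exact (eW.symm i).2
  clear_value f
  refine ⟨⟨f, ?_⟩, ?_, ?_, ?_, ?_⟩
  · intro i j
    refine Fin.addCases (fun i => ?_) (fun i => ?_) i
    · refine Fin.addCases (fun i => ?_) (fun i => ?_) i
      · refine Fin.addCases (fun j => ?_) (fun j => ?_) j
        · refine Fin.addCases (fun j => ?_) (fun j => ?_) j
          · intro h
            rw [fX, fX] at h
            rw [eX.symm.injective (Subtype.ext h)]
          · intro h; exact absurd (h ▸ mX i) fun h' => nXY _ h' (mY j)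
        · intro h; exact absurd (h ▸ mX i) fun h' => nXW _ h' (mW j)
      · refine Fin.addCases (fun j => ?_) (fun j => ?_) j
        · refine Fin.addCases (fun j => ?_) (fun j => ?_) j
          · intro h; exact absurd (h ▸ mY i) (nXY _ (mX j))
          · intro h
            rw [fY, fY] at h
            rw [eY.symm.injective (Subtype.ext h)]
        · intro h; exact absurd (h ▸ mY i) fun h' => nYW _ h' (mW j)
    · refine Fin.addCases (fun j => ?_) (fun j => ?_) j
      · refine Fin.addCases (fun j => ?_) (fun j => ?_) j
        · intro h; exact absurd (h ▸ mW i) (nXW _ (mX j))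
        · intro h; exact absurd (h ▸ mW i) (nYW _ (mY j))
      · intro h
        rw [fW, fW] at h
        rw [eW.symm.injective (Subtype.ext h)]
  · intro i
    change f i ∈ X ↔ i.1 < a
    refine Fin.addCases (fun i => ?_) (fun i => ?_) i
    · refine Fin.addCases (fun i => ?_) (fun i => ?_) i
      · exact iff_of_true (mX i) i.2
      · exact iff_of_false (fun h => nXY _ h (mY i)) (by
          rw [Fin.val_castAdd, Fin.val_natAdd]; omega)
    · exact iff_of_false (fun h => nXW _ h (mW i)) (by rw [Fin.val_natAdd]; omega)
  · intro i
    change f i ∈ Y ↔ a ≤ i.1 ∧ i.1 < a + b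
    refine Fin.addCases (fun i => ?_) (fun i => ?_) i
    · refine Fin.addCases (fun i => ?_) (fun i => ?_) i
      · have := i.2
        exact iff_of_false (nXY _ (mX i)) (by rw [Fin.val_castAdd, Fin.val_castAdd]; omega)
      · have := i.2
        exact iff_of_true (mY i) (by rw [Fin.val_castAdd, Fin.val_natAdd]; omega)
    · exact iff_of_false (fun h => nYW _ h (mW i)) (by rw [Fin.val_natAdd]; omega)
  · intro i
    change f i ∈ W ↔ a + b ≤ i.1
    refine Fin.addCases (fun i => ?_) (fun i => ?_) i
    · have := i.2
      refine iff_of_false ?_ (by rw [Fin.val_castAdd]; omega)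
      refine Fin.addCases (fun i => ?_) (fun i => ?_) i
      · exact nXW _ (mX i)
      · exact nYW _ (mY i)
    · exact iff_of_true (mW i) (by rw [Fin.val_natAdd]; omega)
  · intro s hs
    rw [Finset.mem_union, Finset.mem_union] at hs
    rcases hs with hs | hs | hs
    · exact ⟨Fin.castAdd c (Fin.castAdd b (eX ⟨s, hs⟩)), (fX _).trans (by
        rw [Equiv.symm_apply_apply])⟩
    · exact ⟨Fin.castAdd c (Fin.natAdd a (eY ⟨s, hs⟩)), (fY _).trans (by
        rw [Equiv.symm_apply_apply])⟩
    · exact ⟨Fin.natAdd (a + b) (eW ⟨s, hs⟩), (fW _).trans (by rw [Equiv.symm_apply_apply])⟩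

/-- Exponents of degree `d` in the variables `S` which involve each of the blocks `X`, `Y`, `Z` that
is selected by the corresponding flag. -/
def bexpo (S : Finset σ) (d : ℕ) (fX : Bool) (X : Finset σ) (fY : Bool) (Y : Finset σ) (fZ : Bool)
    (Z : Finset σ) : Set (σ →₀ ℕ) :=
  {α ∈ expo S d | (fX = true → ∃ i ∈ X, α i ≠ 0) ∧ (fY = true → ∃ i ∈ Y, α i ≠ 0) ∧
    (fZ = true → ∃ i ∈ Z, α i ≠ 0)}

theorem bexpo_finite (S : Finset σ) (d : ℕ) (fX : Bool) (X : Finset σ) (fY : Bool) (Y : Finset σ)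
    (fZ : Bool) (Z : Finset σ) : (bexpo S d fX X fY Y fZ Z).Finite :=
  (expo_finite S d).subset (Set.sep_subset _ _)

/-- The list of exponents `l` involves one of the variables with index in `[a, b)`. -/
def involves (a b : ℕ) (l : List ℕ) : Bool := ((l.drop a).take (b - a)).any fun x => !Nat.beq x 0

theorem involves_ofFn {V a b : ℕ} {α : Fin V → ℕ} {i : Fin V} (h1 : a ≤ i.1) (h2 : i.1 < b)
    (h : α i ≠ 0) : involves a b (List.ofFn α) = true := by
  rw [involves, List.any_eq_true]
  refine ⟨α i, ?_, by cases hα : Nat.beq (α i) 0 with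
    | false => rfl
    | true => exact absurd (Nat.eq_of_beq_eq_true hα) h⟩
  rw [List.mem_iff_getElem]
  refine ⟨i - a, by simp; omega, ?_⟩
  simp only [List.getElem_take, List.getElem_drop, List.getElem_ofFn]
  congr 1
  ext
  simp; omega

/-- The points of the list vanish on the coordinates with index in `[a, b)`. -/
def vanishOn (a b : ℕ) (pts : List (List ℕ)) : Bool :=
  pts.all fun x => (List.range (b - a)).all fun i => Nat.beq (x.getD (a + i) 0) 0

theorem vanishOn_spec {a b : ℕ} {pts : List (List ℕ)} (h : vanishOn a b pts = true) {x : List ℕ}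
    (hx : x ∈ pts) {i : ℕ} (h1 : a ≤ i) (h2 : i < b) : x.getD i 0 = 0 := by
  rw [vanishOn, List.all_eq_true] at h
  have := h x hx
  rw [List.all_eq_true] at this
  have := this (i - a) (by simp; omega)
  rw [Nat.beq_eq] at this
  rwa [Nat.add_sub_cancel' h1] at this

variable (K) in
/-- `n₁`, `n₂`, `n₃` suitable points on the coordinate subspaces given by the vanishing of the variables
in `X`, `Y`, `Z` leave a system of dimension at most `m`. -/
def Good3 (E : Set (σ →₀ ℕ)) (n₁ : ℕ) (X : Finset σ) (n₂ : ℕ) (Y : Finset σ) (n₃ : ℕ) (Z : Finset σ)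
    (m : ℕ) : Prop :=
  Good K E (Sum.elim (fun _ : Fin n₁ => X) (Sum.elim (fun _ : Fin n₂ => Y) fun _ : Fin n₃ => Z)) m

/-- Base cases by computation: monomials are selected by the flags, and the points of the lists `pX`,
`pY`, `pZ` lie on the coordinate subspaces of the first, second and third block. If the flag `free` is
set, the points of the last list are unconstrained instead. -/
theorem good3_of_certify [CharZero K] {X Y W : Finset σ} (hXY : Disjoint X Y) (hXW : Disjoint X W)
    (hYW : Disjoint Y W) {a b c V d : ℕ} (ha : X.card = a) (hb : Y.card = b) (hc : W.card = c)
    (hV : a + b + c = V) (fX fY fW free : Bool) {pX pY pZ dr : List (List ℕ)} {rows : List (ℕ × ℕ)}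
    (h : ((vanishOn 0 a pX && vanishOn a (a + b) pY && (free || vanishOn (a + b) V pZ)) &&
      certify V d (fun l => (!fX || involves 0 a l) && (!fY || involves a (a + b) l) &&
        (!fW || involves (a + b) V l)) (pX ++ (pY ++ pZ)) dr rows) = true) :
    Good3 K (bexpo (X ∪ (Y ∪ W)) d fX X fY Y fW W) pX.length X pY.length Y pZ.length
      (if free then ∅ else W) dr.length := by
  rw [Bool.and_eq_true, Bool.and_eq_true, Bool.and_eq_true] at h
  obtain ⟨⟨⟨vX, vY⟩, vZ⟩, h⟩ := h
  obtain ⟨e, eX, eY, eW, eS⟩ := exists_block_enum hXY hXW hYW ha hb hc hV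
  have key := dimLE_of_certify (K := K) h (E := {α | α.mapDomain e ∈
    bexpo (X ∪ (Y ∪ W)) d fX X fY Y fW W}) (by
      intro α hα
      have back : ∀ s, α.mapDomain e s ≠ 0 → ∃ i, e i = s ∧ α i ≠ 0 := by
        intro s hs
        by_cases hs' : s ∈ Set.range e
        · obtain ⟨i, rfl⟩ := hs'
          exact ⟨i, rfl, by rwa [Finsupp.mapDomain_apply e.injective] at hs⟩
        · exact absurd (Finsupp.mapDomain_of_notMem_range _ _ hs') hs
      obtain ⟨h1, hX, hY, hW⟩ := hα
      refine ⟨?_, ?_⟩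
      · rw [← h1.2, Finsupp.degree_mapDomain]
      · simp only [Bool.and_eq_true, Bool.or_eq_true, Bool.not_eq_true']
        refine ⟨⟨?_, ?_⟩, ?_⟩
        · cases hf : fX
          · simp
          · obtain ⟨s, hs, hs'⟩ := hX hf
            obtain ⟨i, rfl, hi⟩ := back s hs'
            exact Or.inr (involves_ofFn (Nat.zero_le _) ((eX i).1 hs) hi)
        · cases hf : fY
          · simp
          · obtain ⟨s, hs, hs'⟩ := hY hf
            obtain ⟨i, rfl, hi⟩ := back s hs'
            exact Or.inr (involves_ofFn ((eY i).1 hs).1 ((eY i).1 hs).2 hi)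
        · cases hf : fW
          · simp
          · obtain ⟨s, hs, hs'⟩ := hW hf
            obtain ⟨i, rfl, hi⟩ := back s hs'
            exact Or.inr (involves_ofFn ((eW i).1 hs) i.2 hi))
  let pt : Fin pX.length ⊕ (Fin pY.length ⊕ Fin pZ.length) → List ℕ :=
    Sum.elim (fun j => pX[j]) (Sum.elim (fun j => pY[j]) fun j => pZ[j])
  refine Good.transport e (E := {α | α.mapDomain e ∈ bexpo (X ∪ (Y ∪ W)) d fX X fY Y fW W})
    (p := fun j i => ((pt j).getD i 0 : ℕ)) (key.mono ?_ le_rfl) ?_ ?_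
  · intro G hG
    rw [mem_sing] at hG ⊢
    refine ⟨hG.1, fun j i => ?_⟩
    have hj : (pX ++ (pY ++ pZ))[j] ∈ pX ++ (pY ++ pZ) := List.getElem_mem _
    obtain ⟨j', hj'⟩ : ∃ j', pt j' = (pX ++ (pY ++ pZ))[j] := by
      rw [List.mem_append, List.mem_append] at hj
      rcases hj with hj | hj | hj
      · obtain ⟨k, hk, hkj⟩ := List.getElem_of_mem hj
        exact ⟨Sum.inl ⟨k, hk⟩, hkj⟩
      · obtain ⟨k, hk, hkj⟩ := List.getElem_of_mem hj
        exact ⟨Sum.inr (Sum.inl ⟨k, hk⟩), hkj⟩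
      · obtain ⟨k, hk, hkj⟩ := List.getElem_of_mem hj
        exact ⟨Sum.inr (Sum.inr ⟨k, hk⟩), hkj⟩
    have := hG.2 j' i
    rwa [hj'] at this
  · intro α' hα'
    have hr : (α'.support : Set σ) ⊆ Set.range e := by
      intro s hs
      exact eS s (hα'.1.1 s (by simpa using hs))
    refine ⟨α'.comapDomain e e.injective.injOn, ?_, (Finsupp.mapDomain_comapDomain e e.injective α' hr).symm⟩
    rw [Set.mem_ofPred_eq, Finsupp.mapDomain_comapDomain e e.injective α' hr]
    exact hα'
  · rintro (j | j | j) i hi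
    · have : pX[j].getD i 0 = 0 := vanishOn_spec vX (List.getElem_mem _) (Nat.zero_le _) ((eX i).1 hi)
      exact_mod_cast this
    · have : pY[j].getD i 0 = 0 :=
        vanishOn_spec vY (List.getElem_mem _) ((eY i).1 hi).1 ((eY i).1 hi).2
      exact_mod_cast this
    · have : pZ[j].getD i 0 = 0 := by
        cases free
        · exact vanishOn_spec (by simpa using vZ) (List.getElem_mem _)
            ((eW i).1 (by simpa using hi)) i.2
        · simp at hi
      exact_mod_cast this

end Blocks

/-! ### The initial cases -/

section Certificates
variable {K : Type} [Field K] {σ : Type} [Fintype σ] [DecidableEq σ]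

/-- The case of certificates in which no blocks of variables are distinguished. -/
theorem AH.of_good3 {S : Finset σ} {d k m : ℕ}
    (h : Good3 K (bexpo (∅ ∪ (∅ ∪ S)) d false ∅ false ∅ false S) 0 ∅ 0 ∅ k ∅ m) : AH K S d k m := by
  rw [Finset.empty_union, Finset.empty_union] at h
  exact Good.mono h (fun α hα => ⟨hα, by simp, by simp, by simp⟩) ⟨fun j => match j with
    | .inr (.inr j) => j
    | .inl j => j.elim0
    | .inr (.inl j) => j.elim0, by
      rintro (i | i | i) (j | j | j) h <;>
        first | exact i.elim0 | exact j.elim0 | exact congrArg (fun x => Sum.inr (Sum.inr x)) h⟩ (by simp) le_rfl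

set_option maxHeartbeats 0 in
/-- The system in `3 + 3 + 3` variables to which the induction on blocks reduces: its monomials are the
products of one variable from each block. -/
theorem base_C [CharZero K] {X Y W : Finset σ} (hXY : Disjoint X Y) (hXW : Disjoint X W)
    (hYW : Disjoint Y W) (ha : X.card = 3) (hb : Y.card = 3) (hc : W.card = 3) :
    Good3 K (bexpo (X ∪ (Y ∪ W)) 3 true X true Y true W) 3 X 3 Y 3 W 0 :=
  good3_of_certify hXY hXW hYW (V := 9) ha hb hc rfl true true true false
      (pX := [[0, 0, 0, 3, 0, 0, 1, 1, 2], [0, 0, 0, 0, 0, 3, 0, 0, 3], [0, 0, 0, 2, 1, 2, 3, 3,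
        1]])
      (pY := [[2, 1, 3, 0, 0, 0, 1, 3, 0], [3, 3, 2, 0, 0, 0, 0, 1, 3], [0, 1, 2, 0, 0, 0, 0, 1,
        2]])
      (pZ := [[1, 2, 1, 3, 1, 0, 0, 0, 0], [3, 3, 1, 1, 1, 3, 0, 0, 0], [3, 2, 3, 1, 2, 2, 0, 0,
        0]])
      (dr := [])
      (rows := [(0, 0), (3, 3), (2, 0), (3, 4), (4, 3), (4, 4), (3, 5), (4, 5), (1, 0), (0, 1),
        (5, 3), (2, 1), (6, 6), (5, 4), (6, 7), (6, 8), (5, 5), (1, 1), (0, 2), (7, 6), (2, 2),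
        (7, 7), (7, 8), (8, 6), (8, 7), (8, 8), (1, 2)])
    (by decide +kernel)

set_option maxHeartbeats 0 in
/-- The case `w = 0` of `TwoBlocks`. -/
theorem base_B0 [CharZero K] {X Y W : Finset σ} (hXY : Disjoint X Y) (hXW : Disjoint X W)
    (hYW : Disjoint Y W) (ha : X.card = 3) (hb : Y.card = 3) (hc : W.card = 0) :
    Good3 K (bexpo (X ∪ (Y ∪ W)) 3 true X true Y false W) 3 X 3 Y 3 ∅ 0 :=
  good3_of_certify hXY hXW hYW (V := 6) ha hb hc rfl true true false true
      (pX := [[0, 0, 0, 3, 0, 3], [0, 0, 0, 3, 3, 2], [0, 0, 0, 1, 1, 2]])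
      (pY := [[1, 1, 3, 0, 0, 0], [2, 0, 1, 0, 0, 0], [0, 0, 2, 0, 0, 0]])
      (pZ := [[3, 1, 0, 0, 3, 2], [1, 2, 0, 3, 1, 1], [2, 3, 0, 2, 2, 2]])
      (dr := [])
      (rows := [(3, 3), (3, 4), (3, 5), (4, 3), (4, 4), (4, 5), (6, 3), (6, 0), (6, 4), (0, 0),
        (1, 0), (2, 0), (6, 1), (7, 0), (7, 1), (7, 2), (6, 2), (7, 3), (7, 4), (6, 5), (8, 0),
        (0, 1), (1, 1), (2, 1), (7, 5), (8, 1), (8, 2), (5, 3), (5, 4), (5, 5), (0, 2), (1, 2),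
        (2, 2), (8, 3), (8, 4), (8, 5)])
    (by decide +kernel)

set_option maxHeartbeats 0 in
/-- The case `w = 1` of `TwoBlocks`. -/
theorem base_B1 [CharZero K] {X Y W : Finset σ} (hXY : Disjoint X Y) (hXW : Disjoint X W)
    (hYW : Disjoint Y W) (ha : X.card = 3) (hb : Y.card = 3) (hc : W.card = 1) :
    Good3 K (bexpo (X ∪ (Y ∪ W)) 3 true X true Y false W) 4 X 4 Y 3 ∅ 0 :=
  good3_of_certify hXY hXW hYW (V := 7) ha hb hc rfl true true false true
      (pX := [[0, 0, 0, 2, 1, 0, 2], [0, 0, 0, 1, 2, 1, 0], [0, 0, 0, 2, 3, 0, 3], [0, 0, 0, 2,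
        1, 1, 0]])
      (pY := [[0, 2, 0, 0, 0, 0, 1], [3, 0, 3, 0, 0, 0, 0], [2, 2, 1, 0, 0, 0, 0], [1, 3, 2, 0,
        0, 0, 3]])
      (pZ := [[1, 2, 1, 0, 3, 1, 0], [1, 0, 0, 0, 1, 2, 0], [3, 3, 0, 0, 1, 3, 2]])
      (dr := [])
      (rows := [(5, 3), (5, 4), (5, 5), (6, 3), (6, 4), (6, 5), (7, 3), (7, 4), (7, 5), (0, 0),
        (1, 0), (2, 0), (3, 0), (8, 0), (8, 3), (8, 1), (8, 4), (9, 0), (4, 3), (4, 4), (4, 5),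
        (9, 1), (8, 2), (9, 2), (0, 1), (1, 1), (2, 1), (3, 1), (8, 5), (9, 3), (8, 6), (9, 4),
        (9, 6), (10, 0), (9, 5), (10, 1), (0, 2), (1, 2), (2, 2), (3, 2), (10, 2), (10, 3), (10,
        4), (10, 5), (10, 6)])
    (by decide +kernel)

set_option maxHeartbeats 0 in
/-- The case `w = 2` of `TwoBlocks`. -/
theorem base_B2 [CharZero K] {X Y W : Finset σ} (hXY : Disjoint X Y) (hXW : Disjoint X W)
    (hYW : Disjoint Y W) (ha : X.card = 3) (hb : Y.card = 3) (hc : W.card = 2) :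
    Good3 K (bexpo (X ∪ (Y ∪ W)) 3 true X true Y false W) 5 X 5 Y 3 ∅ 0 :=
  good3_of_certify hXY hXW hYW (V := 8) ha hb hc rfl true true false true
      (pX := [[0, 0, 0, 3, 2, 3, 2, 0], [0, 0, 0, 2, 0, 2, 2, 3], [0, 0, 0, 0, 1, 0, 2, 2], [0,
        0, 0, 2, 0, 3, 3, 0], [0, 0, 0, 2, 3, 2, 0, 2]])
      (pY := [[0, 0, 2, 0, 0, 0, 1, 1], [2, 3, 2, 0, 0, 0, 1, 2], [3, 0, 3, 0, 0, 0, 1, 0], [0,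
        3, 3, 0, 0, 0, 1, 2], [3, 0, 1, 0, 0, 0, 1, 3]])
      (pZ := [[3, 2, 2, 2, 2, 2, 3, 1], [2, 3, 3, 0, 1, 1, 0, 1], [3, 1, 3, 2, 3, 3, 1, 1]])
      (dr := [])
      (rows := [(6, 3), (6, 4), (6, 5), (7, 3), (7, 4), (7, 5), (9, 3), (9, 4), (9, 5), (0, 0),
        (1, 0), (3, 0), (4, 0), (10, 0), (2, 0), (10, 3), (10, 1), (10, 2), (11, 0), (11, 1),
        (11, 2), (8, 3), (8, 4), (8, 5), (10, 4), (10, 5), (11, 3), (0, 1), (1, 1), (3, 1), (4,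
        1), (10, 6), (2, 1), (11, 4), (10, 7), (11, 5), (11, 6), (12, 0), (12, 1), (5, 3), (5,
        4), (5, 5), (0, 2), (1, 2), (3, 2), (4, 2), (12, 2), (2, 2), (11, 7), (12, 3), (12, 4),
        (12, 5), (12, 6), (12, 7)])
    (by decide +kernel)

set_option maxHeartbeats 0 in
theorem base_A4 [CharZero K] {X W : Finset σ} (hXW : Disjoint X W) (ha : X.card = 3) (hc : W.card = 1) :
    Good3 K (bexpo (X ∪ (∅ ∪ W)) 3 true X false ∅ false W) 1 X 0 ∅ 4 ∅ 0 :=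
  good3_of_certify (Finset.disjoint_empty_right X) hXW (Finset.disjoint_empty_left W) (V := 4)
    ha Finset.card_empty hc rfl true false false true
      (pX := [[0, 0, 0, 1]])
      (pY := [])
      (pZ := [[0, 1, 2, 0], [2, 1, 2, 2], [1, 0, 3, 3], [3, 1, 3, 2]])
      (dr := [])
      (rows := [(2, 0), (2, 1), (2, 2), (2, 3), (1, 0), (3, 0), (3, 2), (3, 3), (4, 0), (0, 0),
        (1, 1), (1, 2), (1, 3), (3, 1), (4, 1), (0, 1), (4, 2), (4, 3), (0, 2)])
    (by decide +kernel)

set_option maxHeartbeats 0 in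
theorem base_A6 [CharZero K] {X W : Finset σ} (hXW : Disjoint X W) (ha : X.card = 3) (hc : W.card = 3) :
    Good3 K (bexpo (X ∪ (∅ ∪ W)) 3 true X false ∅ false W) 4 X 0 ∅ 6 ∅ 0 :=
  good3_of_certify (Finset.disjoint_empty_right X) hXW (Finset.disjoint_empty_left W) (V := 6)
    ha Finset.card_empty hc rfl true false false true
      (pX := [[0, 0, 0, 3, 2, 1], [0, 0, 0, 0, 0, 2], [0, 0, 0, 3, 2, 2], [0, 0, 0, 1, 3, 1]])
      (pY := [])
      (pZ := [[1, 0, 3, 2, 0, 0], [1, 3, 3, 0, 2, 1], [3, 2, 1, 3, 0, 2], [3, 2, 3, 1, 0, 2],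
        [0, 1, 3, 1, 2, 1], [1, 3, 1, 2, 2, 0]])
      (dr := [])
      (rows := [(4, 0), (4, 1), (4, 2), (4, 3), (4, 4), (4, 5), (5, 0), (5, 1), (5, 2), (5, 3),
        (5, 4), (6, 0), (6, 1), (6, 2), (6, 3), (0, 0), (3, 0), (2, 0), (7, 0), (7, 1), (1, 0),
        (5, 5), (6, 4), (7, 2), (7, 3), (8, 0), (6, 5), (7, 4), (8, 1), (8, 2), (0, 1), (3, 1),
        (2, 1), (8, 3), (8, 4), (1, 1), (7, 5), (8, 5), (9, 0), (9, 1), (0, 2), (3, 2), (2, 2),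
        (9, 2), (9, 3), (1, 2)])
    (by decide +kernel)

set_option maxHeartbeats 0 in
theorem base_A8 [CharZero K] {X W : Finset σ} (hXW : Disjoint X W) (ha : X.card = 3) (hc : W.card = 5) :
    Good3 K (bexpo (X ∪ (∅ ∪ W)) 3 true X false ∅ false W) 7 X 0 ∅ 8 ∅ 0 :=
  good3_of_certify (Finset.disjoint_empty_right X) hXW (Finset.disjoint_empty_left W) (V := 8)
    ha Finset.card_empty hc rfl true false false true
      (pX := [[0, 0, 0, 3, 1, 0, 1, 3], [0, 0, 0, 2, 3, 2, 2, 3], [0, 0, 0, 0, 2, 2, 3, 3], [0,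
        0, 0, 0, 2, 1, 3, 3], [0, 0, 0, 1, 0, 3, 1, 3], [0, 0, 0, 0, 0, 3, 2, 3], [0, 0, 0, 1,
        1, 0, 0, 1]])
      (pY := [])
      (pZ := [[3, 0, 2, 1, 1, 2, 2, 1], [1, 0, 0, 3, 3, 1, 2, 1], [0, 3, 2, 0, 3, 0, 1, 1], [3,
        1, 3, 1, 1, 0, 3, 1], [3, 2, 0, 1, 1, 1, 0, 0], [2, 0, 3, 3, 2, 3, 2, 1], [3, 3, 2, 3,
        3, 1, 0, 0], [3, 3, 1, 3, 3, 1, 3, 3]])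
      (dr := [])
      (rows := [(7, 0), (7, 1), (7, 2), (7, 3), (7, 4), (7, 5), (7, 6), (7, 7), (9, 0), (8, 1),
        (10, 0), (10, 1), (10, 2), (10, 3), (10, 4), (8, 0), (8, 2), (8, 3), (8, 4), (8, 6), (8,
        7), (0, 0), (1, 0), (4, 0), (6, 0), (10, 5), (2, 0), (3, 0), (11, 0), (11, 1), (5, 0),
        (11, 2), (11, 3), (11, 4), (12, 0), (12, 1), (9, 1), (9, 2), (9, 3), (9, 4), (9, 5), (9,
        6), (9, 7), (10, 6), (10, 7), (11, 5), (12, 2), (12, 3), (12, 4), (0, 1), (1, 1), (4,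
        1), (6, 1), (11, 6), (2, 1), (3, 1), (11, 7), (12, 6), (5, 1), (13, 0), (13, 1), (13,
        2), (13, 3), (13, 4), (8, 5), (12, 5), (13, 5), (13, 6), (13, 7), (14, 0), (0, 2), (1,
        2), (4, 2), (6, 2), (12, 7), (2, 2), (3, 2), (14, 1), (14, 2), (5, 2), (14, 3), (14, 4),
        (14, 5), (14, 6), (14, 7)])
    (by decide +kernel)

set_option maxHeartbeats 0 in
theorem base_A3 [CharZero K] {X W : Finset σ} (hXW : Disjoint X W) (ha : X.card = 3) (hc : W.card = 0) :
    Good3 K (bexpo (X ∪ (∅ ∪ W)) 3 true X false ∅ false W) 0 X 0 ∅ 3 ∅ 1 :=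
  good3_of_certify (Finset.disjoint_empty_right X) hXW (Finset.disjoint_empty_left W) (V := 3)
    ha Finset.card_empty hc rfl true false false true
      (pX := [])
      (pY := [])
      (pZ := [[0, 0, 1], [2, 3, 2], [0, 3, 0]])
      (dr := [[1, 1, 1]])
      (rows := [(1, 0), (1, 1), (1, 2), (2, 0), (3, 0), (0, 0), (2, 1), (2, 2), (0, 1), (0, 2)])
    (by decide +kernel)

set_option maxHeartbeats 0 in
theorem base_1_3_1 [CharZero K] {S : Finset σ} (hS : S.card = 1) : AH K S 3 1 0 := by
  refine AH.of_good3 (good3_of_certify (Finset.disjoint_empty_left ∅) (Finset.disjoint_empty_left S)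
    (Finset.disjoint_empty_left S) (V := 1) Finset.card_empty Finset.card_empty hS rfl
    false false false true
      (pX := [])
      (pY := [])
      (pZ := [[1]])
      (dr := [])
      (rows := [(0, 0)])
    (by decide +kernel))

set_option maxHeartbeats 0 in
theorem base_2_3_2 [CharZero K] {S : Finset σ} (hS : S.card = 2) : AH K S 3 2 0 := by
  refine AH.of_good3 (good3_of_certify (Finset.disjoint_empty_left ∅) (Finset.disjoint_empty_left S)
    (Finset.disjoint_empty_left S) (V := 2) Finset.card_empty Finset.card_empty hS rfl
    false false false true
      (pX := [])
      (pY := [])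
      (pZ := [[1, 0], [0, 1]])
      (dr := [])
      (rows := [(0, 0), (0, 1), (1, 0), (1, 1)])
    (by decide +kernel))

set_option maxHeartbeats 0 in
theorem base_3_3_4 [CharZero K] {S : Finset σ} (hS : S.card = 3) : AH K S 3 4 0 := by
  refine AH.of_good3 (good3_of_certify (Finset.disjoint_empty_left ∅) (Finset.disjoint_empty_left S)
    (Finset.disjoint_empty_left S) (V := 3) Finset.card_empty Finset.card_empty hS rfl
    false false false true
      (pX := [])
      (pY := [])
      (pZ := [[1, 0, 0], [0, 1, 0], [0, 0, 1], [3, 1, 0]])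
      (dr := [])
      (rows := [(0, 0), (0, 1), (0, 2), (1, 0), (3, 2), (2, 0), (1, 1), (1, 2), (2, 1), (2, 2)])
    (by decide +kernel))

set_option maxHeartbeats 0 in
theorem base_5_3_6 [CharZero K] {S : Finset σ} (hS : S.card = 5) : AH K S 3 6 5 := by
  refine AH.of_good3 (good3_of_certify (Finset.disjoint_empty_left ∅) (Finset.disjoint_empty_left S)
    (Finset.disjoint_empty_left S) (V := 5) Finset.card_empty Finset.card_empty hS rfl
    false false false true
      (pX := [])
      (pY := [])
      (pZ := [[1, 0, 0, 0, 0], [0, 1, 0, 0, 0], [0, 0, 1, 0, 0], [0, 0, 0, 1, 0], [0, 0, 0, 0,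
        1], [2, 1, 1, 0, 2]])
      (dr := [[1, 0, 1, 1, 0], [1, 0, 0, 1, 1], [0, 1, 1, 1, 0], [0, 1, 0, 1, 1], [0, 0, 1, 1,
        1]])
      (rows := [(0, 0), (0, 1), (0, 2), (0, 3), (0, 4), (1, 0), (5, 0), (5, 3), (5, 2), (2, 0),
        (6, 0), (5, 1), (3, 0), (6, 1), (4, 0), (1, 1), (1, 2), (1, 3), (1, 4), (2, 1), (6, 2),
        (5, 4), (3, 1), (6, 3), (4, 1), (2, 2), (2, 3), (2, 4), (3, 2), (6, 4), (4, 2), (3, 3),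
        (3, 4), (4, 3), (4, 4)])
    (by decide +kernel))

set_option maxHeartbeats 0 in
theorem base_5_3_7 [CharZero K] {S : Finset σ} (hS : S.card = 5) : AH K S 3 7 1 := by
  refine AH.of_good3 (good3_of_certify (Finset.disjoint_empty_left ∅) (Finset.disjoint_empty_left S)
    (Finset.disjoint_empty_left S) (V := 5) Finset.card_empty Finset.card_empty hS rfl
    false false false true
      (pX := [])
      (pY := [])
      (pZ := [[1, 0, 0, 0, 0], [0, 1, 0, 0, 0], [0, 0, 1, 0, 0], [0, 0, 0, 1, 0], [0, 0, 0, 0,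
        1], [2, 1, 2, 2, 3], [1, 2, 3, 1, 2]])
      (dr := [[0, 0, 1, 1, 1]])
      (rows := [(0, 0), (0, 1), (0, 2), (0, 3), (0, 4), (1, 0), (5, 0), (5, 2), (5, 3), (2, 0),
        (5, 1), (6, 0), (3, 0), (6, 1), (4, 0), (1, 1), (1, 2), (1, 3), (1, 4), (2, 1), (5, 4),
        (6, 2), (3, 1), (6, 3), (4, 1), (2, 2), (2, 3), (2, 4), (3, 2), (7, 0), (4, 2), (3, 3),
        (3, 4), (4, 3), (4, 4)])
    (by decide +kernel))

set_option maxHeartbeats 0 in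
theorem base_5_3_8 [CharZero K] {S : Finset σ} (hS : S.card = 5) : AH K S 3 8 0 := by
  refine AH.of_good3 (good3_of_certify (Finset.disjoint_empty_left ∅) (Finset.disjoint_empty_left S)
    (Finset.disjoint_empty_left S) (V := 5) Finset.card_empty Finset.card_empty hS rfl
    false false false true
      (pX := [])
      (pY := [])
      (pZ := [[1, 0, 0, 0, 0], [0, 1, 0, 0, 0], [0, 0, 1, 0, 0], [0, 0, 0, 1, 0], [0, 0, 0, 0,
        1], [1, 2, 2, 0, 1], [1, 3, 1, 2, 2], [3, 1, 2, 0, 0]])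
      (dr := [])
      (rows := [(0, 0), (0, 1), (0, 2), (0, 3), (0, 4), (1, 0), (5, 0), (5, 3), (5, 2), (2, 0),
        (6, 0), (5, 1), (3, 0), (6, 1), (4, 0), (1, 1), (1, 2), (1, 3), (1, 4), (2, 1), (6, 2),
        (5, 4), (3, 1), (6, 3), (4, 1), (2, 2), (2, 3), (2, 4), (3, 2), (7, 3), (4, 2), (3, 3),
        (3, 4), (4, 3), (4, 4)])
    (by decide +kernel))

set_option maxHeartbeats 0 in
theorem base_8_3_15 [CharZero K] {S : Finset σ} (hS : S.card = 8) : AH K S 3 15 0 := by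
  refine AH.of_good3 (good3_of_certify (Finset.disjoint_empty_left ∅) (Finset.disjoint_empty_left S)
    (Finset.disjoint_empty_left S) (V := 8) Finset.card_empty Finset.card_empty hS rfl
    false false false true
      (pX := [])
      (pY := [])
      (pZ := [[1, 0, 0, 0, 0, 0, 0, 0], [0, 1, 0, 0, 0, 0, 0, 0], [0, 0, 1, 0, 0, 0, 0, 0], [0,
        0, 0, 1, 0, 0, 0, 0], [0, 0, 0, 0, 1, 0, 0, 0], [0, 0, 0, 0, 0, 1, 0, 0], [0, 0, 0, 0,
        0, 0, 1, 0], [0, 0, 0, 0, 0, 0, 0, 1], [2, 2, 2, 3, 2, 0, 2, 2], [2, 0, 2, 2, 3, 2, 0,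
        3], [0, 3, 0, 2, 3, 0, 1, 0], [2, 1, 3, 0, 1, 2, 0, 0], [2, 3, 0, 3, 1, 3, 2, 2], [1, 2,
        1, 1, 3, 1, 0, 0], [3, 0, 2, 2, 0, 3, 3, 0]])
      (dr := [])
      (rows := [(0, 0), (0, 1), (0, 2), (0, 3), (0, 4), (0, 5), (0, 6), (0, 7), (1, 0), (8, 0),
        (8, 2), (8, 3), (8, 5), (8, 4), (8, 6), (2, 0), (8, 1), (9, 0), (9, 3), (9, 4), (9, 5),
        (3, 0), (9, 1), (9, 2), (10, 0), (11, 0), (4, 0), (11, 1), (11, 2), (11, 3), (5, 0),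
        (11, 4), (12, 0), (6, 0), (12, 1), (7, 0), (1, 1), (1, 2), (1, 3), (1, 4), (1, 5), (1,
        6), (1, 7), (2, 1), (8, 7), (10, 2), (11, 5), (11, 6), (12, 2), (3, 1), (9, 6), (10, 1),
        (10, 4), (10, 5), (4, 1), (10, 7), (10, 3), (11, 7), (5, 1), (12, 3), (12, 4), (6, 1),
        (12, 5), (7, 1), (2, 2), (2, 3), (2, 4), (2, 5), (2, 6), (2, 7), (3, 2), (9, 7), (12,
        6), (13, 0), (12, 7), (4, 2), (13, 1), (13, 2), (13, 3), (5, 2), (13, 4), (13, 5), (6,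
        2), (14, 0), (7, 2), (3, 3), (3, 4), (3, 5), (3, 6), (3, 7), (4, 3), (13, 6), (10, 6),
        (13, 7), (5, 3), (14, 1), (14, 2), (6, 3), (14, 3), (7, 3), (4, 4), (4, 5), (4, 6), (4,
        7), (5, 4), (14, 4), (14, 5), (6, 4), (14, 6), (7, 4), (5, 5), (5, 6), (5, 7), (6, 5),
        (14, 7), (7, 5), (6, 6), (6, 7), (7, 6), (7, 7)])
    (by decide +kernel))

set_option maxHeartbeats 0 in
theorem base_3_4_4 [CharZero K] {S : Finset σ} (hS : S.card = 3) : AH K S 4 4 3 := by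
  refine AH.of_good3 (good3_of_certify (Finset.disjoint_empty_left ∅) (Finset.disjoint_empty_left S)
    (Finset.disjoint_empty_left S) (V := 3) Finset.card_empty Finset.card_empty hS rfl
    false false false true
      (pX := [])
      (pY := [])
      (pZ := [[1, 0, 0], [0, 1, 0], [0, 0, 1], [1, 2, 2]])
      (dr := [[2, 0, 2], [1, 1, 2], [0, 2, 2]])
      (rows := [(0, 0), (0, 1), (0, 2), (3, 0), (3, 1), (4, 0), (1, 0), (3, 2), (4, 1), (2, 0),
        (1, 1), (1, 2), (4, 2), (2, 1), (2, 2)])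
    (by decide +kernel))

set_option maxHeartbeats 0 in
theorem base_3_4_5 [CharZero K] {S : Finset σ} (hS : S.card = 3) : AH K S 4 5 1 := by
  refine AH.of_good3 (good3_of_certify (Finset.disjoint_empty_left ∅) (Finset.disjoint_empty_left S)
    (Finset.disjoint_empty_left S) (V := 3) Finset.card_empty Finset.card_empty hS rfl
    false false false true
      (pX := [])
      (pY := [])
      (pZ := [[1, 0, 0], [0, 1, 0], [0, 0, 1], [3, 1, 3], [1, 3, 1]])
      (dr := [[0, 2, 2]])
      (rows := [(0, 0), (0, 1), (0, 2), (3, 0), (3, 1), (4, 0), (1, 0), (3, 2), (4, 1), (2, 0),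
        (1, 1), (1, 2), (5, 0), (2, 1), (2, 2)])
    (by decide +kernel))

set_option maxHeartbeats 0 in
theorem base_3_4_6 [CharZero K] {S : Finset σ} (hS : S.card = 3) : AH K S 4 6 0 := by
  refine AH.of_good3 (good3_of_certify (Finset.disjoint_empty_left ∅) (Finset.disjoint_empty_left S)
    (Finset.disjoint_empty_left S) (V := 3) Finset.card_empty Finset.card_empty hS rfl
    false false false true
      (pX := [])
      (pY := [])
      (pZ := [[1, 0, 0], [0, 1, 0], [0, 0, 1], [0, 2, 2], [1, 3, 2], [1, 3, 3]])
      (dr := [])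
      (rows := [(0, 0), (0, 1), (0, 2), (4, 0), (4, 1), (5, 0), (1, 0), (3, 0), (4, 2), (2, 0),
        (1, 1), (1, 2), (3, 1), (2, 1), (2, 2)])
    (by decide +kernel))

set_option maxHeartbeats 0 in
theorem base_4_4_8 [CharZero K] {S : Finset σ} (hS : S.card = 4) : AH K S 4 8 3 := by
  refine AH.of_good3 (good3_of_certify (Finset.disjoint_empty_left ∅) (Finset.disjoint_empty_left S)
    (Finset.disjoint_empty_left S) (V := 4) Finset.card_empty Finset.card_empty hS rfl
    false false false true
      (pX := [])
      (pY := [])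
      (pZ := [[1, 0, 0, 0], [0, 1, 0, 0], [0, 0, 1, 0], [0, 0, 0, 1], [1, 3, 2, 1], [2, 3, 2,
        3], [1, 3, 0, 2], [2, 1, 2, 2]])
      (dr := [[0, 2, 0, 2], [0, 1, 1, 2], [0, 0, 2, 2]])
      (rows := [(0, 0), (0, 1), (0, 2), (0, 3), (4, 0), (4, 1), (4, 2), (6, 0), (5, 1), (5, 0),
        (1, 0), (4, 3), (5, 2), (6, 1), (6, 3), (5, 3), (2, 0), (6, 2), (7, 0), (3, 0), (1, 1),
        (1, 2), (1, 3), (7, 1), (7, 2), (8, 0), (2, 1), (7, 3), (8, 1), (3, 1), (2, 2), (2, 3),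
        (8, 2), (3, 2), (3, 3)])
    (by decide +kernel))

set_option maxHeartbeats 0 in
theorem base_4_4_9 [CharZero K] {S : Finset σ} (hS : S.card = 4) : AH K S 4 9 1 := by
  refine AH.of_good3 (good3_of_certify (Finset.disjoint_empty_left ∅) (Finset.disjoint_empty_left S)
    (Finset.disjoint_empty_left S) (V := 4) Finset.card_empty Finset.card_empty hS rfl
    false false false true
      (pX := [])
      (pY := [])
      (pZ := [[1, 0, 0, 0], [0, 1, 0, 0], [0, 0, 1, 0], [0, 0, 0, 1], [1, 1, 1, 3], [2, 1, 1,
        3], [1, 0, 2, 1], [3, 1, 0, 3], [0, 0, 2, 3]])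
      (dr := [[0, 2, 0, 2]])
      (rows := [(0, 0), (0, 1), (0, 2), (0, 3), (4, 0), (4, 1), (4, 2), (6, 0), (6, 1), (7, 0),
        (1, 0), (4, 3), (5, 2), (5, 1), (6, 2), (7, 1), (2, 0), (6, 3), (7, 2), (3, 0), (1, 1),
        (1, 2), (1, 3), (5, 0), (7, 3), (9, 0), (2, 1), (8, 0), (8, 1), (3, 1), (2, 2), (2, 3),
        (8, 2), (3, 2), (3, 3)])
    (by decide +kernel))

set_option maxHeartbeats 0 in
theorem base_4_4_10 [CharZero K] {S : Finset σ} (hS : S.card = 4) : AH K S 4 10 0 := by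
  refine AH.of_good3 (good3_of_certify (Finset.disjoint_empty_left ∅) (Finset.disjoint_empty_left S)
    (Finset.disjoint_empty_left S) (V := 4) Finset.card_empty Finset.card_empty hS rfl
    false false false true
      (pX := [])
      (pY := [])
      (pZ := [[1, 0, 0, 0], [0, 1, 0, 0], [0, 0, 1, 0], [0, 0, 0, 1], [1, 1, 3, 3], [0, 3, 3,
        1], [3, 1, 3, 1], [0, 1, 2, 3], [3, 2, 3, 2], [3, 3, 0, 1]])
      (dr := [])
      (rows := [(0, 0), (0, 1), (0, 2), (0, 3), (4, 0), (4, 1), (4, 2), (8, 0), (6, 1), (6, 0),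
        (1, 0), (4, 3), (5, 0), (6, 2), (7, 0), (6, 3), (2, 0), (8, 1), (8, 2), (3, 0), (1, 1),
        (1, 2), (1, 3), (5, 1), (5, 2), (7, 1), (2, 1), (5, 3), (7, 2), (3, 1), (2, 2), (2, 3),
        (9, 0), (3, 2), (3, 3)])
    (by decide +kernel))

set_option maxHeartbeats 0 in
theorem base_5_4_13 [CharZero K] {S : Finset σ} (hS : S.card = 5) : AH K S 4 13 5 := by
  refine AH.of_good3 (good3_of_certify (Finset.disjoint_empty_left ∅) (Finset.disjoint_empty_left S)
    (Finset.disjoint_empty_left S) (V := 5) Finset.card_empty Finset.card_empty hS rfl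
    false false false true
      (pX := [])
      (pY := [])
      (pZ := [[1, 0, 0, 0, 0], [0, 1, 0, 0, 0], [0, 0, 1, 0, 0], [0, 0, 0, 1, 0], [0, 0, 0, 0,
        1], [2, 3, 0, 0, 3], [2, 1, 3, 1, 3], [2, 2, 1, 3, 0], [2, 0, 2, 1, 1], [1, 0, 1, 2, 1],
        [3, 3, 1, 1, 2], [2, 1, 3, 3, 1], [2, 3, 1, 1, 3]])
      (dr := [[0, 0, 2, 1, 1], [0, 0, 2, 0, 2], [0, 0, 1, 2, 1], [0, 0, 1, 1, 2], [0, 0, 0, 2,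
        2]])
      (rows := [(0, 0), (0, 1), (0, 2), (0, 3), (0, 4), (5, 0), (5, 2), (5, 3), (5, 1), (6, 0),
        (6, 2), (6, 1), (7, 0), (7, 1), (9, 0), (1, 0), (6, 3), (7, 2), (5, 4), (6, 4), (7, 3),
        (8, 1), (7, 4), (9, 1), (9, 2), (2, 0), (8, 0), (8, 2), (8, 3), (9, 4), (10, 0), (3, 0),
        (8, 4), (9, 3), (4, 0), (1, 1), (1, 2), (1, 3), (1, 4), (10, 1), (10, 2), (10, 3), (10,
        4), (11, 0), (11, 1), (2, 1), (11, 2), (11, 3), (11, 4), (12, 1), (12, 0), (3, 1), (12,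
        2), (12, 3), (4, 1), (2, 2), (2, 3), (2, 4), (12, 4), (13, 0), (13, 1), (3, 2), (13, 2),
        (13, 3), (4, 2), (3, 3), (3, 4), (13, 4), (4, 3), (4, 4)])
    (by decide +kernel))

set_option maxHeartbeats 0 in
theorem base_5_4_14 [CharZero K] {S : Finset σ} (hS : S.card = 5) : AH K S 4 14 1 := by
  refine AH.of_good3 (good3_of_certify (Finset.disjoint_empty_left ∅) (Finset.disjoint_empty_left S)
    (Finset.disjoint_empty_left S) (V := 5) Finset.card_empty Finset.card_empty hS rfl
    false false false true
      (pX := [])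
      (pY := [])
      (pZ := [[1, 0, 0, 0, 0], [0, 1, 0, 0, 0], [0, 0, 1, 0, 0], [0, 0, 0, 1, 0], [0, 0, 0, 0,
        1], [1, 2, 3, 2, 1], [3, 1, 1, 0, 0], [2, 3, 0, 1, 2], [0, 3, 0, 1, 1], [2, 1, 0, 0, 2],
        [2, 1, 0, 2, 0], [1, 2, 1, 3, 2], [2, 3, 3, 1, 2], [1, 0, 2, 2, 3]])
      (dr := [[0, 0, 0, 2, 2]])
      (rows := [(0, 0), (0, 1), (0, 2), (0, 3), (0, 4), (5, 0), (5, 1), (5, 2), (5, 3), (6, 0),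
        (6, 1), (6, 3), (7, 0), (7, 1), (9, 0), (1, 0), (5, 4), (6, 2), (7, 2), (6, 4), (7, 3),
        (9, 1), (7, 4), (8, 0), (9, 2), (2, 0), (9, 3), (9, 4), (10, 0), (10, 2), (11, 0), (3,
        0), (10, 1), (10, 3), (4, 0), (1, 1), (1, 2), (1, 3), (1, 4), (10, 4), (8, 2), (11, 1),
        (8, 1), (8, 3), (11, 2), (2, 1), (11, 3), (11, 4), (12, 0), (12, 1), (12, 2), (3, 1),
        (8, 4), (12, 3), (4, 1), (2, 2), (2, 3), (2, 4), (13, 0), (13, 1), (13, 2), (3, 2), (13,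
        3), (13, 4), (4, 2), (3, 3), (3, 4), (14, 0), (4, 3), (4, 4)])
    (by decide +kernel))

set_option maxHeartbeats 0 in
theorem base_5_4_15 [CharZero K] {S : Finset σ} (hS : S.card = 5) : AH K S 4 15 0 := by
  refine AH.of_good3 (good3_of_certify (Finset.disjoint_empty_left ∅) (Finset.disjoint_empty_left S)
    (Finset.disjoint_empty_left S) (V := 5) Finset.card_empty Finset.card_empty hS rfl
    false false false true
      (pX := [])
      (pY := [])
      (pZ := [[1, 0, 0, 0, 0], [0, 1, 0, 0, 0], [0, 0, 1, 0, 0], [0, 0, 0, 1, 0], [0, 0, 0, 0,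
        1], [0, 3, 1, 3, 2], [0, 1, 2, 0, 2], [1, 0, 3, 0, 1], [3, 1, 2, 1, 3], [0, 2, 1, 1, 3],
        [2, 3, 2, 0, 0], [2, 0, 0, 1, 0], [0, 2, 1, 2, 0], [3, 3, 1, 2, 0], [2, 3, 3, 2, 3]])
      (dr := [])
      (rows := [(0, 0), (0, 1), (0, 2), (0, 3), (0, 4), (8, 0), (7, 1), (8, 1), (8, 2), (7, 0),
        (7, 3), (7, 2), (10, 0), (10, 1), (11, 0), (1, 0), (5, 0), (6, 0), (8, 3), (8, 4), (9,
        0), (10, 2), (10, 3), (10, 4), (11, 1), (2, 0), (11, 2), (7, 4), (11, 4), (12, 0), (13,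
        0), (3, 0), (13, 1), (13, 2), (4, 0), (1, 1), (1, 2), (1, 3), (1, 4), (5, 1), (5, 2),
        (5, 3), (6, 1), (6, 2), (9, 1), (2, 1), (5, 4), (6, 3), (6, 4), (9, 2), (9, 3), (3, 1),
        (9, 4), (12, 1), (4, 1), (2, 2), (2, 3), (2, 4), (12, 2), (12, 3), (13, 3), (3, 2), (12,
        4), (13, 4), (4, 2), (3, 3), (3, 4), (14, 0), (4, 3), (4, 4)])
    (by decide +kernel))

set_option maxHeartbeats 0 in
theorem base_6_4_21 [CharZero K] {S : Finset σ} (hS : S.card = 6) : AH K S 4 21 0 := by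
  refine AH.of_good3 (good3_of_certify (Finset.disjoint_empty_left ∅) (Finset.disjoint_empty_left S)
    (Finset.disjoint_empty_left S) (V := 6) Finset.card_empty Finset.card_empty hS rfl
    false false false true
      (pX := [])
      (pY := [])
      (pZ := [[1, 0, 0, 0, 0, 0], [0, 1, 0, 0, 0, 0], [0, 0, 1, 0, 0, 0], [0, 0, 0, 1, 0, 0],
        [0, 0, 0, 0, 1, 0], [0, 0, 0, 0, 0, 1], [2, 0, 0, 3, 2, 0], [2, 1, 3, 2, 1, 1], [3, 3,
        3, 1, 1, 0], [1, 3, 0, 0, 1, 0], [3, 1, 0, 1, 3, 1], [2, 1, 1, 1, 1, 0], [3, 0, 1, 0, 0,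
        3], [1, 2, 3, 3, 1, 0], [1, 0, 1, 3, 2, 1], [2, 1, 2, 2, 2, 1], [1, 1, 3, 0, 2, 3], [1,
        2, 1, 0, 1, 3], [1, 1, 3, 2, 3, 0], [0, 2, 0, 1, 0, 2], [3, 2, 0, 3, 0, 1]])
      (dr := [])
      (rows := [(0, 0), (0, 1), (0, 2), (0, 3), (0, 4), (0, 5), (7, 0), (7, 1), (6, 1), (7, 2),
        (7, 3), (8, 0), (6, 2), (8, 1), (8, 2), (6, 0), (6, 3), (6, 5), (10, 0), (9, 1), (9, 0),
        (1, 0), (7, 5), (7, 4), (8, 3), (9, 2), (8, 5), (8, 4), (10, 1), (9, 3), (9, 4), (10,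
        2), (9, 5), (10, 3), (10, 4), (11, 0), (2, 0), (10, 5), (11, 1), (11, 2), (11, 3), (11,
        4), (12, 0), (11, 5), (12, 1), (12, 2), (3, 0), (6, 4), (12, 3), (12, 4), (12, 5), (13,
        0), (4, 0), (13, 1), (13, 2), (5, 0), (1, 1), (1, 2), (1, 3), (1, 4), (1, 5), (13, 4),
        (13, 3), (13, 5), (14, 0), (14, 1), (14, 2), (14, 3), (14, 4), (14, 5), (15, 0), (2, 1),
        (15, 1), (15, 2), (15, 3), (15, 4), (16, 0), (15, 5), (16, 1), (16, 2), (16, 3), (3, 1),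
        (16, 4), (16, 5), (17, 0), (17, 1), (17, 2), (4, 1), (17, 3), (17, 4), (5, 1), (2, 2),
        (2, 3), (2, 4), (2, 5), (17, 5), (18, 0), (18, 1), (18, 2), (18, 3), (18, 4), (3, 2),
        (18, 5), (19, 1), (19, 0), (19, 2), (19, 3), (4, 2), (19, 4), (19, 5), (5, 2), (3, 3),
        (3, 4), (3, 5), (20, 0), (20, 1), (20, 2), (4, 3), (20, 3), (20, 4), (5, 3), (4, 4), (4,
        5), (20, 5), (5, 4), (5, 5)])
    (by decide +kernel))

end Certificates

/-! ### Cubics -/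

section Cubics
variable {K : Type} [Field K] {σ : Type} [Fintype σ] [DecidableEq σ]

variable (K σ) in
/-- Cubics in `3 + 3 + w` variables each of whose monomials involves both blocks of size three:
`w + 3` points on each of the two coordinate subspaces of codimension three and three free points
leave nothing. -/
def TwoBlocks (w : ℕ) : Prop := ∀ X Y W : Finset σ, Disjoint X Y → Disjoint X W → Disjoint Y W →
  X.card = 3 → Y.card = 3 → W.card = w →
    Good3 K (bexpo (X ∪ (Y ∪ W)) 3 true X true Y false W) (w + 3) X (w + 3) Y 3 ∅ 0

variable (K σ) in
/-- Cubics in `3 + c` variables each of whose monomials involves the block of size three: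
`s` points on the coordinate subspace of codimension three and `c + 3` free points leave a system of
dimension at most `m`. -/
def OneBlock (c s m : ℕ) : Prop := ∀ X W : Finset σ, Disjoint X W → X.card = 3 → W.card = c →
    Good3 K (bexpo (X ∪ (∅ ∪ W)) 3 true X false ∅ false W) s X 0 ∅ (c + 3) ∅ m

variable (K σ) in
/-- `AH` for cubics in any `V` of the variables. -/
def Cubics (V k m : ℕ) : Prop := ∀ S : Finset σ, S.card = V → AH K S 3 k m

theorem Good.reindex {ι κ : Type} {E E' : Set (σ →₀ ℕ)} {M : ι → Finset σ} {M' : κ → Finset σ}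
    {m : ℕ} (h : Good K E M m) (hE : E' ⊆ E) (e : ι → κ) (he : Function.Injective e)
    (hM : ∀ j, M' (e j) ⊆ M j) : Good K E' M' m :=
  h.mono hE ⟨e, he⟩ hM le_rfl

/-- A cubic monomial involves at most three variables. -/
theorem apply_eq_zero_of_degree_three {α : σ →₀ ℕ} (h : α.degree = 3) {i j k l : σ} (hij : i ≠ j)
    (hik : i ≠ k) (hjk : j ≠ k) (hi : α i ≠ 0) (hj : α j ≠ 0) (hk : α k ≠ 0) (hli : l ≠ i)
    (hlj : l ≠ j) (hlk : l ≠ k) : α l = 0 := by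
  have := Finset.sum_le_sum_of_subset (f := α) (Finset.subset_univ {l, i, j, k})
  rw [Finset.sum_insert (by simp [hli, hlj, hlk]), Finset.sum_insert (by simp [hij, hik]),
    Finset.sum_insert (by simp [hjk]), Finset.sum_singleton, ← Finsupp.degree_eq_sum, h] at this
  omega

/-- A third block `Z` of size three is split off `W`: the trace on its subspace is the system for
`w`, and the residual monomials involve all three blocks, hence no other variable, as in `base_C`. -/
theorem TwoBlocks.step [CharZero K] {w : ℕ} (h : TwoBlocks K σ w) : TwoBlocks K σ (w + 3) := by
  intro X Y W hXY hXW hYW hX hY hW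
  obtain ⟨Z, hZW, hZ⟩ := Finset.exists_subset_card_eq (s := W) (n := 3) (by omega)
  have hXZ := Finset.disjoint_of_subset_right hZW hXW
  have hYZ := Finset.disjoint_of_subset_right hZW hYW
  have t := h X Y (W \ Z) hXY (Finset.disjoint_of_subset_right Finset.sdiff_subset hXW)
    (Finset.disjoint_of_subset_right Finset.sdiff_subset hYW) hX hY
    (by rw [Finset.card_sdiff_of_subset hZW]; omega)
  have r := base_C (K := K) hXY hXZ hYZ hX hY hZ
  have key := Good.block (K := K) (E := bexpo (X ∪ (Y ∪ W)) 3 true X true Y false W)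
    (bexpo_finite _ _ _ _ _ _ _ _) Z
    (M₀ := Sum.elim (fun _ : Fin (w + 3) => X) (fun _ : Fin (w + 3) => Y))
    (M₁ := fun _ : Fin 3 => ∅) (M₂ := Sum.elim (fun _ : Fin 3 => X) (fun _ : Fin 3 => Y))
    (a := 0) (b := 0)
    (Good.reindex t (fun α hα => by
      obtain ⟨⟨⟨hs, hd⟩, hx, hy, -⟩, hz⟩ := hα
      refine ⟨⟨fun i hi => ?_, hd⟩, hx, hy, by simp⟩
      have := hs i hi
      have : i ∉ Z := fun h => hi (hz i h)
      simp only [Finset.mem_union, Finset.mem_sdiff] at *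
      tauto)
      (fun j => match j with
        | .inl i => .inl (.inl i)
        | .inr (.inl i) => .inl (.inr i)
        | .inr (.inr i) => .inr i) (by
          rintro (i | i | i) (j | j | j) h <;> simp_all)
      (by rintro (i | i | i) <;> simp))
    (Good.reindex r (fun α hα => by
      obtain ⟨⟨⟨hs, hd⟩, hx, hy, -⟩, hz⟩ := hα
      refine ⟨⟨fun i hi => ?_, hd⟩, hx, hy, fun _ => hz⟩
      obtain ⟨x, hx, hx'⟩ := hx rfl
      obtain ⟨y, hy, hy'⟩ := hy rfl
      obtain ⟨z, hz, hz'⟩ := hz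
      by_contra hn
      simp only [Finset.mem_union, not_or] at hn
      exact hi (apply_eq_zero_of_degree_three hd (Finset.disjoint_iff_ne.1 hXY x hx y hy)
        (Finset.disjoint_iff_ne.1 hXZ x hx z hz) (Finset.disjoint_iff_ne.1 hYZ y hy z hz) hx' hy' hz'
        (fun h => hn.1 (h ▸ hx)) (fun h => hn.2.1 (h ▸ hy)) (fun h => hn.2.2 (h ▸ hz))))
      (fun j => match j with
        | .inl i => .inr (.inl i)
        | .inr (.inl i) => .inr (.inr i)
        | .inr (.inr i) => .inl i) (by
          rintro (i | i | i) (j | j | j) h <;> simp_all)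
      (by rintro (i | i | i) <;> simp))
  refine Good.reindex key subset_rfl (fun j => match j with
      | .inl (.inl i) => .inl (Fin.castAdd 3 i)
      | .inl (.inr i) => .inr (.inl (Fin.castAdd 3 i))
      | .inr (.inl i) => .inr (.inr i)
      | .inr (.inr (.inl i)) => .inl (Fin.natAdd (w + 3) i)
      | .inr (.inr (.inr i)) => .inr (.inl (Fin.natAdd (w + 3) i))) ?_ ?_
  · rintro ((i | i) | (i | (i | i))) ((j | j) | (j | (j | j))) h <;>
      simp [Fin.ext_iff] at h ⊢ <;> omega
  · rintro ((i | i) | (i | (i | i))) <;> simp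

/-- A second block of size three is split off `W`; the residual system is of the type `TwoBlocks`. -/
theorem OneBlock.step [CharZero K] {c s m : ℕ} (h : OneBlock K σ c s m) (hB : TwoBlocks K σ c) :
    OneBlock K σ (c + 3) (s + (c + 3)) m := by
  intro X W hXW hX hW
  obtain ⟨Z, hZW, hZ⟩ := Finset.exists_subset_card_eq (s := W) (n := 3) (by omega)
  have hXZ := Finset.disjoint_of_subset_right hZW hXW
  have t := h X (W \ Z) (Finset.disjoint_of_subset_right Finset.sdiff_subset hXW) hX
    (by rw [Finset.card_sdiff_of_subset hZW]; omega)
  have r := hB X Z (W \ Z) hXZ (Finset.disjoint_of_subset_right Finset.sdiff_subset hXW)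
    Finset.disjoint_sdiff hX hZ (by rw [Finset.card_sdiff_of_subset hZW]; omega)
  have key := Good.block (K := K) (E := bexpo (X ∪ (∅ ∪ W)) 3 true X false ∅ false W)
    (bexpo_finite _ _ _ _ _ _ _ _) Z
    (M₀ := fun _ : Fin s => X)
    (M₁ := fun _ : Fin (c + 3) => ∅) (M₂ := Sum.elim (fun _ : Fin (c + 3) => X) (fun _ : Fin 3 => ∅))
    (a := m) (b := 0)
    (Good.reindex t (fun α hα => by
      obtain ⟨⟨⟨hs, hd⟩, hx, -, -⟩, hz⟩ := hα
      refine ⟨⟨fun i hi => ?_, hd⟩, hx, by simp, by simp⟩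
      have := hs i hi
      have : i ∉ Z := fun h => hi (hz i h)
      simp only [Finset.mem_union, Finset.mem_sdiff] at *
      tauto)
      (fun j => match j with
        | .inl i => .inl i
        | .inr (.inl i) => i.elim0
        | .inr (.inr i) => .inr i) (by
          rintro (i | i | i) (j | j | j) h <;> first | exact i.elim0 | exact j.elim0 | simp_all)
      (by rintro (i | i | i) <;> first | exact i.elim0 | simp))
    (Good.reindex r (fun α hα => by
      obtain ⟨⟨⟨hs, hd⟩, hx, -, -⟩, hz⟩ := hα
      refine ⟨⟨fun i hi => ?_, hd⟩, hx, fun _ => hz, by simp⟩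
      have := hs i hi
      simp only [Finset.mem_union, Finset.mem_sdiff] at *
      tauto)
      (fun j => match j with
        | .inl i => .inr (.inl i)
        | .inr (.inl i) => .inl i
        | .inr (.inr i) => .inr (.inr i)) (by
          rintro (i | i | i) (j | j | j) h <;> simp_all)
      (by rintro (i | i | i) <;> simp))
  refine Good.reindex key subset_rfl (fun j => match j with
      | .inl i => .inl (Fin.castAdd (c + 3) i)
      | .inr (.inl i) => .inr (.inr (Fin.castAdd 3 i))
      | .inr (.inr (.inl i)) => .inl (Fin.natAdd s i)
      | .inr (.inr (.inr i)) => .inr (.inr (Fin.natAdd (c + 3) i))) ?_ ?_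
  · rintro (i | (i | (i | i))) (j | (j | (j | j))) h <;>
      simp [Fin.ext_iff] at h ⊢ <;> omega
  · rintro (i | (i | (i | i))) <;> simp

/-- A block of size three is split off; the residual system is of the type `OneBlock`. -/
theorem Cubics.step [CharZero K] {V s m m' : ℕ} (h : Cubics K σ V s m) (hA : OneBlock K σ V s m') :
    Cubics K σ (V + 3) (s + (V + 3)) (m + m') := by
  intro S hS
  obtain ⟨X, hXS, hX⟩ := Finset.exists_subset_card_eq (s := S) (n := 3) (by omega)
  have hc : (S \ X).card = V := by rw [Finset.card_sdiff_of_subset hXS]; omega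
  have t := h (S \ X) hc
  have r := hA X (S \ X) Finset.disjoint_sdiff hX hc
  have key := Good.block (K := K) (E := expo S 3) (expo_finite _ _) X
    (M₀ := fun i : Empty => ∅) (M₁ := fun _ : Fin s => ∅) (M₂ := fun _ : Fin (V + 3) => ∅)
    (a := m) (b := m')
    (Good.reindex t (fun α hα => by
      obtain ⟨⟨hs, hd⟩, hz⟩ := hα
      refine ⟨fun i hi => ?_, hd⟩
      have := hs i hi
      have : i ∉ X := fun h => hi (hz i h)
      simp only [Finset.mem_sdiff] at *
      tauto) Sum.inr Sum.inr_injective (by simp))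
    (Good.reindex r (fun α hα => by
      obtain ⟨⟨hs, hd⟩, hz⟩ := hα
      refine ⟨⟨fun i hi => ?_, hd⟩, fun _ => hz, by simp, by simp⟩
      have := hs i hi
      simp only [Finset.mem_union, Finset.mem_sdiff] at *
      tauto)
      (fun j => match j with
        | .inl i => .inl i
        | .inr (.inl i) => i.elim0
        | .inr (.inr i) => .inr i) (by
          rintro (i | i | i) (j | j | j) h <;> first | exact i.elim0 | exact j.elim0 | simp_all)
      (by rintro (i | i | i) <;> first | exact i.elim0 | simp))
  refine Good.reindex key subset_rfl (fun j => match j with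
      | .inl i => i.elim
      | .inr (.inl i) => Fin.castAdd (V + 3) i
      | .inr (.inr i) => Fin.natAdd s i) ?_ (fun _ => Finset.empty_subset _)
  rintro (i | i | i) (j | j | j) h <;> first | exact i.elim | exact j.elim | skip
  all_goals simp [Fin.ext_iff] at h ⊢
  all_goals omega

variable (K σ) in
theorem twoBlocks [CharZero K] : ∀ w, TwoBlocks K σ w
  | 0 => fun _ _ _ hXY hXW hYW => base_B0 hXY hXW hYW
  | 1 => fun _ _ _ hXY hXW hYW => base_B1 hXY hXW hYW
  | 2 => fun _ _ _ hXY hXW hYW => base_B2 hXY hXW hYW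
  | w + 3 => (twoBlocks w).step

/-- Iterating the step from `V` to `V + 3` variables. -/
theorem cubics_chain [CharZero K] {V s m m' : ℕ} (hT : Cubics K σ V s m) (hA : OneBlock K σ V s m')
    (a : ℕ) : ∃ t, 2 * t + 3 * a = 2 * s + 2 * a * (V + 3) + 3 * a ^ 2 ∧
      Cubics K σ (V + 3 * a) t (m + a * m') ∧ OneBlock K σ (V + 3 * a) t m' := by
  induction a with
  | zero => exact ⟨s, by ring, by simpa using hT, hA⟩
  | succ a ih =>
    obtain ⟨t, ht, h1, h2⟩ := ih
    have h3 := h1.step h2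
    rw [show m + a * m' + m' = m + (a + 1) * m' by ring] at h3
    exact ⟨t + (V + 3 * a + 3), by linarith, h3, h2.step (twoBlocks K σ _)⟩

/-- From the two critical numbers of points to all numbers of points. -/
theorem AH.complete {S : Finset σ} {V d N k₀ m₀ : ℕ} (hV : S.card = V) (h0 : AH K S d k₀ m₀)
    (hm : m₀ + V * k₀ = N) (h1 : AH K S d (k₀ + 1) 0) (k : ℕ) : AH K S d k (N - V * k) := by
  rcases Nat.lt_or_ge k₀ k with hk | hk
  · exact h1.mono hk (Nat.zero_le _)
  · obtain ⟨j, rfl⟩ := Nat.exists_eq_add_of_le hk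
    refine (h0.drops j).mono le_rfl (Nat.le_sub_of_add_le ?_)
    rw [← hm, hV]
    exact le_of_eq (by ring)

/-- If `k₀` points impose exactly as many conditions as there are coefficients, all numbers of points
behave as expected. -/
theorem AH.complete_perfect {S : Finset σ} {V d N k₀ : ℕ} (hV : S.card = V) (h0 : AH K S d k₀ 0)
    (hm : V * k₀ = N) (k : ℕ) : AH K S d k (N - V * k) :=
  AH.complete hV h0 (by omega) (h0.mono (Nat.le_succ _) le_rfl) k

theorem multichoose_two (V : ℕ) : 2 * V.multichoose 2 = V * (V + 1) := by
  induction V with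
  | zero => simp
  | succ V ih =>
    rw [Nat.multichoose_succ_succ, Nat.multichoose_one_right]
    linarith

theorem multichoose_three (V : ℕ) : 6 * V.multichoose 3 = V * (V + 1) * (V + 2) := by
  induction V with
  | zero => simp
  | succ V ih =>
    have := multichoose_two (V + 1)
    rw [Nat.multichoose_succ_succ]
    linarith

variable (K) in
theorem AH.empty (d : ℕ) : AH K (∅ : Finset σ) (d + 1) 0 0 := by
  rw [AH.iff]
  refine ⟨fun _ _ => 0, 0, fun g hg _ => ?_⟩
  rw [mem_sing, mem_rs] at hg
  ext α
  by_contra hα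
  obtain ⟨h1, h2⟩ := hg.1 α hα
  have : α = 0 := by
    ext i
    by_contra hi
    exact absurd (h1 i hi) (Finset.notMem_empty i)
  rw [this] at h2
  simp at h2

/-- Cubics in any number of variables except five behave as expected. -/
theorem cubics [CharZero K] {S : Finset σ} {V : ℕ} (hV : S.card = V) (h1 : 1 ≤ V) (h5 : V ≠ 5) (k : ℕ) :
    AH K S 3 k (V.multichoose 3 - V * k) := by
  have hN := multichoose_three V
  obtain ⟨a, rfl | rfl | rfl⟩ : ∃ a, V = 3 * (a + 1) ∨ V = 1 + 3 * a ∨ V = 2 + 3 * a :=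
    ⟨if V % 3 = 0 then V / 3 - 1 else V / 3, by split_ifs <;> omega⟩
  · obtain ⟨t, ht, hT, -⟩ := cubics_chain (K := K) (σ := σ) (V := 0) (s := 0) (m := 0) (m' := 1)
      (fun S hS => by rw [Finset.card_eq_zero.1 hS]; exact AH.empty K 2)
      (fun X W hXW hX hW => base_A3 hXW hX hW) (a + 1)
    obtain ⟨t', ht', hT', -⟩ := cubics_chain (K := K) (σ := σ) (V := 3) (s := 4) (m := 0) (m' := 0)
      (fun S hS => base_3_3_4 hS) (fun X W hXW hX hW => base_A6 hXW hX hW) a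
    have e : t' = t + 1 := by nlinarith
    subst e
    refine AH.complete hV (hT S (by omega)) ?_ (by simpa using hT' S (by omega)) k
    zify at *
    nlinarith
  · obtain ⟨t, ht, hT, -⟩ := cubics_chain (K := K) (σ := σ) (V := 1) (s := 1) (m := 0) (m' := 0)
      (fun S hS => base_1_3_1 hS) (fun X W hXW hX hW => base_A4 hXW hX hW) a
    refine AH.complete_perfect hV (by simpa using hT S (by omega)) ?_ k
    zify at *
    have : (6 : ℤ) * ((1 + 3 * a) * t) = 6 * ((1 + 3 * a).multichoose 3 : ℕ) := by
      rw [hN]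
      linear_combination 3 * (1 + 3 * (a : ℤ)) * ht
    linarith
  · obtain rfl | ⟨b, rfl⟩ : a = 0 ∨ ∃ b, a = b + 2 := by
      rcases a with _ | _ | b
      · exact Or.inl rfl
      · omega
      · exact Or.inr ⟨b, rfl⟩
    · exact AH.complete_perfect hV (base_2_3_2 (K := K) hV) (by simp [Nat.multichoose_eq]) k
    · obtain ⟨t, ht, hT, -⟩ := cubics_chain (K := K) (σ := σ) (V := 8) (s := 15) (m := 0) (m' := 0)
        (fun S hS => base_8_3_15 hS)
        (OneBlock.step (K := K) (c := 5) (s := 7) (fun X W hXW hX hW => base_A8 hXW hX hW)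
          (twoBlocks K σ 5)) b
      refine AH.complete_perfect hV (by simpa using hT S (by omega)) ?_ k
      zify at *
      have : (6 : ℤ) * ((2 + 3 * (b + 2)) * t) = 6 * ((2 + 3 * (b + 2)).multichoose 3 : ℕ) := by
        rw [hN]
        linear_combination 3 * (2 + 3 * ((b : ℤ) + 2)) * ht
      linarith

/-- Cubics in five variables: seven points are exceptional. -/
theorem cubics_five [CharZero K] {S : Finset σ} (hV : S.card = 5) {k : ℕ} (h7 : k ≠ 7) :
    AH K S 3 k (35 - 5 * k) := by
  rcases Nat.lt_or_ge k 7 with hk | hk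
  · obtain ⟨j, hj⟩ := Nat.exists_eq_add_of_le (Nat.le_of_lt_succ hk)
    have := base_5_3_6 (K := K) hV
    rw [hj] at this
    exact (this.drops j).mono le_rfl (by rw [hV]; omega)
  · exact (base_5_3_8 hV).mono (by omega) (Nat.zero_le _)

end Cubics

/-! ### Numerical inequalities -/

section Numbers

theorem multichoose_ratio (n d : ℕ) :
    (d + 1) * (n + 1).multichoose (d + 1) = (n + 1 + d) * (n + 1).multichoose d := by
  rw [Nat.multichoose_eq, Nat.multichoose_eq, show n + 1 + (d + 1) - 1 = n + d + 1 by omega,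
    show n + 1 + d - 1 = n + d by omega, mul_comm]
  have := Nat.add_one_mul_choose_eq (n + d) d
  rw [← this]
  ring

theorem multichoose_four (V : ℕ) : 24 * V.multichoose 4 = V * (V + 1) * (V + 2) * (V + 3) := by
  rcases V with _ | n
  · simp
  · have h1 := multichoose_ratio n 3
    have h2 := multichoose_three (n + 1)
    norm_num at h1
    nlinarith

theorem multichoose_le_succ (n d : ℕ) : (n + 1).multichoose d ≤ (n + 1).multichoose (d + 1) := by
  rw [Nat.multichoose_succ_succ]; omega

theorem multichoose_ge {n d : ℕ} (hn : 3 ≤ n) (hd : 4 ≤ d) : n * n + n ≤ n.multichoose d := by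
  induction d, hd using Nat.le_induction with
  | base =>
    have := multichoose_four n
    obtain ⟨m, rfl⟩ := Nat.exists_eq_add_of_le hn
    nlinarith
  | succ d hd ih =>
    obtain ⟨m, rfl⟩ := Nat.exists_eq_add_of_le' (show 1 ≤ n by omega)
    exact ih.trans (multichoose_le_succ m d)

/-- The identity comparing the dimensions of three consecutive degrees. -/
theorem multichoose_identity (n e : ℕ) :
    (e + 2) * ((n + 1) * (n + 1).multichoose (e + 1)) = (e + 2) * (n + 1).multichoose (e + 2) +
      (e + 2) * (n * (n + 1).multichoose e) + n * (n + 1).multichoose e * (n - 1) := by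
  rcases n with _ | n
  · have := multichoose_ratio 0 (e + 1)
    simp at this ⊢
  · have h1 := multichoose_ratio (n + 1) (e + 1)
    have h2 := multichoose_ratio (n + 1) e
    rw [Nat.add_sub_cancel]
    zify at *
    linear_combination - h1 + (n + 1) * h2

/-- The excess term in `multichoose_identity` dominates the rounding errors in the Horace step. -/
theorem step_inequality {n e : ℕ} (h : (3 ≤ n ∧ 3 ≤ e) ∨ (n = 2 ∧ 5 ≤ e)) :
    (e + 2) * ((n + 1) + (n + 1) * (n - 1) ^ 2) ≤ n * (n + 1).multichoose e * (n - 1) := by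
  have key : ∀ e, (e + 2) * ((n + 1) + (n + 1) * (n - 1) ^ 2) ≤ n * (n + 1).multichoose e * (n - 1) →
      1 ≤ n → (e + 3) * ((n + 1) + (n + 1) * (n - 1) ^ 2) ≤
        n * (n + 1).multichoose (e + 1) * (n - 1) := by
    intro e ih hn
    have hr := multichoose_ratio n e
    generalize (n + 1) + (n + 1) * (n - 1) ^ 2 = c at *
    generalize (n + 1).multichoose e = A at *
    generalize (n + 1).multichoose (e + 1) = B at *
    obtain ⟨m, rfl⟩ := Nat.exists_eq_add_of_le' hn
    rw [Nat.add_sub_cancel] at *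
    -- multiply by `(e + 1) (e + 2)`
    refine Nat.le_of_mul_le_mul_left (c := (e + 1) * (e + 2)) ?_ (by positivity)
    calc (e + 1) * (e + 2) * ((e + 3) * c) = (e + 1) * (e + 3) * ((e + 2) * c) := by ring
      _ ≤ (e + 1) * (e + 3) * ((m + 1) * A * m) := Nat.mul_le_mul_left _ ih
      _ ≤ (e + 2) * (m + 1 + 1 + e) * ((m + 1) * A * m) := Nat.mul_le_mul_right _ (by nlinarith)
      _ = (e + 2) * (m + 1) * m * ((m + 1 + 1 + e) * A) := by ring
      _ = _ := by rw [← hr]; ring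
  rcases h with ⟨hn, he⟩ | ⟨rfl, he⟩
  · induction e, he using Nat.le_induction with
    | base =>
      have := multichoose_three (n + 1)
      obtain ⟨m, rfl⟩ := Nat.exists_eq_add_of_le hn
      rw [show 3 + m - 1 = m + 2 by omega]
      refine Nat.le_of_mul_le_mul_left (c := 6) ?_ (by norm_num)
      calc 6 * ((3 + 2) * (3 + m + 1 + (3 + m + 1) * (m + 2) ^ 2)) = 
          (3 + m + 1) * (30 * (1 + (m + 2) ^ 2)) := by ring
        _ ≤ (3 + m + 1) * ((3 + m) * (m + 2) * ((3 + m + 1 + 1) * (3 + m + 1 + 2))) :=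
          Nat.mul_le_mul_left _ (by nlinarith [Nat.zero_le (m ^ 3), Nat.zero_le (m ^ 4)])
        _ = (3 + m) * (m + 2) * ((3 + m + 1) * (3 + m + 1 + 1) * (3 + m + 1 + 2)) := by ring
        _ = _ := by rw [← this]; ring
    | succ e he ih => exact key e ih (by omega)
  · induction e, he using Nat.le_induction with
    | base => simp [Nat.multichoose_eq]; decide
    | succ e he ih => exact key e ih (by omega)

/-- The choice of the parameters of the Horace step, for `k` one of the two numbers of points closest to
`N / (n + 1)`: `u` and `ε` are the quotient and the remainder of `(n + 1) k - M` on division by `n`, such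
that the conditions on the trace, and those on the first residual system, are as many as expected. The
hypothesis `H` makes `w` large enough for the second residual system to vanish. -/
theorem step_numbers {n k N M B T : ℕ} (hn : 1 ≤ n) (hN : N = T + M) (h1 : N < (n + 1) * k + (n + 1))
    (h2 : (n + 1) * k ≤ N + (n + 1)) (hT : n * n + n ≤ T)
    (H : N + n * B + (n + 1) + (n + 1) * (n - 1) ^ 2 ≤ (n + 1) * M) :
    ∃ u ε w, u + ε + w = k ∧ ε < n ∧ ε < u ∧ B ≤ (n + 1) * w ∧ n * u + ε + M = (n + 1) * k := by
  set c := (n + 1) * k - M with hc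
  have hc' : c + M = (n + 1) * k := by omega
  have hd := Nat.div_add_mod c n
  have hlt := Nat.mod_lt c hn
  set u := c / n
  set ε := c % n
  have hu : n ≤ u := (Nat.le_div_iff_mul_le hn).2 (by omega)
  have e1 : n * u + ε + M = (n + 1) * k := by omega
  obtain ⟨p, rfl⟩ := Nat.exists_eq_add_of_le' hn
  rw [Nat.add_sub_cancel] at H
  have hεp : ε ≤ p := by omega
  -- `n (n + 1) (k - u - ε)` is bounded below by the hypothesis `H`
  have key : (p + 1) * B + (p + 1) * ((p + 1 + 1) * (u + ε)) ≤ (p + 1) * ((p + 1 + 1) * k) := by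
    have : (p + 1 + 1) * p * ε ≤ (p + 1 + 1) * p * p := Nat.mul_le_mul_left _ hεp
    nlinarith
  have key2 : B + (p + 1 + 1) * (u + ε) ≤ (p + 1 + 1) * k :=
    Nat.le_of_mul_le_mul_left (by rw [mul_add]; exact key) (Nat.succ_pos p)
  have hk : u + ε ≤ k := Nat.le_of_mul_le_mul_left (le_trans (Nat.le_add_left _ _) key2)
    (Nat.succ_pos (p + 1))
  obtain ⟨w, hw⟩ := Nat.exists_eq_add_of_le hk
  exact ⟨u, ε, w, hw.symm, hlt, by omega, by rw [hw, mul_add _ (u + ε) w] at key2; omega, e1⟩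

end Numbers

/-! ### The induction step in degree at least four -/

section Higher
variable {K : Type} [Field K] {σ : Type} [Fintype σ] [DecidableEq σ]

/-- A form of degree `d` takes at a coordinate point the value of its coefficient of a pure power. -/
theorem eval_single {S : Finset σ} {d : ℕ} {G : MvPolynomial σ K}
    (hG : G ∈ restrictSupport K (expo S d)) (i : σ) :
    eval (Pi.single i 1) G = coeff (Finsupp.single i d) G := by
  rw [mem_rs] at hG
  rw [eval_eq, Finset.sum_eq_single (Finsupp.single i d)]
  · rw [Finset.prod_eq_one, mul_one]
    intro j hj
    by_cases h : j = i
    · subst h; simp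
    · rw [Finsupp.mem_support_iff, Finsupp.single_apply, if_neg (Ne.symm h)] at hj
      exact absurd rfl hj
  · intro β hβ hne
    obtain ⟨-, hd⟩ := hG β (by simpa using hβ)
    obtain ⟨j, hj, hji⟩ : ∃ j, β j ≠ 0 ∧ j ≠ i := by
      by_contra! hcon
      apply hne
      have : β = Finsupp.single i (β i) := by
        ext j
        by_cases h : j = i
        · subst h; simp
        · rw [Finsupp.single_apply, if_neg (Ne.symm h)]
          by_contra h'
          exact h (hcon j h')
      rw [this, Finsupp.degree_single] at hd
      rw [this, hd]
    rw [Finset.prod_eq_zero (i := j) (by simpa using hj) (by simp [hji, hj]), mul_zero]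
  · intro h
    rw [show coeff (Finsupp.single i d) G = 0 by simpa using h, zero_mul]

theorem coeff_eq_zero_of_single [CharZero K] {S : Finset σ} {d : ℕ} {G : MvPolynomial σ K}
    (hG : G ∈ restrictSupport K (expo S (d + 1))) {i j : σ}
    (h : eval (Pi.single i 1) (pderiv j G) = 0) :
    coeff (Finsupp.single i d + Finsupp.single j 1) G = 0 := by
  rw [eval_single (pderiv_mem hG j), coeff_pderiv] at h
  refine (mul_eq_zero.1 h).resolve_right ?_
  exact Nat.cast_add_one_ne_zero _

/-- Quadrics singular at independent points vanish. -/
theorem AH.quadrics [CharZero K] {S : Finset σ} {w : ℕ} (hw : S.card ≤ w) : AH K S 2 w 0 := by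
  refine AH.of_fintype (ι := S) (p := fun i => Pi.single i.1 1) (m := 0)
    (DimLE.zero_iff.2 ((Submodule.eq_bot_iff _).2 fun G hG => ?_)) (by simpa using hw) le_rfl
  rw [mem_sing] at hG
  obtain ⟨h1, h2⟩ := hG
  ext α
  by_contra hα
  obtain ⟨hs, hd⟩ := mem_rs.1 h1 α hα
  have h0 : α ≠ 0 := by rintro rfl; simp at hd
  obtain ⟨i, hi⟩ : ∃ i, α i ≠ 0 := by
    by_contra! h; exact h0 (Finsupp.ext h)
  obtain ⟨β, rfl⟩ : ∃ β, α = Finsupp.single i 1 + β :=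
    exists_add_of_le (by simpa [Nat.one_le_iff_ne_zero] using hi)
  rw [map_add, Finsupp.degree_single] at hd
  obtain ⟨j, hj⟩ : ∃ j, β j ≠ 0 := by
    by_contra! h
    rw [show β = 0 from Finsupp.ext h] at hd
    simp at hd
  obtain ⟨γ, rfl⟩ : ∃ γ, β = Finsupp.single j 1 + γ :=
    exists_add_of_le (by simpa [Nat.one_le_iff_ne_zero] using hj)
  rw [map_add, Finsupp.degree_single] at hd
  obtain rfl : γ = 0 := by
    rw [← Finsupp.degree_eq_zero_iff]
    omega
  apply hα
  rw [add_zero, coeff_eq_zero_of_single (d := 1) h1 (h2 ⟨i, hs i hi⟩ j), coeff_zero]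

/-- In one variable a single point suffices. -/
theorem AH.one_var [CharZero K] {S : Finset σ} (hS : S.card = 1) (d : ℕ) : AH K S (d + 1) 1 0 := by
  obtain ⟨i, rfl⟩ := Finset.card_eq_one.1 hS
  refine AH.of_fintype (ι := Fin 1) (p := fun _ => Pi.single i 1) (m := 0)
    (DimLE.zero_iff.2 ((Submodule.eq_bot_iff _).2 fun G hG => ?_)) (by simp) le_rfl
  rw [mem_sing] at hG
  obtain ⟨h1, h2⟩ := hG
  ext α
  by_contra hα
  obtain ⟨hs, hd⟩ := mem_rs.1 h1 α hα
  have : α = Finsupp.single i (α i) := by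
    ext j
    by_cases h : j = i
    · subst h; simp
    · rw [Finsupp.single_apply, if_neg (Ne.symm h)]
      by_contra h'
      exact h (by simpa using hs j h')
  rw [this, Finsupp.degree_single] at hd
  apply hα
  rw [this, hd, Finsupp.single_add, coeff_eq_zero_of_single h1 (h2 0 i), coeff_zero]

/-- The exceptional numbers of variables, degree and points. -/
def Exc (V d k : ℕ) : Prop :=
  (V = 3 ∧ d = 4 ∧ k = 5) ∨ (V = 4 ∧ d = 4 ∧ k = 9) ∨ (V = 5 ∧ d = 4 ∧ k = 14) ∨
    (V = 5 ∧ d = 3 ∧ k = 7)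

variable (K σ) in
/-- Forms of degree `d` in `V` variables singular at `k` suitable points have the expected dimension,
unless the numbers are exceptional. The expected dimension is the truncated difference, and only the
upper bound is stated, the lower bound being clear. -/
def Expected (V d : ℕ) : Prop :=
  ∀ k, ¬ Exc V d k → ∀ S : Finset σ, S.card = V → AH K S d k (V.multichoose d - V * k)

/-- In the exceptional cases the expected dimension is zero. -/
theorem Exc.le {V d k : ℕ} (h : Exc V d k) : V.multichoose d ≤ V * k := by
  rcases h with ⟨rfl, rfl, rfl⟩ | ⟨rfl, rfl, rfl⟩ | ⟨rfl, rfl, rfl⟩ | ⟨rfl, rfl, rfl⟩ <;>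
    simp [Nat.multichoose_eq] <;> decide

/-- The Horace step with expected dimensions for the trace and the first residual system and vanishing
second residual system. -/
theorem horace_step [CharZero K] {V e u ε w k m : ℕ} {S : Finset σ} (hS : S.card = V + 1)
    (hT : Expected K σ V (e + 2)) (h1 : Expected K σ (V + 1) (e + 1)) (h2 : AH K S e w 0)
    (hε : ε ≤ V) (hTe : ¬ Exc V (e + 2) u) (h1e : ¬ Exc (V + 1) (e + 1) (w + ε)) (hk : u + ε + w = k)
    (hm : (V.multichoose (e + 2) - V * u - ε) +
      ((V + 1).multichoose (e + 1) - (V + 1) * (w + ε) + ε - u) ≤ m) : AH K S (e + 2) k m := by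
  obtain ⟨h, hh⟩ : S.Nonempty := by rw [← Finset.card_pos]; omega
  exact AH.horace hh (by omega) (hT u hTe (S.erase h) (by rw [Finset.card_erase_of_mem hh]; omega))
    (h1 _ h1e S hS) h2 hk.le hm (by omega)

/-- The induction step in the range where the parameters can be chosen uniformly. The number `B` is
the number of conditions making the second residual system vanish. -/
theorem expected_generic [CharZero K] {n e B : ℕ} (hT : Expected K σ n (e + 2))
    (h1 : Expected K σ (n + 1) (e + 1)) (hn : 1 ≤ n)
    (h2 : ∀ w, B ≤ (n + 1) * w → ∀ S : Finset σ, S.card = n + 1 → AH K S e w 0)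
    (hTe : ∀ u, ¬ Exc n (e + 2) u) (hTn : n * n + n ≤ n.multichoose (e + 2))
    (H : (n + 1).multichoose (e + 2) + n * B + (n + 1) + (n + 1) * (n - 1) ^ 2 ≤
      (n + 1) * (n + 1).multichoose (e + 1)) : Expected K σ (n + 1) (e + 2) := by
  intro k hk S hS
  have hN : (n + 1).multichoose (e + 2) = n.multichoose (e + 2) + (n + 1).multichoose (e + 1) :=
    Nat.multichoose_succ_succ _ _
  have main : ∀ k, (n + 1).multichoose (e + 2) < (n + 1) * k + (n + 1) →
      (n + 1) * k ≤ (n + 1).multichoose (e + 2) + (n + 1) →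
      AH K S (e + 2) k ((n + 1).multichoose (e + 2) - (n + 1) * k) := by
    intro k hk1 hk2
    obtain ⟨u, ε, w, hw, hε, hεu, hB, hu⟩ := step_numbers hn hN hk1 hk2 hTn H
    have hwε : (n + 1) * (w + ε) + u = (n + 1).multichoose (e + 1) + ε := by
      rw [← hw] at hu
      nlinarith
    refine horace_step hS hT h1 (h2 w hB S hS) hε.le (hTe u) (fun h => ?_) hw ?_
    · have := h.le
      omega
    · omega
  have hdiv := Nat.div_add_mod ((n + 1).multichoose (e + 2)) (n + 1)
  have hlt : (n + 1).multichoose (e + 2) % (n + 1) < n + 1 := Nat.mod_lt _ (Nat.succ_pos n)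
  set q := (n + 1).multichoose (e + 2) / (n + 1)
  have hq := main q (by omega) (by omega)
  have hq' := main (q + 1) (by rw [mul_add]; omega) (by rw [mul_add]; omega)
  rw [show (n + 1).multichoose (e + 2) - (n + 1) * (q + 1) = 0 by rw [mul_add]; omega] at hq'
  exact AH.complete hS hq (by omega) hq' k

end Higher

/-! ### The Alexander–Hirschowitz theorem -/

section Induction
variable {K : Type} [Field K] {σ : Type} [Fintype σ] [DecidableEq σ]

/-- A variant of `AH.complete` in which nothing is claimed for numbers of points strictly between `k₀`
and `k₁`. -/
theorem AH.complete_gap {S : Finset σ} {V d N k₀ m₀ k₁ : ℕ} (hV : S.card = V) (h0 : AH K S d k₀ m₀)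
    (hm : m₀ + V * k₀ = N) (h1 : AH K S d k₁ 0) {k : ℕ} (hk : k ≤ k₀ ∨ k₁ ≤ k) :
    AH K S d k (N - V * k) := by
  rcases hk with hk | hk
  · obtain ⟨j, rfl⟩ := Nat.exists_eq_add_of_le hk
    refine (AH.drops j h0).mono le_rfl ?_
    rw [hV, ← hm, mul_add]
    omega
  · exact h1.mono hk (Nat.zero_le _)

theorem Exc.cases {V d k : ℕ} (h : Exc V d k) : 3 ≤ V ∧ V ≤ 5 ∧ 3 ≤ d ∧ d ≤ 4 := by
  unfold Exc at h
  omega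

theorem expected_three [CharZero K] {V : ℕ} (hV : 1 ≤ V) : Expected K σ V 3 := by
  intro k hk S hS
  by_cases h5 : V = 5
  · subst h5
    rw [show Nat.multichoose 5 3 = 35 by norm_num [Nat.multichoose_eq, Nat.choose]]
    refine cubics_five hS ?_
    unfold Exc at hk
    omega
  · exact cubics hS hV h5 k

theorem expected_one [CharZero K] (d : ℕ) : Expected K σ 1 (d + 1) := by
  intro k _ S hS
  exact AH.complete_perfect hS (AH.one_var hS d) (by simp) k

/-- Binary forms: at most one point is specialised to the hyperplane, which is a point of the projective
line. -/
theorem expected_two [CharZero K] {e : ℕ} (he : 2 ≤ e) (h1 : Expected K σ 2 (e + 1))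
    (h2 : e ≠ 2 → Expected K σ 2 e) : Expected K σ 2 (e + 2) := by
  intro k _ S hS
  have hno : ∀ {d u V : ℕ}, V ≤ 2 → ¬ Exc V d u := fun hV h => by have := h.cases; omega
  have hR : AH K S e ((e + 2) / 2) 0 := by
    by_cases h : e = 2
    · subst h; exact AH.quadrics (by omega)
    · refine (h2 h _ (hno le_rfl) S hS).mono le_rfl ?_
      rw [Nat.multichoose_two]
      omega
  rcases Nat.even_or_odd' e with ⟨a, rfl | rfl⟩
  · refine AH.complete (m₀ := 1) hS (horace_step (u := 0) (ε := 0) hS (expected_one _) h1 hR (by omega)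
      (hno (by omega)) (hno (by omega)) rfl ?_) ?_ (horace_step (u := 1) (ε := 0) hS (expected_one _) h1
      hR (by omega) (hno (by omega)) (hno (by omega)) (by omega) ?_) k
    all_goals simp only [Nat.multichoose_two, Nat.multichoose_one, Nat.reduceAdd]; omega
  · refine AH.complete_perfect hS (horace_step (u := 1) (ε := 0) hS (expected_one _) h1 hR (by omega)
      (hno (by omega)) (hno (by omega)) rfl ?_) ?_ k
    all_goals simp only [Nat.multichoose_two, Nat.multichoose_one, Nat.reduceAdd]; omega

/-- Quartics. The uniform choice of parameters works for more than ten variables, where the second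
residual system consists of quadrics; for at most five variables certificates are used, as is the case
of six variables, and the remaining cases choose the parameters by hand. -/
theorem expected_four [CharZero K] {V : ℕ} (hV : 1 ≤ V) : Expected K σ V 4 := by
  have step : ∀ {V u ε w k m : ℕ} {S : Finset σ}, S.card = V + 1 → Expected K σ V 4 → V + 1 ≤ w →
      ε ≤ V → 5 < V → u + ε + w = k → (V.multichoose 4 - V * u - ε) +
      ((V + 1).multichoose 3 - (V + 1) * (w + ε) + ε - u) ≤ m → AH K S 4 k m := by
    intro V u ε w k m S hS hT hw hε hV hk hm
    exact horace_step hS hT (expected_three (by omega)) (AH.quadrics (by omega)) hε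
      (fun h => by have := h.cases; omega) (fun h => by have := h.cases; omega) hk hm
  have e6 : Expected K σ 6 4 := fun k _ S hS =>
    AH.complete_perfect hS (base_6_4_21 hS) (by norm_num [Nat.multichoose_eq, Nat.choose]) k
  have e7 : Expected K σ 7 4 := fun k _ S hS =>
    AH.complete_perfect hS (step (u := 21) (ε := 0) (w := 9) hS e6 (by omega) (by omega) (by omega)
      rfl (by norm_num [Nat.multichoose_eq, Nat.choose])) (by norm_num [Nat.multichoose_eq, Nat.choose]) k
  have e8 : Expected K σ 8 4 := fun k _ S hS =>
    AH.complete (m₀ := 2) hS (step (u := 30) (ε := 0) (w := 11) hS e7 (by omega) (by omega) (by omega)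
      rfl (by norm_num [Nat.multichoose_eq, Nat.choose])) (by norm_num [Nat.multichoose_eq, Nat.choose]) (step (u := 30) (ε := 0) (w := 12) hS e7 (by omega) (by omega)
      (by omega) rfl (by norm_num [Nat.multichoose_eq, Nat.choose])) k
  have e9 : Expected K σ 9 4 := fun k _ S hS =>
    AH.complete_perfect hS (step (u := 41) (ε := 2) (w := 12) hS e8 (by omega) (by omega) (by omega)
      rfl (by norm_num [Nat.multichoose_eq, Nat.choose])) (by norm_num [Nat.multichoose_eq, Nat.choose]) k
  have e10 : Expected K σ 10 4 := fun k _ S hS =>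
    AH.complete (m₀ := 5) hS (step (u := 55) (ε := 0) (w := 16) hS e9 (by omega) (by omega) (by omega)
      rfl (by norm_num [Nat.multichoose_eq, Nat.choose])) (by norm_num [Nat.multichoose_eq, Nat.choose]) (step (u := 55) (ε := 0) (w := 17) hS e9 (by omega) (by omega)
      (by omega) rfl (by norm_num [Nat.multichoose_eq, Nat.choose])) k
  rcases Nat.lt_or_ge V 10 with h | h
  · obtain rfl | rfl | rfl | rfl | rfl | rfl | rfl | rfl | rfl : V = 1 ∨ V = 2 ∨ V = 3 ∨ V = 4 ∨ V = 5 ∨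
      V = 6 ∨ V = 7 ∨ V = 8 ∨ V = 9 := by omega
    · exact expected_one 3
    · exact expected_two le_rfl (expected_three (by omega)) (fun h => absurd rfl h)
    · intro k hk S hS
      exact AH.complete_gap hS (base_3_4_4 hS) (by norm_num [Nat.multichoose_eq, Nat.choose]) (base_3_4_6 hS) (by unfold Exc at hk; omega)
    · intro k hk S hS
      exact AH.complete_gap hS (base_4_4_8 hS) (by norm_num [Nat.multichoose_eq, Nat.choose]) (base_4_4_10 hS) (by unfold Exc at hk; omega)
    · intro k hk S hS
      exact AH.complete_gap hS (base_5_4_13 hS) (by norm_num [Nat.multichoose_eq, Nat.choose]) (base_5_4_15 hS) (by unfold Exc at hk; omega)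
    all_goals assumption
  · induction V, h using Nat.le_induction with
    | base => exact e10
    | succ n hn ih =>
      refine expected_generic (B := (n + 1) ^ 2) (ih (by omega)) (expected_three (by omega)) (by omega)
        (fun w hw S hS => AH.quadrics ?_) (fun u h => by have := h.cases; omega)
        (multichoose_ge (by omega) le_rfl) ?_
      · rw [hS]
        nlinarith
      · have h4 := multichoose_four (n + 1)
        have h3 := multichoose_three (n + 1)
        obtain ⟨m, rfl⟩ := Nat.exists_eq_add_of_le hn
        rw [show 10 + m - 1 = 9 + m by omega]
        ring_nf at h3 h4 ⊢
        nlinarith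

/-- The Alexander–Hirschowitz theorem: forms singular at suitable points have the expected dimension,
except in the four exceptional cases. -/
theorem expected_all [CharZero K] (d : ℕ) (hd : 3 ≤ d) : ∀ V, 1 ≤ V → Expected K σ V d := by
  induction d using Nat.strong_induction_on with
  | _ d IH =>
  intro V hV
  obtain rfl | rfl | ⟨e, he, rfl⟩ : d = 3 ∨ d = 4 ∨ ∃ e, 3 ≤ e ∧ d = e + 2 := by
    rcases Nat.lt_or_ge d 5 with h | h
    · omega
    · exact Or.inr (Or.inr ⟨d - 2, by omega, by omega⟩)
  · exact expected_three hV
  · exact expected_four hV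
  have h1 := IH (e + 1) (by omega) (by omega)
  have h2 := IH e (by omega) he
  have hno : ∀ V u, ¬ Exc V (e + 2) u := fun V u h => by have := h.cases; omega
  induction V, hV using Nat.le_induction with
  | base => exact expected_one (e + 1)
  | succ n hn ih =>
  have generic : ∀ B, (∀ w, B ≤ (n + 1) * w → ¬ Exc (n + 1) e w) → (n + 1).multichoose e ≤ B →
      n * n + n ≤ n.multichoose (e + 2) →
      (n + 1).multichoose (e + 2) + n * B + (n + 1) + (n + 1) * (n - 1) ^ 2 ≤
      (n + 1) * (n + 1).multichoose (e + 1) → Expected K σ (n + 1) (e + 2) := by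
    intro B hB hB' hTn H
    refine expected_generic (B := B) ih (h1 _ (by omega)) hn (fun w hw S hS => ?_) (hno n) hTn H
    exact (h2 _ (by omega) w (hB w hw) S hS).mono le_rfl (by omega)
  have uniform : ((3 ≤ n ∧ 3 ≤ e) ∨ (n = 2 ∧ 5 ≤ e)) → (∀ w, ¬ Exc (n + 1) e w) →
      Expected K σ (n + 1) (e + 2) := by
    intro h hB
    refine generic _ (fun w _ => hB w) le_rfl ?_ ?_
    · rcases h with h | ⟨rfl, h⟩
      · exact multichoose_ge h.1 (by omega)
      · rw [Nat.multichoose_two]; omega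
    · have := multichoose_identity n e
      have := step_inequality h
      refine Nat.le_of_mul_le_mul_left (c := e + 2) ?_ (by omega)
      linarith
  rcases Nat.lt_or_ge n 3 with hn3 | hn3
  · obtain rfl | rfl : n = 1 ∨ n = 2 := by omega
    · exact expected_two (by omega) (h1 2 (by omega)) (fun _ => h2 2 (by omega))
    · obtain rfl | rfl | h : e = 3 ∨ e = 4 ∨ 5 ≤ e := by omega
      · intro k _ S hS
        exact AH.complete_perfect hS (horace_step (u := 3) (ε := 0) (w := 4) hS ih (h1 3 (by omega))
          ((h2 3 (by omega) 4 (by unfold Exc; omega) S hS).mono le_rfl (by norm_num [Nat.multichoose_eq, Nat.choose])) (by omega)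
          (hno _ _) (by unfold Exc; omega) rfl (by norm_num [Nat.multichoose_eq, Nat.choose])) (by norm_num [Nat.multichoose_eq, Nat.choose]) k
      · intro k _ S hS
        have hR := (h2 3 (by omega) 6 (by unfold Exc; omega) S hS).mono le_rfl (m' := 0) (by norm_num [Nat.multichoose_eq, Nat.choose])
        exact AH.complete (m₀ := 1) hS (horace_step (u := 3) (ε := 0) (w := 6) hS ih (h1 3 (by omega))
          hR (by omega) (hno _ _) (by unfold Exc; omega) rfl (by norm_num [Nat.multichoose_eq, Nat.choose])) (by norm_num [Nat.multichoose_eq, Nat.choose])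
          (horace_step (u := 4) (ε := 0) (w := 6) hS ih (h1 3 (by omega))
          hR (by omega) (hno _ _) (by unfold Exc; omega) rfl (by norm_num [Nat.multichoose_eq, Nat.choose])) k
      · exact uniform (Or.inr ⟨rfl, h⟩) (fun w hw => by have := hw.cases; omega)
  · by_cases hex : ∀ w, ¬ Exc (n + 1) e w
    · exact uniform (Or.inl ⟨hn3, he⟩) hex
    · push Not at hex
      obtain ⟨w, hw⟩ := hex
      -- here `B` is enlarged so that the exceptional number of points is avoided
      obtain ⟨rfl, rfl⟩ | ⟨rfl, rfl⟩ | ⟨rfl, rfl⟩ : (n = 3 ∧ e = 4) ∨ (n = 4 ∧ e = 4) ∨ (n = 4 ∧ e = 3) := by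
        unfold Exc at hw; omega
      · exact generic 40 (fun w hw => by unfold Exc; omega) (by norm_num [Nat.multichoose_eq, Nat.choose]) (by norm_num [Nat.multichoose_eq, Nat.choose]) (by norm_num [Nat.multichoose_eq, Nat.choose])
      · exact generic 75 (fun w hw => by unfold Exc; omega) (by norm_num [Nat.multichoose_eq, Nat.choose]) (by norm_num [Nat.multichoose_eq, Nat.choose]) (by norm_num [Nat.multichoose_eq, Nat.choose])
      · exact generic 40 (fun w hw => by unfold Exc; omega) (by norm_num [Nat.multichoose_eq, Nat.choose]) (by norm_num [Nat.multichoose_eq, Nat.choose]) (by norm_num [Nat.multichoose_eq, Nat.choose])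

end Induction

/-! ### From double points to Waring rank -/

section Analytic

theorem waringRank_le {F : Type} [Field F] {n d : ℕ} {f : MvPolynomial (Fin n) F} {ι : Type}
    [Fintype ι] (c : ι → F) (l : ι → Fin n → F)
    (h : f = ∑ i, C (c i) * (∑ j, C (l i j) * X j) ^ d) : waringRank F d f ≤ Fintype.card ι := by
  refine sInf_le ⟨Fintype.card ι, rfl, c ∘ (Fintype.equivFin ι).symm, l ∘ (Fintype.equivFin ι).symm, ?_⟩
  rw [h]
  exact ((Fintype.equivFin ι).symm.sum_comp
    (fun i => C (c i) * (∑ j, C (l i j) * X j) ^ d : ι → MvPolynomial (Fin n) F)).symm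

theorem coeff_linear_pow {F : Type} [Field F] {n : ℕ} (d : ℕ) (l : Fin n → F) (α : Fin n →₀ ℕ)
    (hα : α.degree = d) : coeff α ((∑ j, C (l j) * X j) ^ d : MvPolynomial (Fin n) F) =
      (Nat.multinomial Finset.univ α : F) * ∏ j, l j ^ α j := by
  have key : ∀ k : Fin n → ℕ, ((Nat.multinomial Finset.univ k : MvPolynomial (Fin n) F) *
      ∏ j, (C (l j) * X j) ^ k j) = monomial (Finsupp.equivFunOnFinite.symm k)
        ((Nat.multinomial Finset.univ k : F) * ∏ j, l j ^ k j) := by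
    intro k
    rw [monomial_eq, Finsupp.prod_fintype _ _ (by simp)]
    simp only [mul_pow, Finset.prod_mul_distrib, map_mul, map_prod, map_pow, map_natCast, mul_assoc]
    rfl
  rw [Finset.sum_pow_eq_sum_piAntidiag, coeff_sum, Finset.sum_eq_single (α : Fin n → ℕ)]
  · rw [key, coeff_monomial, if_pos (by ext; rfl)]
  · intro k _ hk
    rw [key, coeff_monomial, if_neg]
    rintro rfl
    exact hk rfl
  · intro h
    exact absurd (by rw [Finset.mem_piAntidiag]; simpa [← Finsupp.degree_eq_sum] using hα) h

/-- A system of dimension at most `m ≤ 1` is reduced to zero by requiring the vanishing at `m` points. -/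
theorem exists_simple {K : Type} [Field K] [Infinite K] {σ : Type} {D : Submodule K (MvPolynomial σ K)}
    {m : ℕ} (h : DimLE D m) (hm : m ≤ 1) :
    ∃ q : Fin m → σ → K, ∀ G ∈ D, (∀ j, eval (q j) G = 0) → G = 0 := by
  obtain rfl | rfl : m = 0 ∨ m = 1 := by omega
  · rw [DimLE.zero_iff] at h
    exact ⟨fun _ _ => 0, fun G hG _ => by simpa [h] using hG⟩
  · by_cases hD : D = ⊥
    · exact ⟨fun _ _ => 0, fun G hG _ => by simpa [hD] using hG⟩
    obtain ⟨G₀, hG₀, hne⟩ := (Submodule.ne_bot_iff D).1 hD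
    obtain ⟨x, hx⟩ : ∃ x, eval x G₀ ≠ 0 := by
      by_contra! hcon
      exact hne (MvPolynomial.funext fun x => by simpa using hcon x)
    obtain ⟨μ, hμ⟩ := h
    refine ⟨fun _ => x, fun G hG hz => hμ G hG fun i => ?_⟩
    have hz := hz 0
    have h1 : μ i G • G₀ - μ i G₀ • G = 0 := by
      refine hμ _ (D.sub_mem (D.smul_mem _ hG₀) (D.smul_mem _ hG)) fun j => ?_
      rw [Subsingleton.elim j i]
      simp [mul_comm]
    have h2 := congrArg (eval x) h1
    simp only [map_sub, smul_eval, hz, mul_zero, sub_zero, map_zero] at h2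
    exact (mul_eq_zero.1 h2).resolve_right hx

variable {𝕜 : Type} [RCLike 𝕜] {n : ℕ}

/-- The values at `x` of all monomials of degree `d`: the Veronese map without multinomial
coefficients. -/
noncomputable def vero (d : ℕ) (x : Fin n → 𝕜) :
    (expo_finite (Finset.univ : Finset (Fin n)) d).toFinset → 𝕜 :=
  fun α => ∏ j, x j ^ α.1 j

/-- The difference map: sums of `k` powers minus sums of `k` powers, plus a combination of the powers
at `q`. -/
noncomputable def powerMap (d : ℕ) {k m : ℕ} (q : Fin m → Fin n → 𝕜)
    (x : (Fin k → Fin n → 𝕜) × (Fin k → Fin n → 𝕜) × (Fin m → 𝕜)) :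
    (expo_finite (Finset.univ : Finset (Fin n)) d).toFinset → 𝕜 :=
  ∑ i, vero d (x.1 i) - ∑ i, vero d (x.2.1 i) + ∑ j, x.2.2 j • vero d (q j)

theorem powerMap_contDiff (d : ℕ) {k m : ℕ} (q : Fin m → Fin n → 𝕜) :
    ContDiff 𝕜 1 (powerMap d (k := k) q) := by
  rw [contDiff_pi]
  intro α
  simp only [powerMap, vero, Pi.add_apply, Pi.sub_apply, Finset.sum_apply, Pi.smul_apply]
  fun_prop

/-- Apolarity: a functional on the target of `powerMap` is a form `G` with `φ (vero d x) = G(x)`. It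
annihilates the image of the derivative at `(p, p, 0)` exactly if `G` is singular at the points `p` and
vanishes at the points `q`. -/
theorem powerMap_surjective {d k m : ℕ} {p : Fin k → Fin n → 𝕜} {q : Fin m → Fin n → 𝕜}
    (hq : ∀ G ∈ sing (expo Finset.univ d) p, (∀ j, eval (q j) G = 0) → G = 0) :
    (fderiv 𝕜 (powerMap d q) (p, p, 0)).range = ⊤ := by
  by_contra hne
  obtain ⟨φ, hφ0, hφ⟩ := Submodule.exists_le_ker_of_lt_top _ (lt_top_iff_ne_top.2 hne)
  apply hφ0
  set G : MvPolynomial (Fin n) 𝕜 := ∑ α : (expo_finite (Finset.univ : Finset (Fin n)) d).toFinset,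
    monomial α.1 (φ (Pi.single α 1)) with hG
  have hev : ∀ x, φ (vero d x) = eval x G := by
    intro x
    rw [hG, map_sum, ← LinearMap.sum_single_apply (fun _ => 𝕜) (vero d x), map_sum]
    refine Finset.sum_congr rfl fun α _ => ?_
    have : Pi.single α (vero d x α) = vero d x α • (Pi.single α 1 :
        (expo_finite (Finset.univ : Finset (Fin n)) d).toFinset → 𝕜) := by
      rw [← Pi.single_smul, smul_eq_mul, mul_one]
    rw [this, map_smul, eval_monomial, Finsupp.prod_fintype _ _ (by simp), smul_eq_mul, mul_comm]
    rfl
  have hcoeff : ∀ α : (expo_finite (Finset.univ : Finset (Fin n)) d).toFinset,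
      coeff α.1 G = φ (Pi.single α 1) := by
    intro α
    rw [hG, coeff_sum, Finset.sum_eq_single α]
    · simp
    · intro β _ hβ
      rw [coeff_monomial, if_neg (fun h => hβ (Subtype.ext h))]
    · simp
  -- the directional derivatives of `φ ∘ powerMap` are the conditions on `G`
  have hder : ∀ (a : Fin k → Fin n → 𝕜) (c : Fin m → 𝕜),
      ∑ i, ∑ j, a i j * eval (p i) (pderiv j G) + ∑ j, c j * eval (q j) G = 0 := by
    intro a c
    have hF : HasFDerivAt (powerMap d q) (fderiv 𝕜 (powerMap d q) (p, p, 0)) (p, p, 0) :=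
      ((powerMap_contDiff d q).differentiable (by norm_num) _).hasFDerivAt
    have hL : HasDerivAt (fun t : 𝕜 => ((p, p, 0) : (Fin k → Fin n → 𝕜) × (Fin k → Fin n → 𝕜) ×
        (Fin m → 𝕜)) + t • (a, 0, c)) (a, 0, c) 0 := by
      simpa using ((hasDerivAt_id (0 : 𝕜)).smul_const (a, (0 : Fin k → Fin n → 𝕜), c)).const_add (p, p, 0)
    have h1 := (LinearMap.toContinuousLinearMap φ).hasFDerivAt.comp_hasDerivAt (0 : 𝕜)
      (HasFDerivAt.comp_hasDerivAt (0 : 𝕜) (by simpa using hF) hL)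
    have h2 : HasDerivAt (fun t : 𝕜 => ∑ i, (ln (p i) (a i) G).eval t - ∑ i, eval (p i) G +
        ∑ j, (t * c j) * eval (q j) G)
        (∑ i, ∑ j, a i j * eval (p i) (pderiv j G) + ∑ j, c j * eval (q j) G) 0 := by
      refine HasDerivAt.add (HasDerivAt.sub_const _ (HasDerivAt.fun_sum fun i _ => ?_))
        (HasDerivAt.fun_sum fun j _ => ?_)
      · have := (ln (p i) (a i) G).hasDerivAt 0
        rwa [← Polynomial.coeff_zero_eq_eval_zero, Polynomial.coeff_derivative, coeff_one_ln, Nat.cast_zero,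
          zero_add, mul_one] at this
      · simpa using ((hasDerivAt_id (0 : 𝕜)).mul_const (c j)).mul_const (eval (q j) G)
    have h3 := h1.unique (h2.congr_of_eventuallyEq (Filter.Eventually.of_forall fun t => ?_))
    · rw [← h3]
      exact hφ ⟨_, rfl⟩
    · simp only [Function.comp, powerMap, LinearMap.coe_toContinuousLinearMap', map_add, map_sub, map_sum,
        map_smul, hev, eval_ln]
      simp
  have hzero : G = 0 := by
    refine hq G (mem_sing.2 ⟨mem_rs.2 fun α hα => ?_, fun i j => ?_⟩) fun j => ?_
    · by_contra hα'
      refine hα ?_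
      rw [hG, coeff_sum]
      refine Finset.sum_eq_zero fun β _ => ?_
      rw [coeff_monomial, if_neg]
      rintro rfl
      exact hα' ((Set.Finite.mem_toFinset _).1 β.2)
    · have := hder (Pi.single i (Pi.single j 1)) 0
      rw [Finset.sum_eq_single i (by intro b _ hb; simp [hb]) (by simp),
        Finset.sum_eq_single j (by intro b _ hb; simp [hb]) (by simp)] at this
      simpa using this
    · have := hder 0 (Pi.single j 1)
      rw [Finset.sum_eq_single j (by intro b _ hb; simp [hb]) (by simp)] at this
      simpa using this
  refine LinearMap.pi_ext fun α x => ?_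
  have : Pi.single α x = x • (Pi.single α 1 :
      (expo_finite (Finset.univ : Finset (Fin n)) d).toFinset → 𝕜) := by
    rw [← Pi.single_smul, smul_eq_mul, mul_one]
  rw [this, map_smul, ← hcoeff, hzero]
  simp

/-- Every vector is, up to a nonzero factor, a value of `powerMap`: the image is a neighbourhood of
zero by the inverse function theorem. -/
theorem exists_powers {d k m : ℕ} {p : Fin k → Fin n → 𝕜} {q : Fin m → Fin n → 𝕜}
    (hq : ∀ G ∈ sing (expo Finset.univ d) p, (∀ j, eval (q j) G = 0) → G = 0)
    (v : (expo_finite (Finset.univ : Finset (Fin n)) d).toFinset → 𝕜) :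
    ∃ t : 𝕜, t ≠ 0 ∧ ∃ x, powerMap d (k := k) q x = t • v := by
  have hs := ((powerMap_contDiff d (k := k) q).contDiffAt (x := (p, p, 0))).hasStrictFDerivAt
    (by norm_num)
  have hmap := hs.map_nhds_eq_of_surj (powerMap_surjective hq)
  rw [show powerMap d q (p, p, 0) = 0 by simp [powerMap]] at hmap
  have hr : Set.range (powerMap d (k := k) q) ∈ nhds 0 := by
    rw [← hmap]; exact Filter.range_mem_map
  have hc : Filter.Tendsto (fun t : 𝕜 => t • v) (nhds 0) (nhds 0) := by
    have : Continuous fun t : 𝕜 => t • v := by fun_prop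
    simpa using this.tendsto 0
  have h1 : ∀ᶠ t : 𝕜 in nhdsWithin 0 {0}ᶜ, t • v ∈ Set.range (powerMap d (k := k) q) :=
    (hc.eventually hr).filter_mono nhdsWithin_le_nhds
  obtain ⟨t, ⟨x, hx⟩, ht⟩ := (h1.and self_mem_nhdsWithin).exists
  exact ⟨t, ht, x, hx⟩

/-- If `k` double points leave a system of dimension at most `m ≤ 1`, every form has Waring rank at most
`2k + m`. -/
theorem waringRank_le_of_AH {d k m : ℕ} (h : AH 𝕜 (Finset.univ : Finset (Fin n)) d k m) (hm : m ≤ 1)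
    {f : MvPolynomial (Fin n) 𝕜} (hf : f.IsHomogeneous d) :
    waringRank 𝕜 d f ≤ ((2 * k + m : ℕ) : ℕ∞) := by
  obtain ⟨p, hp⟩ := AH.iff.1 h
  obtain ⟨q, hq⟩ := exists_simple hp hm
  -- The division accounts for the multinomial coefficients of powers of linear forms.
  obtain ⟨t, ht, x, hx⟩ := exists_powers hq
    (fun α => coeff α.1 f / (Nat.multinomial Finset.univ α.1 : 𝕜))
  have := waringRank_le (f := f) (d := d) (ι := (Fin k ⊕ Fin k) ⊕ Fin m)
    (Sum.elim (Sum.elim (fun _ => t⁻¹) (fun _ => -t⁻¹)) (fun j => t⁻¹ * x.2.2 j))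
    (Sum.elim (Sum.elim x.1 x.2.1) q) ?_
  · refine this.trans_eq ?_
    simp [two_mul]
  ext α
  by_cases hα : α.degree = d
  · have hmem : α ∈ (expo_finite (Finset.univ : Finset (Fin n)) d).toFinset :=
      (Set.Finite.mem_toFinset _).2 ⟨fun i _ => Finset.mem_univ i, hα⟩
    have hxα := congrFun hx ⟨α, hmem⟩
    simp only [powerMap, vero, Pi.add_apply, Pi.sub_apply, Finset.sum_apply, Pi.smul_apply,
      smul_eq_mul] at hxα
    have hM : (Nat.multinomial Finset.univ α : 𝕜) ≠ 0 :=
      Nat.cast_ne_zero.2 (Nat.multinomial_pos _ _).ne'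
    simp only [coeff_sum, coeff_C_mul, coeff_linear_pow d _ α hα]
    simp only [Fintype.sum_sum_type, Sum.elim_inl, Sum.elim_inr, ← Finset.mul_sum]
    rw [eq_comm, mul_div_assoc'] at hxα
    rw [div_eq_iff hM] at hxα
    refine mul_left_cancel₀ ht ?_
    rw [hxα]
    have e : ∑ j, t⁻¹ * x.2.2 j * ((Nat.multinomial Finset.univ α : 𝕜) * ∏ i, q j i ^ α i) =
        t⁻¹ * ((Nat.multinomial Finset.univ α : 𝕜) * ∑ j, x.2.2 j * ∏ i, q j i ^ α i) := by
      rw [Finset.mul_sum, Finset.mul_sum]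
      exact Finset.sum_congr rfl fun j _ => by ring
    rw [e]
    field_simp
    ring
  · have hlin : ∀ l : Fin n → 𝕜, (∑ j, C (l j) * X j : MvPolynomial (Fin n) 𝕜).IsHomogeneous 1 :=
      fun l => IsHomogeneous.sum _ _ _ fun j _ => by
        simpa using (isHomogeneous_C (Fin n) (l j)).mul (isHomogeneous_X 𝕜 j)
    have hz : ∀ {g : MvPolynomial (Fin n) 𝕜}, g.IsHomogeneous d → coeff α g = 0 :=
      fun hg => hg.coeff_eq_zero hα
    rw [hz hf, coeff_sum, Finset.sum_eq_zero]
    intro i _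
    rw [coeff_C_mul, hz (by simpa using (hlin _).pow d), mul_zero]

/-- The bound over `ℝ` and `ℂ` alike. -/
theorem waringRank_bound {d : ℕ} (hn : 2 ≤ n) (hd : 3 ≤ d) {f : MvPolynomial (Fin n) 𝕜}
    (hf : f.IsHomogeneous d) : waringRank 𝕜 d f ≤ (waringBound n d : ℕ∞) := by
  have hS : (Finset.univ : Finset (Fin n)).card = n := by simp
  unfold waringBound
  split_ifs with h1 h2 h3 h4
  · obtain ⟨rfl, rfl⟩ := Prod.mk.inj h1
    exact waringRank_le_of_AH (base_3_4_5 hS) le_rfl hf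
  · obtain ⟨rfl, rfl⟩ := Prod.mk.inj h2
    exact waringRank_le_of_AH (base_4_4_9 hS) le_rfl hf
  · obtain ⟨rfl, rfl⟩ := Prod.mk.inj h3
    exact waringRank_le_of_AH (base_5_4_14 hS) le_rfl hf
  · obtain ⟨rfl, rfl⟩ := Prod.mk.inj h4
    exact waringRank_le_of_AH (base_5_3_7 hS) le_rfl hf
  · simp only [Prod.mk.injEq] at h1 h2 h3 h4
    set k := (Nat.choose (n + d - 1) (n - 1) + n - 1) / n with hk
    have hN : n.multichoose d = Nat.choose (n + d - 1) (n - 1) := by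
      rw [Nat.multichoose_eq]
      exact Nat.choose_symm_of_eq_add (by omega)
    have hle : n.multichoose d ≤ n * k := by
      have := Nat.div_add_mod (Nat.choose (n + d - 1) (n - 1) + n - 1) n
      have := Nat.mod_lt (Nat.choose (n + d - 1) (n - 1) + n - 1) (show 0 < n by omega)
      rw [← hk] at *
      omega
    refine waringRank_le_of_AH (m := 0) ((expected_all d hd n (by omega) k ?_ _ hS).mono le_rfl ?_)
      zero_le_one hf
    · unfold Exc
      omega
    · omega

end Analytic

/-- Corollary of the paper. The maximum real (and complex) Waring rank
of forms of degree `d ≥ 3` in `n ≥ 2` variables is at most `2⌈C(n+d-1, n-1)/n⌉`, except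
for the bounds `11, 19, 29, 15` in the cases `(n,d) = (3,4), (4,4), (5,4), (5,3)`. -/
theorem stmt_9 (n d : ℕ) (hn : 2 ≤ n) (hd : 3 ≤ d) :
    (∀ f : MvPolynomial (Fin n) ℝ, f ≠ 0 → f.IsHomogeneous d →
      waringRank ℝ d f ≤ (waringBound n d : ℕ∞)) ∧
    (∀ f : MvPolynomial (Fin n) ℂ, f ≠ 0 → f.IsHomogeneous d →
      waringRank ℂ d f ≤ (waringBound n d : ℕ∞)) := by
  exact ⟨fun f _ hf => waringRank_bound hn hd hf, fun f _ hf => waringRank_bound hn hd hf⟩
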